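/- Dimensions of the graded levels of the simplest rank-2 hyperbolic Kac–Moody algebra with respect to its standard sl₂ subalgebra: let g = g(A) with A = [[2,−3],[−3,2]], and let D be the level derivation of g with respect to node 1 (the unique derivation with D(e_1)=e_1, D(f_1)=−f_1, D(e_2)=D(f_2)=0, D(h_i)=0). Then the eigenspaces of D with eigenvalues l = 1,2,3,4,5,6,7,8 have dimensions 4, 6, 20, 49, 160, 494, 1636 and 5410 respectively. -/

import Mathlib

noncomputable section

open CartanMatrix

/-- A generalized Cartan matrix: `A i i = 2`, off-diagonal entries are non-positive, and
`A i j = 0 ↔ A j i = 0`. -/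
def IsGCM {B : Type*} (A : Matrix B B ℤ) : Prop :=
  (∀ i, A i i = 2) ∧ (∀ i j, i ≠ j → A i j ≤ 0) ∧ (∀ i j, A i j = 0 ↔ A j i = 0)

/-- The images in the Kac–Moody algebra `Matrix.ToLieAlgebra ℚ A` of the generators of the
free Lie algebra. -/
def KMgen {B : Type*} [DecidableEq B] (A : Matrix B B ℤ) (x : Generators B) :
    Matrix.ToLieAlgebra ℚ A :=
  LieSubmodule.Quotient.mk (N := Relations.toIdeal ℚ A) (FreeLieAlgebra.of ℚ x)

/-- The Cartan generator `h i`. -/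
def gH {B : Type*} [DecidableEq B] (A : Matrix B B ℤ) (i : B) : Matrix.ToLieAlgebra ℚ A :=
  KMgen A (Generators.H i)

/-- The raising generator `e i`. -/
def gE {B : Type*} [DecidableEq B] (A : Matrix B B ℤ) (i : B) : Matrix.ToLieAlgebra ℚ A :=
  KMgen A (Generators.E i)

/-- The lowering generator `f i`. -/
def gF {B : Type*} [DecidableEq B] (A : Matrix B B ℤ) (i : B) : Matrix.ToLieAlgebra ℚ A :=
  KMgen A (Generators.F i)

/-- The Cartan matrix of the simplest rank-2 hyperbolic Kac–Moody algebra. -/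
def A2hyp : Matrix (Fin 2) (Fin 2) ℤ := !![2, -3; -3, 2]

/-!
The level zero part of `g(A)` is a copy of `gl₂`, and the level one subspace is its
four-dimensional irreducible module spanned by `(ad e₂)ᵏ e₁`, `0 ≤ k ≤ 3`. The enveloping algebra
`U` of the part of positive level is the quotient of the free algebra `T` on that subspace by the
ideal generated by a copy `W` of the eleven-dimensional irreducible module in degree four: the
Serre element `(ad e₁)⁴ e₂` and its images under `ad e₂`. This gives a complex of graded modules
`0 → U ⊗ W → U ⊗ V → U → ℚ → 0`, where `V = T₁`, exact except possibly at `U ⊗ W`.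

The kernel at `U ⊗ W` is a module over `g(A)`, and a generalized Casimir operator acts on its
lowest level by a scalar determined by the weight. Comparing this scalar with the one on the
generators `W` restricts the possible `gl₂`-weights of a singular vector to the solutions of a
quadratic equation, and there are none of level at most eight. Hence the complex is exact in these
degrees, and the Hilbert series of `U` agrees with `1 / (1 - 4 t + 11 t ^ 4)` up to degree eight.
Only the part of the Casimir operator of level at most four matters for this, so the invariant form
of `g(A)` has to be nondegenerate only on those levels.

By the Poincaré–Birkhoff–Witt theorem, `∏ (1 - t ^ l) ^ d_l ≡ 1 - 4 t + 11 t ^ 4` modulo `t ^ 9`,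
where `d_l` is the dimension of level `l`. Taking logarithmic derivatives, this determines `d_l` for
`l ≤ 8`.
-/

namespace HyperbolicKM

open Module

attribute [local instance 100] LieRing.ofAssociativeRing

/-! ### Invariant forms on graded Lie algebras -/

section GradedForm

variable {K L : Type*} [Field K] [LieRing L] [LieAlgebra K L]

theorem lie_lie_eq_sub (x y z : L) : ⁅x, ⁅y, z⁆⁆ = ⁅⁅x, y⁆, z⁆ - ⁅⁅x, z⁆, y⁆ := by
  rw [← lie_skew ⁅x, z⁆ y, sub_neg_eq_add, leibniz_lie]

/-- The span of the brackets `⁅a, b⁆` with `a ∈ A` and `b ∈ B`. -/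
def bracketSpan (A B : Submodule K L) : Submodule K L :=
  Submodule.map₂ (LieAlgebra.ad K L : L →ₗ[K] End K L) A B

theorem lie_mem_bracketSpan {A B : Submodule K L} {a b : L} (ha : a ∈ A) (hb : b ∈ B) :
    ⁅a, b⁆ ∈ bracketSpan A B :=
  Submodule.apply_mem_map₂ _ ha hb

theorem bracketSpan_le {A B C : Submodule K L} :
    bracketSpan A B ≤ C ↔ ∀ a ∈ A, ∀ b ∈ B, ⁅a, b⁆ ∈ C :=
  Submodule.map₂_le

/-- A `ℤ`-grading of a Lie algebra, without its direct sum decomposition, whose positive and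
negative parts are generated by the pieces of degree `1` and `-1`. -/
structure IsGeneratedGrading (F : ℤ → Submodule K L) : Prop where
  lie_mem {i j : ℤ} {x y : L} : x ∈ F i → y ∈ F j → ⁅x, y⁆ ∈ F (i + j)
  succ_le (n : ℕ) : n ≠ 0 → F (n + 1) ≤ bracketSpan (F 1) (F n)
  neg_succ_le (n : ℕ) : n ≠ 0 → F (-(n + 1)) ≤ bracketSpan (F (-1)) (F (-n))

theorem IsGeneratedGrading.lie_mem_of_eq {F : ℤ → Submodule K L} (hF : IsGeneratedGrading F)
    {i j k : ℤ} {x y : L} (hx : x ∈ F i) (hy : y ∈ F j) (hk : i + j = k) : ⁅x, y⁆ ∈ F k :=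
  hk ▸ hF.lie_mem hx hy

theorem IsGeneratedGrading.le_bracketSpan {F : ℤ → Submodule K L} (hF : IsGeneratedGrading F)
    {k : ℤ} (hk : 2 ≤ k.natAbs) :
    ∃ s : ℤ, s.natAbs = 1 ∧ (k - s).natAbs + 1 = k.natAbs ∧
      F k ≤ bracketSpan (F s) (F (k - s)) := by
  rcases le_total 0 k with h0 | h0
  · obtain ⟨n, rfl⟩ : ∃ n : ℕ, k = n + 1 := ⟨(k - 1).toNat, by lia⟩
    exact ⟨1, rfl, by lia, by simpa using hF.succ_le n (by lia)⟩
  · obtain ⟨n, rfl⟩ : ∃ n : ℕ, k = -(n + 1) := ⟨(-k - 1).toNat, by lia⟩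
    exact ⟨-1, rfl, by lia, by simpa using hF.neg_succ_le n (by lia)⟩

/-- The invariant form on a graded Lie algebra, determined by its restriction `κ` to degree `0`
and by the functional `τ = κ(h, ·)`, where `h` is the coroot of the simple root that measures the
degree. The index is the degree of the first argument. -/
def gradedForm (τ : L →ₗ[K] K) (κ : L →ₗ[K] L →ₗ[K] K) (k : ℤ) : L →ₗ[K] L →ₗ[K] K :=
  if k = 0 then κ else (k : K)⁻¹ • (LieAlgebra.ad K L : L →ₗ[K] End K L).compr₂ τ

variable {τ : L →ₗ[K] K} {κ : L →ₗ[K] L →ₗ[K] K} {F : ℤ → Submodule K L}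

@[simp] theorem gradedForm_zero : gradedForm τ κ 0 = κ := if_pos rfl

theorem gradedForm_apply {k : ℤ} (hk : k ≠ 0) (p q : L) :
    gradedForm τ κ k p q = (k : K)⁻¹ * τ ⁅p, q⁆ := by
  simp [gradedForm, hk]

/-- The data in degrees `-1, 0, 1` from which an invariant form extends to the whole algebra. -/
structure IsLocalForm (F : ℤ → Submodule K L) (τ : L →ₗ[K] K) (κ : L →ₗ[K] L →ₗ[K] K) :
    Prop where
  map_lie {x y : L} : x ∈ F 0 → y ∈ F 0 → τ ⁅x, y⁆ = 0
  symm {x y : L} : x ∈ F 0 → y ∈ F 0 → κ x y = κ y x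
  lie_apply {x y z : L} : x ∈ F 0 → y ∈ F 0 → z ∈ F 0 → κ ⁅x, y⁆ z = κ x ⁅y, z⁆
  lie_apply_one {p q z : L} : p ∈ F 1 → q ∈ F (-1) → z ∈ F 0 → κ ⁅p, q⁆ z = τ ⁅p, ⁅q, z⁆⁆

theorem IsLocalForm.gradedForm_symm (h : IsLocalForm F τ κ) {i j : ℤ} (hij : i + j = 0)
    {p q : L} (hp : p ∈ F i) (hq : q ∈ F j) : gradedForm τ κ i p q = gradedForm τ κ j q p := by
  obtain rfl : j = -i := by lia
  rcases eq_or_ne i 0 with rfl | hi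
  · simpa using h.symm hp (by simpa using hq)
  · rw [gradedForm_apply hi, gradedForm_apply (neg_ne_zero.mpr hi), ← lie_skew p q, map_neg,
      Int.cast_neg, inv_neg, neg_mul, mul_neg]

theorem IsLocalForm.gradedForm_lie_lie_symm (h : IsLocalForm F τ κ) {i j : ℤ} (hij : i + j = 0)
    {a b c d : L} (hab : ⁅a, b⁆ ∈ F i) (hcd : ⁅c, d⁆ ∈ F j) :
    gradedForm τ κ i ⁅a, b⁆ ⁅c, d⁆ = gradedForm τ κ j ⁅d, c⁆ ⁅b, a⁆ := by
  rw [h.gradedForm_symm hij hab hcd, ← lie_skew c d, ← lie_skew a b]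
  simp only [map_neg, LinearMap.neg_apply, neg_neg]

/-- The invariance of the form on triples of homogeneous elements of degrees `i, j, k`, where
`i + j + k = 0`, in a shape that is symmetric under permutations of the triple. -/
def IsInvariantOn (F : ℤ → Submodule K L) (τ : L →ₗ[K] K) (κ : L →ₗ[K] L →ₗ[K] K)
    (i j k : ℤ) : Prop :=
  ∀ p ∈ F i, ∀ q ∈ F j, ∀ r ∈ F k,
    gradedForm τ κ (-k) ⁅p, q⁆ r = gradedForm τ κ (-i) ⁅q, r⁆ p ∧
    gradedForm τ κ (-i) ⁅q, r⁆ p = gradedForm τ κ (-j) ⁅r, p⁆ q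

theorem IsInvariantOn.rotate {i j k : ℤ} (h : IsInvariantOn F τ κ i j k) :
    IsInvariantOn F τ κ j k i := fun q hq r hr p hp ↦
  ⟨(h p hp q hq r hr).2, ((h p hp q hq r hr).1.trans (h p hp q hq r hr).2).symm⟩

theorem IsInvariantOn.swap {i j k : ℤ} (h : IsInvariantOn F τ κ i j k) :
    IsInvariantOn F τ κ j i k := by
  intro q hq p hp r hr
  obtain ⟨h₁, h₂⟩ := h p hp q hq r hr
  rw [← lie_skew q p, ← lie_skew p r, ← lie_skew r q]
  simp only [map_neg, LinearMap.neg_apply, h₁, h₂, and_self]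

theorem IsLocalForm.isInvariantOn_zero (h : IsLocalForm F τ κ) (hF : IsGeneratedGrading F) :
    IsInvariantOn F τ κ 0 0 0 := by
  have key : ∀ x ∈ F 0, ∀ y ∈ F 0, ∀ z ∈ F 0, κ ⁅x, y⁆ z = κ ⁅y, z⁆ x := fun x hx y hy z hz ↦
    (h.lie_apply hx hy hz).trans (h.symm hx (hF.lie_mem_of_eq hy hz (add_zero 0)))
  intro p hp q hq r hr
  simp only [neg_zero, gradedForm_zero]
  exact ⟨key p hp q hq r hr, key q hq r hr p hp⟩

/-- Both sides equal `B ⁅q, y⁆ ⁅g, p⁆ - B ⁅q, g⁆ ⁅y, p⁆` if `r = ⁅y, g⁆`, where `B` is the form. -/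
theorem gradedForm_lie_eq_of_top (hF : IsGeneratedGrading F) (h : IsLocalForm F τ κ) {N : ℕ}
    (ih : ∀ i j k : ℤ, i + j + k = 0 → i.natAbs ≤ N → j.natAbs ≤ N → k.natAbs ≤ N →
      IsInvariantOn F τ κ i j k)
    {i j k : ℤ} (hijk : i + j + k = 0) (hi : i.natAbs ≤ N) (hj : j.natAbs ≤ N)
    (hk : k.natAbs = N + 1) {p q r : L} (hp : p ∈ F i) (hq : q ∈ F j) (hr : r ∈ F k) :
    gradedForm τ κ (-i) ⁅q, r⁆ p = gradedForm τ κ (-j) ⁅r, p⁆ q := by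
  obtain ⟨s, hs, hks, hle⟩ := hF.le_bracketSpan (k := k) (by lia)
  suffices F k ≤ LinearMap.eqLocus ((gradedForm τ κ (-i)).flip p ∘ₗ LieAlgebra.ad K L q)
      (-(gradedForm τ κ (-j)).flip q ∘ₗ LieAlgebra.ad K L p) by
    rw [← lie_skew r p, map_neg, LinearMap.neg_apply]
    exact this hr
  refine hle.trans (bracketSpan_le.mpr fun y hy g hg ↦ ?_)
  have h₁ := (ih (j + s) (k - s) i (by lia) (by lia) (by lia) hi _ (hF.lie_mem hq hy) g hg p hp).1
  have h₂ := (ih (j + (k - s)) s i (by lia) (by lia) (by lia) hi _ (hF.lie_mem hq hg) y hy p hp).1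
  have h₃ := (ih (i + (k - s)) s j (by lia) (by lia) (by lia) hj _ (hF.lie_mem hp hg) y hy q hq).1
  have h₄ := (ih (i + s) (k - s) j (by lia) (by lia) (by lia) hj _ (hF.lie_mem hp hy) g hg q hq).1
  have h₁₃ : gradedForm τ κ (-(j + s)) ⁅g, p⁆ ⁅q, y⁆ =
      gradedForm τ κ (-(i + (k - s))) ⁅y, q⁆ ⁅p, g⁆ :=
    h.gradedForm_lie_lie_symm (by lia) (hF.lie_mem_of_eq hg hp (by lia))
      (hF.lie_mem_of_eq hq hy (by lia))
  have h₂₄ : gradedForm τ κ (-(j + (k - s))) ⁅y, p⁆ ⁅q, g⁆ =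
      gradedForm τ κ (-(i + s)) ⁅g, q⁆ ⁅p, y⁆ :=
    h.gradedForm_lie_lie_symm (by lia) (hF.lie_mem_of_eq hy hp (by lia))
      (hF.lie_mem_of_eq hq hg (by lia))
  simp only [LinearMap.mem_eqLocus, LinearMap.comp_apply, LinearMap.flip_apply,
    LinearMap.neg_apply, LieAlgebra.ad_apply, lie_lie_eq_sub _ y g, map_sub,
    h₁, h₂, h₃, h₄, h₁₃, h₂₄]
  ring

variable [CharZero K]

theorem IsLocalForm.mul_gradedForm (h : IsLocalForm F τ κ) {i : ℤ} {p q : L} (hp : p ∈ F (-i))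
    (hq : q ∈ F i) : i * gradedForm τ κ (-i) p q = -τ ⁅p, q⁆ := by
  rcases eq_or_ne i 0 with rfl | hi
  · rw [h.map_lie (by simpa using hp) hq, Int.cast_zero, zero_mul, neg_zero]
  · rw [gradedForm_apply (neg_ne_zero.mpr hi), Int.cast_neg, inv_neg, neg_mul, mul_neg,
      mul_inv_cancel_left₀ (Int.cast_ne_zero.mpr hi)]

theorem gradedForm_jacobi (hF : IsGeneratedGrading F) (h : IsLocalForm F τ κ) {i j k : ℤ}
    (hijk : i + j + k = 0) {p q r : L} (hp : p ∈ F i) (hq : q ∈ F j) (hr : r ∈ F k) :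
    k * gradedForm τ κ (-k) ⁅p, q⁆ r + i * gradedForm τ κ (-i) ⁅q, r⁆ p +
      j * gradedForm τ κ (-j) ⁅r, p⁆ q = 0 := by
  have hpq : ⁅p, q⁆ ∈ F (-k) := hF.lie_mem_of_eq hp hq (by lia)
  have hqr : ⁅q, r⁆ ∈ F (-i) := hF.lie_mem_of_eq hq hr (by lia)
  have hrp : ⁅r, p⁆ ∈ F (-j) := hF.lie_mem_of_eq hr hp (by lia)
  rw [h.mul_gradedForm hpq hr, h.mul_gradedForm hqr hp, h.mul_gradedForm hrp hq, ← map_neg,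
    ← map_neg, ← map_neg, lie_skew, lie_skew, lie_skew, ← map_add, ← map_add, lie_jacobi, map_zero]

theorem isInvariantOn_of_top (hF : IsGeneratedGrading F) (h : IsLocalForm F τ κ) {N : ℕ}
    (ih : ∀ i j k : ℤ, i + j + k = 0 → i.natAbs ≤ N → j.natAbs ≤ N → k.natAbs ≤ N →
      IsInvariantOn F τ κ i j k)
    {i j k : ℤ} (hijk : i + j + k = 0) (hi : i.natAbs ≤ N) (hj : j.natAbs ≤ N)
    (hk : k.natAbs = N + 1) : IsInvariantOn F τ κ i j k := by
  intro p hp q hq r hr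
  have htop := gradedForm_lie_eq_of_top hF h ih hijk hi hj hk hp hq hr
  have hjacobi := gradedForm_jacobi hF h hijk hp hq hr
  rw [← htop] at hjacobi
  refine ⟨mul_left_cancel₀ (Int.cast_ne_zero.mpr (by lia : k ≠ 0)) ?_, htop⟩
  have hk' : (k : K) = -i - j := by exact_mod_cast (by lia : k = -i - j)
  linear_combination hjacobi - gradedForm τ κ (-i) ⁅q, r⁆ p * hk'

theorem isInvariantOn_of_lie_apply_eq (hF : IsGeneratedGrading F) (h : IsLocalForm F τ κ) {i : ℤ}
    (hi : i ≠ 0)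
    (hκ : ∀ p ∈ F i, ∀ q ∈ F (-i), ∀ z ∈ F 0, κ ⁅p, q⁆ z = gradedForm τ κ (-i) ⁅q, z⁆ p) :
    IsInvariantOn F τ κ i (-i) 0 := by
  intro p hp q hq z hz
  have hjacobi := gradedForm_jacobi hF h (by lia) hp hq hz
  refine ⟨by simpa using hκ p hp q hq z hz,
    mul_left_cancel₀ (Int.cast_ne_zero.mpr hi : (i : K) ≠ 0) ?_⟩
  push_cast at hjacobi
  linear_combination hjacobi

/-- Both sides equal `B ⁅p, y⁆ ⁅g, z⁆ - B ⁅p, g⁆ ⁅y, z⁆` if `q = ⁅y, g⁆`, where `B` is the form. -/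
theorem lie_apply_eq_of_top (hF : IsGeneratedGrading F) (h : IsLocalForm F τ κ) {N : ℕ}
    (hN : N ≠ 0)
    (ih : ∀ i j k : ℤ, i + j + k = 0 → i.natAbs ≤ N → j.natAbs ≤ N → k.natAbs ≤ N →
      IsInvariantOn F τ κ i j k)
    {i : ℤ} (hi : i.natAbs = N + 1) {p q z : L} (hp : p ∈ F i) (hq : q ∈ F (-i)) (hz : z ∈ F 0) :
    κ ⁅p, q⁆ z = gradedForm τ κ (-i) ⁅q, z⁆ p := by
  obtain ⟨s, hs, his, hle⟩ := hF.le_bracketSpan (k := -i) (by lia)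
  suffices F (-i) ≤ LinearMap.eqLocus (κ.flip z ∘ₗ LieAlgebra.ad K L p)
      (-(gradedForm τ κ (-i)).flip p ∘ₗ LieAlgebra.ad K L z) by
    rw [← lie_skew q z, map_neg, LinearMap.neg_apply]
    exact this hq
  refine hle.trans (bracketSpan_le.mpr fun y hy g hg ↦ ?_)
  have h₁ := (ih (i + s) (-i - s) 0 (by lia) (by lia) (by lia) (by lia) _ (hF.lie_mem hp hy)
    g hg z hz).1
  have h₂ := (ih (i + (-i - s)) s 0 (by lia) (by lia) (by lia) (by lia) _ (hF.lie_mem hp hg)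
    y hy z hz).1
  have h₃ := (isInvariantOn_of_top hF h ih (i := 0 + s) (j := -i - s) (k := i) (by lia) (by lia)
    (by lia) (by lia) _ (hF.lie_mem hz hy) g hg p hp).1
  have h₄ := (isInvariantOn_of_top hF h ih (i := 0 + (-i - s)) (j := s) (k := i) (by lia)
    (by lia) (by lia) (by lia) _ (hF.lie_mem hz hg) y hy p hp).1
  have h₁₄ : gradedForm τ κ (-(i + s)) ⁅g, z⁆ ⁅p, y⁆ =
      gradedForm τ κ (-(0 + (-i - s))) ⁅y, p⁆ ⁅z, g⁆ :=
    h.gradedForm_lie_lie_symm (by lia) (hF.lie_mem_of_eq hg hz (by lia))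
      (hF.lie_mem_of_eq hp hy (by lia))
  have h₂₃ : gradedForm τ κ (-(i + (-i - s))) ⁅y, z⁆ ⁅p, g⁆ =
      gradedForm τ κ (-(0 + s)) ⁅g, p⁆ ⁅z, y⁆ :=
    h.gradedForm_lie_lie_symm (by lia) (hF.lie_mem_of_eq hy hz (by lia))
      (hF.lie_mem_of_eq hp hg (by lia))
  rw [neg_zero, gradedForm_zero] at h₁ h₂
  simp only [LinearMap.mem_eqLocus, LinearMap.comp_apply, LinearMap.flip_apply,
    LinearMap.neg_apply, LieAlgebra.ad_apply, lie_lie_eq_sub _ y g, map_sub,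
    h₁, h₂, h₃, h₄, h₁₄, h₂₃]
  ring

theorem isInvariantOn_one (hF : IsGeneratedGrading F) (h : IsLocalForm F τ κ) :
    IsInvariantOn F τ κ 1 (-1) 0 := by
  refine isInvariantOn_of_lie_apply_eq hF h one_ne_zero fun p hp q hq z hz ↦ ?_
  rw [h.lie_apply_one hp hq hz, gradedForm_apply (by simp), ← lie_skew p]
  simp

theorem isInvariantOn (hF : IsGeneratedGrading F) (h : IsLocalForm F τ κ) (N : ℕ) :
    ∀ i j k : ℤ, i + j + k = 0 → i.natAbs ≤ N → j.natAbs ≤ N → k.natAbs ≤ N →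
      IsInvariantOn F τ κ i j k := by
  induction N with
  | zero =>
    intro i j k _ hi hj hk
    obtain ⟨rfl, rfl, rfl⟩ : i = 0 ∧ j = 0 ∧ k = 0 := by lia
    exact h.isInvariantOn_zero hF
  | succ N ih =>
    have edge (i : ℤ) (hi : i.natAbs = N + 1) : IsInvariantOn F τ κ i (-i) 0 := by
      rcases eq_or_ne N 0 with rfl | hN
      · obtain rfl | rfl : i = 1 ∨ i = -1 := by lia
        exacts [isInvariantOn_one hF h, (isInvariantOn_one hF h).swap]
      · exact isInvariantOn_of_lie_apply_eq hF h (by lia) fun p hp q hq z hz ↦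
          lie_apply_eq_of_top hF h hN ih hi hp hq hz
    have top (i j k : ℤ) (hijk : i + j + k = 0) (hi : i.natAbs ≤ N + 1) (hj : j.natAbs ≤ N + 1)
        (hk : k.natAbs = N + 1) : IsInvariantOn F τ κ i j k := by
      by_cases hi' : i.natAbs = N + 1
      · obtain ⟨rfl, rfl⟩ : k = -i ∧ j = 0 := by lia
        exact (edge i hi').rotate.rotate.swap
      by_cases hj' : j.natAbs = N + 1
      · obtain ⟨rfl, rfl⟩ : k = -j ∧ i = 0 := by lia
        exact (edge j hj').rotate.rotate
      exact isInvariantOn_of_top hF h ih hijk (by lia) (by lia) hk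
    intro i j k hijk hi hj hk
    by_cases hk' : k.natAbs = N + 1
    · exact top i j k hijk hi hj hk'
    by_cases hj' : j.natAbs = N + 1
    · exact (top k i j (by lia) hk hi hj').rotate
    by_cases hi' : i.natAbs = N + 1
    · exact (top j k i (by lia) hj hk hi').rotate.rotate
    exact ih i j k hijk (by lia) (by lia) (by lia)

theorem gradedForm_lie_apply (hF : IsGeneratedGrading F) (h : IsLocalForm F τ κ) {i j k : ℤ}
    (hijk : i + j + k = 0) {p q r : L} (hp : p ∈ F i) (hq : q ∈ F j) (hr : r ∈ F k) :
    gradedForm τ κ (i + j) ⁅p, q⁆ r = gradedForm τ κ i p ⁅q, r⁆ := by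
  obtain rfl : k = -(i + j) := by lia
  have := (isInvariantOn hF h (max i.natAbs (max j.natAbs (i + j).natAbs)) i j _ hijk (by lia)
    (by lia) (by lia) p hp q hq r hr).1
  rw [neg_neg] at this
  rw [this, h.gradedForm_symm (by lia) (hF.lie_mem_of_eq hq hr (by lia)) hp]

end GradedForm

/-! ### Casimir operators -/

section DualPair

variable {K L : Type*} [Field K] [LieRing L] [LieAlgebra K L]

/-- Families `e` in `P` and `f` in `Q` that are dual to each other under the pairing `B` and span
`P` and `Q`. -/
structure IsDualPair {ι : Type*} [Fintype ι] (B : L →ₗ[K] L →ₗ[K] K) (P Q : Submodule K L)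
    (e f : ι → L) : Prop where
  left_mem (i : ι) : e i ∈ P
  right_mem (i : ι) : f i ∈ Q
  sum_left {a : L} : a ∈ P → ∑ i, B a (f i) • e i = a
  sum_right {b : L} : b ∈ Q → ∑ i, B (e i) b • f i = b

theorem exists_isDualPair {B : L →ₗ[K] L →ₗ[K] K} {P Q : Submodule K L} [FiniteDimensional K P]
    (hP : ∀ a ∈ P, (∀ b ∈ Q, B a b = 0) → a = 0) (hQ : ∀ b ∈ Q, (∀ a ∈ P, B a b = 0) → b = 0) :
    ∃ (n : ℕ) (e f : Fin n → L), IsDualPair B P Q e f := by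
  let p := B.domRestrict₁₂ P Q
  have : p.IsPerfPair := .of_injective
    ((injective_iff_map_eq_zero p).mpr fun a ha ↦
      Subtype.ext (hP a a.2 fun b hb ↦ LinearMap.congr_fun ha ⟨b, hb⟩))
    ((injective_iff_map_eq_zero p.flip).mpr fun b hb ↦
      Subtype.ext (hQ b b.2 fun a ha ↦ LinearMap.congr_fun hb ⟨a, ha⟩))
  let b := finBasis K P
  let f (i : Fin (finrank K P)) : Q := p.flip.toPerfPair.symm (b.coord i)
  have hf (a : P) (i) : p a (f i) = b.repr a i := p.apply_toPerfPair_flip (b.coord i) a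
  refine ⟨finrank K P, fun i ↦ b i, fun i ↦ f i, fun i ↦ (b i).2, fun i ↦ (f i).2,
    fun {a} ha ↦ ?_, fun {y} hy ↦ ?_⟩
  · have := congrArg Subtype.val (b.sum_repr ⟨a, ha⟩)
    simp only [← hf, AddSubmonoidClass.coe_finsetSum, SetLike.val_smul] at this
    exact this
  · suffices ∑ i, p (b i) ⟨y, hy⟩ • f i = ⟨y, hy⟩ by
      have := congrArg Subtype.val this
      simp only [AddSubmonoidClass.coe_finsetSum, SetLike.val_smul] at this
      exact this
    refine p.flip.toPerfPair.injective (b.ext fun i ↦ ?_)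
    simp [hf, Finsupp.single_apply]

variable {τ : L →ₗ[K] K} {κ : L →ₗ[K] L →ₗ[K] K} {F : ℤ → Submodule K L}
  {ι ι' : Type*} [Fintype ι] [Fintype ι'] {e f : ι → L} {e' f' : ι' → L}

variable {A : Type*} [Ring A] [Algebra K A]

/-- The sum of the products `φ (e i) * φ (f i)` over a dual pair of families. -/
def casimirTerm (φ : L →ₗ⁅K⁆ A) (e f : ι → L) : A := ∑ i, φ (e i) * φ (f i)

/-- The failure of the products `φ (e i) * φ (f i)` with `e i` of degree `l` and of those in degree
`l + 1` to commute with an element `x` of degree `1` separately; see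
`lie_casimirTerm_eq_sub`. -/
def casimirBoundary (φ : L →ₗ⁅K⁆ A) (e f : ι → L) (x : L) : A := ∑ i, φ ⁅x, e i⁆ * φ (f i)

theorem lie_casimirTerm (φ : L →ₗ⁅K⁆ A) (e f : ι → L) (x : L) :
    ⁅φ x, casimirTerm φ e f⁆ =
      casimirBoundary φ e f x + ∑ i, φ (e i) * φ ⁅x, f i⁆ := by
  simp only [casimirTerm, casimirBoundary, Ring.lie_def, LieHom.map_lie, ← Finset.sum_add_distrib,
    Finset.mul_sum, Finset.sum_mul, ← Finset.sum_sub_distrib]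
  refine Finset.sum_congr rfl fun i _ ↦ ?_
  noncomm_ring

variable {M : Type*} [AddCommGroup M] [Module K M]

/-- A family of subspaces of a representation which is compatible with the grading `F`, vanishes in
negative degrees, and is generated from degree `0` by `F 1`. -/
structure IsGeneratedModule (F : ℤ → Submodule K L) (φ : L →ₗ⁅K⁆ End K M)
    (R : ℤ → Submodule K M) : Prop where
  apply_mem {i d : ℤ} {x : L} {m : M} : x ∈ F i → m ∈ R d → φ x m ∈ R (i + d)
  eq_bot {d : ℤ} : d < 0 → R d = ⊥
  succ_le (d : ℕ) : R (d + 1) ≤ Submodule.map₂ (φ : L →ₗ[K] End K M) (F 1) (R d)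

theorem IsGeneratedModule.apply_eq_zero {φ : L →ₗ⁅K⁆ End K M} {R : ℤ → Submodule K M}
    (hR : IsGeneratedModule F φ R) {i d : ℤ} (hid : i + d < 0) {x : L} (hx : x ∈ F i) {m : M}
    (hm : m ∈ R d) : φ x m = 0 := by
  simpa [hR.eq_bot hid] using hR.apply_mem hx hm

theorem IsGeneratedModule.apply_eq_zero_of_degree_one {φ : L →ₗ⁅K⁆ End K M}
    {R : ℤ → Submodule K M} (hR : IsGeneratedModule F φ R) (hF : IsGeneratedGrading F)
    (h : ∀ y ∈ F (-1), ∀ m ∈ R 1, φ y m = 0) (d : ℕ) :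
    ∀ y ∈ F (-(d + 1)), ∀ m ∈ R (d + 1), φ y m = 0 := by
  induction d with
  | zero => simpa using h
  | succ d ih =>
    intro y hy m hm
    suffices R (d + 1 + 1 : ℕ) ≤ LinearMap.ker (φ y) from this (by exact_mod_cast hm)
    refine (hR.succ_le (d + 1)).trans (Submodule.map₂_le.mpr fun x hx m' hm' ↦ ?_)
    have hm' : m' ∈ R (d + 1) := by exact_mod_cast hm'
    have hyx : φ ⁅y, x⁆ m' = 0 :=
      ih _ (hF.lie_mem_of_eq hy hx (by push_cast; ring)) m' hm'
    have hy' : φ y m' = 0 := hR.apply_eq_zero (by push_cast; lia) hy hm'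
    simpa [LieHom.map_lie, Ring.lie_def, hy'] using hyx

/-- The part of degree at least one of a generated module is generated by the part of degree one as
soon as the latter is annihilated by the elements of degree `-1`. -/
theorem IsGeneratedModule.tail {φ : L →ₗ⁅K⁆ End K M} {R : ℤ → Submodule K M}
    (hR : IsGeneratedModule F φ R) (hF : IsGeneratedGrading F)
    (h : ∀ y ∈ F (-1), ∀ m ∈ R 1, φ y m = 0) :
    IsGeneratedModule F φ fun d ↦ if d < 0 then ⊥ else R (d + 1) where
  apply_mem {i d x m} hx hm := by
    obtain hd | hd := lt_or_ge d 0
    · simp_all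
    obtain hid | hid := lt_or_ge (i + d) 0
    · suffices φ x m = 0 by simp [this]
      rw [if_neg hd.not_gt] at hm
      obtain hid' | hid' := (show i + (d + 1) ≤ 0 by lia).lt_or_eq
      · exact hR.apply_eq_zero hid' hx hm
      · lift d to ℕ using hd
        exact hR.apply_eq_zero_of_degree_one hF h d x (eq_neg_of_add_eq_zero_left hid' ▸ hx) m hm
    · simp only [hd.not_gt, hid.not_gt, if_false] at hm ⊢
      exact add_assoc i d 1 ▸ hR.apply_mem hx hm
  eq_bot hd := if_pos hd
  succ_le d := by
    rw [if_neg (by lia), if_neg (by lia)]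
    exact_mod_cast hR.succ_le (d + 1)

theorem IsGeneratedGrading.apply_eq_zero_of_singular (hF : IsGeneratedGrading F)
    (φ : L →ₗ⁅K⁆ End K M) {m : M} (hm : ∀ y ∈ F (-1), φ y m = 0) (l : ℕ) :
    ∀ y ∈ F (-(l + 1)), φ y m = 0 := by
  induction l with
  | zero => simpa using hm
  | succ l ih =>
    suffices F (-((l + 1 : ℕ) + 1)) ≤ LinearMap.ker ((φ : L →ₗ[K] End K M).flip m) from
      fun y hy ↦ this hy
    refine (hF.neg_succ_le (l + 1) l.succ_ne_zero).trans (bracketSpan_le.mpr fun y hy z hz ↦ ?_)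
    have hz' : φ z m = 0 := ih z (by exact_mod_cast hz)
    simp [LieHom.map_lie, Ring.lie_def, hm y hy, hz']

variable [CharZero K]

/-- The canonical tensors of the pairings in degrees `l` and `l + m` are exchanged by the adjoint
action of an element of degree `m`. -/
theorem IsDualPair.sum_lie_left_add (hF : IsGeneratedGrading F) (h : IsLocalForm F τ κ)
    {l m k : ℤ} (hk : m + l = k)
    (hl : IsDualPair (gradedForm τ κ l) (F l) (F (-l)) e f)
    (hk' : IsDualPair (gradedForm τ κ k) (F k) (F (-k)) e' f')
    {M : Type*} [AddCommGroup M] [Module K M] (β : L →ₗ[K] L →ₗ[K] M) {x : L} (hx : x ∈ F m) :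
    ∑ i, β ⁅x, e i⁆ (f i) + ∑ j, β (e' j) ⁅x, f' j⁆ = 0 := by
  have coeff (i : ι) (j : ι') :
      gradedForm τ κ k ⁅x, e i⁆ (f' j) = -gradedForm τ κ l (e i) ⁅x, f' j⁆ := by
    rw [← gradedForm_lie_apply hF h (k := -k) (by lia) (hl.left_mem i) hx (hk'.right_mem j),
      ← lie_skew x, map_neg, LinearMap.neg_apply, add_comm l m, hk]
  have expand (i : ι) : ⁅x, e i⁆ = ∑ j, gradedForm τ κ k ⁅x, e i⁆ (f' j) • e' j :=
    (hk'.sum_left (hF.lie_mem_of_eq hx (hl.left_mem i) hk)).symm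
  have expand' (j : ι') : ⁅x, f' j⁆ = ∑ i, gradedForm τ κ l (e i) ⁅x, f' j⁆ • f i :=
    (hl.sum_right (hF.lie_mem_of_eq hx (hk'.right_mem j) (by lia))).symm
  calc ∑ i, β ⁅x, e i⁆ (f i) + ∑ j, β (e' j) ⁅x, f' j⁆
      = ∑ i, ∑ j, gradedForm τ κ k ⁅x, e i⁆ (f' j) • β (e' j) (f i) +
          ∑ j, ∑ i, gradedForm τ κ l (e i) ⁅x, f' j⁆ • β (e' j) (f i) := by
        congr 1
        · refine Finset.sum_congr rfl fun i _ ↦ ?_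
          conv_lhs => rw [expand i]
          simp only [map_sum, map_smul, LinearMap.sum_apply, LinearMap.smul_apply]
        · refine Finset.sum_congr rfl fun j _ ↦ ?_
          conv_lhs => rw [expand' j]
          simp only [map_sum, map_smul]
    _ = 0 := by
        rw [Finset.sum_comm, ← Finset.sum_add_distrib]
        refine Finset.sum_eq_zero fun j _ ↦ ?_
        rw [← Finset.sum_add_distrib]
        refine Finset.sum_eq_zero fun i _ ↦ ?_
        rw [coeff, neg_smul, neg_add_cancel]

theorem lie_casimirTerm_eq_sub (hF : IsGeneratedGrading F) (h : IsLocalForm F τ κ)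
    (φ : L →ₗ⁅K⁆ A) {l m k : ℤ} (hk : m + l = k)
    (hl : IsDualPair (gradedForm τ κ l) (F l) (F (-l)) e f)
    (hk' : IsDualPair (gradedForm τ κ k) (F k) (F (-k)) e' f') {x : L} (hx : x ∈ F m) :
    ⁅φ x, casimirTerm φ e' f'⁆ = casimirBoundary φ e' f' x - casimirBoundary φ e f x := by
  have := hl.sum_lie_left_add hF h hk hk'
    ((LinearMap.mul K A).compl₁₂ (φ : L →ₗ[K] A) (φ : L →ₗ[K] A)) hx
  rw [lie_casimirTerm, eq_sub_iff_add_eq, add_assoc, add_eq_left]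
  rw [add_comm]
  exact this

theorem lie_sum_casimirTerm (hF : IsGeneratedGrading F) (h : IsLocalForm F τ κ) (φ : L →ₗ⁅K⁆ A)
    {N : ℕ → ℕ} {e f : ∀ l : ℕ, Fin (N l) → L} {n : ℕ}
    (hef : ∀ l : ℕ, l ≤ n → IsDualPair (gradedForm τ κ l) (F l) (F (-l)) (e l) (f l)) {x : L}
    (hx : x ∈ F 1) :
    ⁅φ x, ∑ l ∈ Finset.range n, casimirTerm φ (e (l + 1)) (f (l + 1))⁆ =
      casimirBoundary φ (e n) (f n) x - casimirBoundary φ (e 0) (f 0) x := by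
  rw [lie_sum, ← Finset.sum_range_sub (fun l ↦ casimirBoundary φ (e l) (f l) x)]
  refine Finset.sum_congr rfl fun l hl ↦ ?_
  have hln : l + 1 ≤ n := Finset.mem_range.mp hl
  exact lie_casimirTerm_eq_sub hF h φ (by push_cast; ring) (hef l (by lia)) (hef (l + 1) hln) hx

section Casimir

variable {φ : L →ₗ⁅K⁆ End K M} {R : ℤ → Submodule K M} {C : End K M}
  {N : ℕ → ℕ} {e f : ∀ l : ℕ, Fin (N l) → L} {n : ℕ}

theorem IsGeneratedModule.casimir_apply_eq_zero (hR : IsGeneratedModule F φ R)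
    (hF : IsGeneratedGrading F) (h : IsLocalForm F τ κ)
    (hef : ∀ l : ℕ, l ≤ n → IsDualPair (gradedForm τ κ l) (F l) (F (-l)) (e l) (f l))
    (hC : ∀ x ∈ F 1, ⁅φ x, C⁆ = casimirBoundary φ (e 0) (f 0) x) (hC₀ : ∀ m ∈ R 0, C m = 0)
    {d : ℕ} (hd : d ≤ n) {m : M} (hm : m ∈ R d) :
    (C + ∑ l ∈ Finset.range n, casimirTerm φ (e (l + 1)) (f (l + 1))) m = 0 := by
  set Θ := C + ∑ l ∈ Finset.range n, casimirTerm φ (e (l + 1)) (f (l + 1)) with hΘ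
  induction d generalizing m with
  | zero =>
    have hf (l : ℕ) (hl : l ∈ Finset.range n) (i : Fin (N (l + 1))) : φ (f (l + 1) i) m = 0 :=
      hR.apply_eq_zero (by lia) ((hef (l + 1) (Finset.mem_range.mp hl)).right_mem i) hm
    rw [hΘ, LinearMap.add_apply, hC₀ m hm, zero_add, LinearMap.sum_apply]
    refine Finset.sum_eq_zero fun l hl ↦ ?_
    simp [casimirTerm, LinearMap.sum_apply, hf l hl]
  | succ d ih =>
    have hlie (x : L) (hx : x ∈ F 1) : ⁅φ x, Θ⁆ = casimirBoundary φ (e n) (f n) x := by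
      rw [hΘ, lie_add, hC x hx, lie_sum_casimirTerm hF h φ hef hx, add_sub_cancel]
    suffices R (d + 1) ≤ LinearMap.ker Θ from this (by exact_mod_cast hm)
    refine (hR.succ_le d).trans (Submodule.map₂_le.mpr fun x hx m hm ↦ ?_)
    have hf (i : Fin (N n)) : φ (f n i) m = 0 :=
      hR.apply_eq_zero (by lia) ((hef n le_rfl).right_mem i) hm
    have := LinearMap.congr_fun (hlie x hx) m
    simpa [Ring.lie_def, ih (by lia) hm, casimirBoundary, LinearMap.sum_apply, hf] using this

theorem IsGeneratedModule.apply_eq_zero_of_singular (hR : IsGeneratedModule F φ R)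
    (hF : IsGeneratedGrading F) (h : IsLocalForm F τ κ)
    (hef : ∀ l : ℕ, l ≤ n → IsDualPair (gradedForm τ κ l) (F l) (F (-l)) (e l) (f l))
    (hC : ∀ x ∈ F 1, ⁅φ x, C⁆ = casimirBoundary φ (e 0) (f 0) x) (hC₀ : ∀ m ∈ R 0, C m = 0)
    {m : M} (hm : m ∈ R n) (hm' : ∀ y ∈ F (-1), φ y m = 0) : C m = 0 := by
  have hf (l : ℕ) (hl : l ∈ Finset.range n) (i : Fin (N (l + 1))) : φ (f (l + 1) i) m = 0 :=
    hF.apply_eq_zero_of_singular φ hm' l _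
      (by exact_mod_cast (hef (l + 1) (Finset.mem_range.mp hl)).right_mem i)
  have hΘ := hR.casimir_apply_eq_zero hF h hef hC hC₀ le_rfl hm
  rwa [LinearMap.add_apply, LinearMap.sum_apply, Finset.sum_eq_zero, add_zero] at hΘ
  intro l hl
  simp [casimirTerm, LinearMap.sum_apply, hf l hl]

end Casimir

end DualPair

/-! ### The graded Poincaré–Birkhoff–Witt theorem -/

section EnvelopingAlgebra

open UniversalEnvelopingAlgebra

section EnvDerivation

variable {k K : Type*} [Field k] [LieRing K] [LieAlgebra k K]

theorem adjoin_range_ι :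
    Algebra.adjoin k (Set.range (ι k : K → UniversalEnvelopingAlgebra k K)) = ⊤ := by
  set S := Algebra.adjoin k (Set.range (ι k : K → UniversalEnvelopingAlgebra k K))
  let ι' : K →ₗ⁅k⁆ S :=
    { toFun a := ⟨ι k a, Algebra.subset_adjoin ⟨a, rfl⟩⟩
      map_add' _ _ := Subtype.ext (map_add _ _ _)
      map_smul' _ _ := Subtype.ext (map_smul _ _ _)
      map_lie' := Subtype.ext (LieHom.map_lie _ _ _) }
  have val_lift : S.val.comp (lift k ι') = AlgHom.id k _ := by
    ext a
    simp [ι', -ι_apply, lift_ι_apply]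
  exact eq_top_iff.mpr fun u _ ↦ by
    rw [← AlgHom.id_apply (R := k) u, ← val_lift]
    exact (lift k ι' u).2

theorem eq_top_of_ι_mul_mem {N : Submodule k (UniversalEnvelopingAlgebra k K)} (one : 1 ∈ N)
    (ι_mul : ∀ a : K, ∀ u ∈ N, ι k a * u ∈ N) : N = ⊤ := by
  suffices ∀ u : UniversalEnvelopingAlgebra k K, ∀ v ∈ N, u * v ∈ N from
    eq_top_iff.mpr fun u _ ↦ by simpa using this u 1 one
  intro u
  have hu : u ∈ Algebra.adjoin k (Set.range (ι k : K → UniversalEnvelopingAlgebra k K)) :=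
    by rw [adjoin_range_ι]; exact Algebra.mem_top
  induction hu using Algebra.adjoin_induction with
  | mem u hu => obtain ⟨a, rfl⟩ := hu; exact ι_mul a
  | algebraMap c => exact fun v hv ↦ by simpa [Algebra.algebraMap_eq_smul_one] using N.smul_mem c hv
  | add u v _ _ hu hv => exact fun w hw ↦ by simpa [add_mul] using N.add_mem (hu w hw) (hv w hw)
  | mul u v _ _ hu hv => exact fun w hw ↦ by simpa [mul_assoc] using hu _ (hv w hw)

/-- The lift of `a ↦ a + (δ a) ε` to a homomorphism from the enveloping algebra to its trivial
square-zero extension; its second component is the derivation of the enveloping algebra which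
extends `δ`. -/
def envDualHom (δ : LieDerivation k K K) : UniversalEnvelopingAlgebra k K →ₐ[k]
    TrivSqZeroExt (UniversalEnvelopingAlgebra k K) (UniversalEnvelopingAlgebra k K) :=
  lift k
    { toFun a := TrivSqZeroExt.inl (ι k a) + TrivSqZeroExt.inr (ι k (δ a))
      map_add' a b := by ext <;> simp [-ι_apply]
      map_smul' c a := by ext <;> simp [-ι_apply]
      map_lie' {a b} := by
        ext
        · simp [-ι_apply, Ring.lie_def]
        · simp [-ι_apply, Ring.lie_def]
          abel }

theorem fst_envDualHom (δ : LieDerivation k K K) (u : UniversalEnvelopingAlgebra k K) :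
    (envDualHom δ u).fst = u := by
  suffices (TrivSqZeroExt.fstHom k _ _).comp (envDualHom δ) = AlgHom.id k _ from
    AlgHom.congr_fun this u
  ext a
  simp [envDualHom, -ι_apply, lift_ι_apply]

/-- The derivation of the enveloping algebra which extends a derivation `δ` of a Lie algebra. -/
def envDerivation (δ : LieDerivation k K K) : End k (UniversalEnvelopingAlgebra k K) :=
  (TrivSqZeroExt.sndHom _ _).restrictScalars k ∘ₗ (envDualHom δ).toLinearMap

@[simp]
theorem envDerivation_ι (δ : LieDerivation k K K) (a : K) :
    envDerivation δ (ι k a) = ι k (δ a) := by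
  simp [envDerivation, envDualHom, -ι_apply, lift_ι_apply]

@[simp]
theorem envDerivation_one (δ : LieDerivation k K K) : envDerivation δ 1 = 0 := by
  simp [envDerivation]

theorem envDerivation_mul (δ : LieDerivation k K K) (u v : UniversalEnvelopingAlgebra k K) :
    envDerivation δ (u * v) = envDerivation δ u * v + u * envDerivation δ v := by
  simp [envDerivation, fst_envDualHom, add_comm]

theorem mul_mem_eigenspace_envDerivation {δ : LieDerivation k K K} {a b : k}
    {u v : UniversalEnvelopingAlgebra k K} (hu : u ∈ (envDerivation δ).eigenspace a)
    (hv : v ∈ (envDerivation δ).eigenspace b) :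
    u * v ∈ (envDerivation δ).eigenspace (a + b) := by
  rw [End.mem_eigenspace_iff] at *
  rw [envDerivation_mul, hu, hv, smul_mul_assoc, mul_smul_comm, add_smul]

end EnvDerivation

section LineExtension

variable {k K K' : Type*} [Field k] [LieRing K] [LieAlgebra k K] [LieRing K'] [LieAlgebra k K']

/-- `K'` is the direct sum of the image of the homomorphism `j` and of the line through `x`, on
which `x` acts through the derivation `δ`; `p` and `c` are the two coordinates. -/
structure IsLineExtension (j : K →ₗ⁅k⁆ K') (x : K') (δ : LieDerivation k K K) (p : K' →ₗ[k] K)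
    (c : K' →ₗ[k] k) : Prop where
  lie_apply (a : K) : ⁅x, j a⁆ = j (δ a)
  apply_add_smul (y : K') : j (p y) + c y • x = y
  left_inv (a : K) : p (j a) = a
  coord_apply (a : K) : c (j a) = 0
  coord_self : c x = 1

variable {j : K →ₗ⁅k⁆ K'} {x : K'} {δ : LieDerivation k K K} {p : K' →ₗ[k] K} {c : K' →ₗ[k] k}

theorem IsLineExtension.lie_eq (h : IsLineExtension j x δ p c) (y z : K') :
    ⁅y, z⁆ = j (⁅p y, p z⁆ + c y • δ (p z) - c z • δ (p y)) := by
  conv_lhs => rw [← h.apply_add_smul y, ← h.apply_add_smul z]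
  have skew (a : K) : ⁅j a, x⁆ = -j (δ a) := by rw [← lie_skew, h.lie_apply]
  simp only [add_lie, lie_add, smul_lie, lie_smul, lie_self, skew, h.lie_apply, map_add,
    map_sub, map_smul, LieHom.map_lie, smul_zero]
  module

theorem IsLineExtension.proj_self (h : IsLineExtension j x δ p c) : p x = 0 := by
  have := congrArg p (h.apply_add_smul x)
  rwa [h.coord_self, one_smul, map_add, h.left_inv, add_eq_right] at this

variable (k) in
/-- Left multiplication by elements of `K` on the coefficients of polynomials over the enveloping
algebra of `K`, encoded as finitely supported sequences. -/
def coeffMul : K →ₗ⁅k⁆ End k (ℕ →₀ UniversalEnvelopingAlgebra k K) where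
  toFun a := Finsupp.mapRange.linearMap (LinearMap.mulLeft k (ι k a))
  map_add' a b := by
    ext i u : 2
    simp [-ι_apply, -Finsupp.single_mul, add_mul, Finsupp.single_add]
  map_smul' b a := by
    ext i u : 2
    simp [-ι_apply, -Finsupp.single_mul]
  map_lie' {a b} := by
    ext i u : 2
    simp [-ι_apply, -Finsupp.single_mul, Ring.lie_def, sub_mul, mul_assoc, Finsupp.single_sub]

/-- The operator `q ↦ q X + δ q` on polynomials `q` over the enveloping algebra of `K`. -/
def oreShift (δ : LieDerivation k K K) : End k (ℕ →₀ UniversalEnvelopingAlgebra k K) :=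
  Finsupp.lmapDomain _ k Nat.succ + Finsupp.mapRange.linearMap (envDerivation δ)

theorem coeffMul_single (a : K) (i : ℕ) (u : UniversalEnvelopingAlgebra k K) :
    coeffMul k a (Finsupp.single i u) = Finsupp.single i (ι k a * u) := by
  simp [coeffMul, -ι_apply, -Finsupp.single_mul]

theorem oreShift_single (δ : LieDerivation k K K) (i : ℕ) (u : UniversalEnvelopingAlgebra k K) :
    oreShift δ (Finsupp.single i u) =
      Finsupp.single (i + 1) u + Finsupp.single i (envDerivation δ u) := by
  simp [oreShift, Finsupp.mapDomain_single]

theorem oreShift_mul_coeffMul (δ : LieDerivation k K K) (a : K) :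
    oreShift δ * coeffMul k a = coeffMul k a * oreShift δ + coeffMul k (δ a) := by
  ext i u : 2
  simp only [LinearMap.comp_apply, Finsupp.lsingle_apply, End.mul_apply, LinearMap.add_apply,
    coeffMul_single, oreShift_single, envDerivation_mul, envDerivation_ι, map_add,
    Finsupp.single_add]
  abel

/-- The action of a line extension of `K` on polynomials over the enveloping algebra of `K`. -/
def IsLineExtension.polynomialRep (h : IsLineExtension j x δ p c) :
    K' →ₗ⁅k⁆ End k (ℕ →₀ UniversalEnvelopingAlgebra k K) where
  toFun y := coeffMul k (p y) + c y • oreShift δ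
  map_add' y z := by
    simp only [map_add, add_smul]
    abel
  map_smul' b y := by
    simp only [map_smul, smul_add, smul_assoc, RingHom.id_apply]
  map_lie' {y z} := by
    rw [h.lie_eq, h.left_inv, h.coord_apply]
    simp only [Ring.lie_def, map_add, map_sub, map_smul, LieHom.map_lie, add_mul, mul_add,
      smul_mul_assoc, mul_smul_comm, oreShift_mul_coeffMul]
    module

theorem IsLineExtension.polynomialRep_apply (h : IsLineExtension j x δ p c) (a : K) :
    h.polynomialRep (j a) = coeffMul k a := by
  simp [polynomialRep, h.left_inv, h.coord_apply]

theorem IsLineExtension.polynomialRep_self (h : IsLineExtension j x δ p c) :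
    h.polynomialRep x = oreShift δ := by
  simp [polynomialRep, h.proj_self, h.coord_self]

/-- The homomorphism of enveloping algebras induced by a homomorphism of Lie algebras. -/
def envMap (j : K →ₗ⁅k⁆ K') :
    UniversalEnvelopingAlgebra k K →ₐ[k] UniversalEnvelopingAlgebra k K' :=
  lift k ((ι k).comp j)

@[simp]
theorem envMap_ι (j : K →ₗ⁅k⁆ K') (a : K) : envMap j (ι k a) = ι k (j a) := by
  simp [envMap, -ι_apply, lift_ι_apply]

/-- Evaluation at `x` of polynomials over the enveloping algebra of `K`, with the coefficients
written on the left. -/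
def evalRight (j : K →ₗ⁅k⁆ K') (x : K') :
    (ℕ →₀ UniversalEnvelopingAlgebra k K) →ₗ[k] UniversalEnvelopingAlgebra k K' :=
  Finsupp.lsum k fun i ↦ LinearMap.mulRight k (ι k x ^ i) ∘ₗ (envMap j).toLinearMap

theorem evalRight_single (i : ℕ) (u : UniversalEnvelopingAlgebra k K) :
    evalRight j x (Finsupp.single i u) = envMap j u * ι k x ^ i := by
  simp [evalRight, -ι_apply]

theorem IsLineExtension.lie_envMap (h : IsLineExtension j x δ p c)
    (u : UniversalEnvelopingAlgebra k K) :
    ι k x * envMap j u - envMap j u * ι k x = envMap j (envDerivation δ u) := by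
  suffices LinearMap.eqLocus (LinearMap.mulLeft k (ι k x) ∘ₗ (envMap j).toLinearMap -
      LinearMap.mulRight k (ι k x) ∘ₗ (envMap j).toLinearMap)
      ((envMap j).toLinearMap ∘ₗ envDerivation δ) = ⊤ from
    LinearMap.mem_eqLocus.mp (this ▸ Submodule.mem_top (x := u))
  refine eq_top_of_ι_mul_mem (by simp [-ι_apply]) fun a u hu ↦ ?_
  have hu : ι k x * envMap j u - envMap j u * ι k x = envMap j (envDerivation δ u) := hu
  have ha : ι k x * ι k (j a) - ι k (j a) * ι k x = ι k (j (δ a)) := by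
    rw [← h.lie_apply, LieHom.map_lie, Ring.lie_def]
  change ι k x * envMap j (ι k a * u) - envMap j (ι k a * u) * ι k x =
    envMap j (envDerivation δ (ι k a * u))
  rw [envDerivation_mul, envDerivation_ι, map_add, map_mul, map_mul, map_mul, ← hu, envMap_ι,
    envMap_ι, ← ha]
  noncomm_ring

theorem IsLineExtension.evalRight_polynomialRep (h : IsLineExtension j x δ p c) (y : K')
    (q : ℕ →₀ UniversalEnvelopingAlgebra k K) :
    evalRight j x (h.polynomialRep y q) = ι k y * evalRight j x q := by
  suffices evalRight j x ∘ₗ h.polynomialRep y =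
      LinearMap.mulLeft k (ι k y) ∘ₗ evalRight j x from LinearMap.congr_fun this q
  ext i u : 2
  have comm : envMap j (envDerivation δ u) + envMap j u * ι k x = ι k x * envMap j u := by
    rw [← h.lie_envMap, sub_add_cancel]
  have split : ι k y = ι k (j (p y)) + c y • ι k x := by
    rw [← map_smul, ← map_add, h.apply_add_smul]
  simp only [polynomialRep, LieHom.coe_mk, LinearMap.comp_apply, Finsupp.lsingle_apply,
    LinearMap.add_apply, LinearMap.smul_apply, coeffMul_single, oreShift_single, map_add, map_smul,
    evalRight_single, LinearMap.mulLeft_apply, map_mul, envMap_ι, split, add_mul, smul_mul_assoc,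
    ← mul_assoc, ← comm, pow_succ', smul_add]
  abel

theorem IsLineExtension.evalRight_lift_polynomialRep (h : IsLineExtension j x δ p c)
    (u : UniversalEnvelopingAlgebra k K') :
    evalRight j x (lift k h.polynomialRep u (Finsupp.single 0 1)) = u := by
  suffices LinearMap.eqLocus (evalRight j x ∘ₗ (lift k h.polynomialRep).toLinearMap.flip
      (Finsupp.single 0 1)) LinearMap.id = ⊤ from
    LinearMap.mem_eqLocus.mp (this ▸ Submodule.mem_top (x := u))
  refine eq_top_of_ι_mul_mem (by simp [evalRight_single]) fun y u hu ↦ ?_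
  have hu : evalRight j x (lift k h.polynomialRep u (Finsupp.single 0 1)) = u := hu
  change evalRight j x (lift k h.polynomialRep (ι k y * u) (Finsupp.single 0 1)) = ι k y * u
  rw [map_mul, lift_ι_apply, End.mul_apply, h.evalRight_polynomialRep, hu]

theorem IsLineExtension.lift_polynomialRep_envMap (h : IsLineExtension j x δ p c)
    (u : UniversalEnvelopingAlgebra k K) (i : ℕ) (v : UniversalEnvelopingAlgebra k K) :
    lift k h.polynomialRep (envMap j u) (Finsupp.single i v) = Finsupp.single i (u * v) := by
  suffices LinearMap.eqLocus
      ((lift k h.polynomialRep).toLinearMap.flip (Finsupp.single i v) ∘ₗ (envMap j).toLinearMap)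
      (Finsupp.lsingle i ∘ₗ LinearMap.mulRight k v) = ⊤ from
    LinearMap.mem_eqLocus.mp (this ▸ Submodule.mem_top (x := u))
  refine eq_top_of_ι_mul_mem (by simp) fun a u hu ↦ ?_
  have hu : lift k h.polynomialRep (envMap j u) (Finsupp.single i v) = Finsupp.single i (u * v) :=
    hu
  change lift k h.polynomialRep (envMap j (ι k a * u)) (Finsupp.single i v) =
    Finsupp.single i (ι k a * u * v)
  rw [map_mul, map_mul, envMap_ι, lift_ι_apply, End.mul_apply, hu, h.polynomialRep_apply,
    coeffMul_single, mul_assoc]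

theorem IsLineExtension.lift_polynomialRep_evalRight (h : IsLineExtension j x δ p c)
    (q : ℕ →₀ UniversalEnvelopingAlgebra k K) :
    lift k h.polynomialRep (evalRight j x q) (Finsupp.single 0 1) = q := by
  suffices (lift k h.polynomialRep).toLinearMap.flip (Finsupp.single 0 1) ∘ₗ evalRight j x =
      LinearMap.id from LinearMap.congr_fun this q
  have pow (i : ℕ) : lift k h.polynomialRep (ι k x ^ i) (Finsupp.single 0 1) =
      Finsupp.single i 1 := by
    induction i with
    | zero => simp
    | succ i ih =>
      rw [pow_succ', map_mul, lift_ι_apply, End.mul_apply, ih, h.polynomialRep_self,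
        oreShift_single, envDerivation_one, Finsupp.single_zero, add_zero]
  ext i u : 2
  simp only [LinearMap.comp_apply, Finsupp.lsingle_apply, evalRight_single, LinearMap.flip_apply,
    AlgHom.toLinearMap_apply, map_mul, End.mul_apply, pow, h.lift_polynomialRep_envMap, mul_one,
    LinearMap.id_apply]

/-- The enveloping algebra of a line extension is the space of polynomials in `x` with coefficients
in the enveloping algebra of `K` written on the left. -/
def IsLineExtension.evalEquiv (h : IsLineExtension j x δ p c) :
    (ℕ →₀ UniversalEnvelopingAlgebra k K) ≃ₗ[k] UniversalEnvelopingAlgebra k K' :=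
  .ofLinearMap (evalRight j x) ((lift k h.polynomialRep).toLinearMap.flip (Finsupp.single 0 1))
    (LinearMap.ext h.evalRight_lift_polynomialRep) (LinearMap.ext h.lift_polynomialRep_evalRight)

theorem evalRight_mapDomain_succ (q : ℕ →₀ UniversalEnvelopingAlgebra k K) :
    evalRight j x (Finsupp.lmapDomain _ k Nat.succ q) = evalRight j x q * ι k x := by
  suffices evalRight j x ∘ₗ Finsupp.lmapDomain _ k Nat.succ =
      LinearMap.mulRight k (ι k x) ∘ₗ evalRight j x from LinearMap.congr_fun this q
  ext i u : 2
  simp [-ι_apply, evalRight_single, Finsupp.mapDomain_single, pow_succ, mul_assoc]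

variable (j x) in
/-- Composition of a constant term `u` and a quotient `v` to `u + v x`. -/
def addMulRight : UniversalEnvelopingAlgebra k K × UniversalEnvelopingAlgebra k K' →ₗ[k]
    UniversalEnvelopingAlgebra k K' :=
  (envMap j).toLinearMap.coprod (LinearMap.mulRight k (ι k x))

theorem addMulRight_apply
    (u : UniversalEnvelopingAlgebra k K × UniversalEnvelopingAlgebra k K') :
    addMulRight j x u = envMap j u.1 + u.2 * ι k x := by
  simp [addMulRight, -ι_apply]

theorem IsLineExtension.bijective_addMulRight (h : IsLineExtension j x δ p c) :
    Function.Bijective (addMulRight j x) := by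
  constructor
  · refine (injective_iff_map_eq_zero _).mpr fun ⟨u, v⟩ huv ↦ ?_
    obtain ⟨q, rfl⟩ := h.evalEquiv.surjective v
    have hq : Finsupp.single 0 u + Finsupp.lmapDomain _ k Nat.succ q = 0 := by
      refine h.evalEquiv.injective ?_
      rw [map_zero, ← huv, addMulRight_apply]
      change evalRight j x _ = _ + evalRight j x q * _
      rw [map_add, evalRight_single, pow_zero, mul_one, evalRight_mapDomain_succ]
    have hu : u = 0 := by
      simpa [Finsupp.mapDomain_of_notMem_range] using DFunLike.congr_fun hq 0
    have hq' : q = 0 := by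
      ext i
      simpa [hu, Finsupp.mapDomain_apply Nat.succ_injective] using DFunLike.congr_fun hq (i + 1)
    simp [hu, hq']
  · intro w
    obtain ⟨q, rfl⟩ := h.evalEquiv.surjective w
    change evalRight j x q ∈ LinearMap.range (addMulRight j x)
    induction q using Finsupp.induction_linear with
    | zero => simp
    | add q q' hq hq' => simpa using add_mem hq hq'
    | single i u =>
      rw [evalRight_single]
      cases i with
      | zero => exact ⟨(u, 0), by simp [addMulRight_apply]⟩
      | succ i =>
        exact ⟨(0, envMap j u * ι k x ^ i),
          by rw [addMulRight_apply, map_zero, zero_add, mul_assoc, pow_succ]⟩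

variable {D : LieDerivation k K K} {D' : LieDerivation k K' K'}

theorem envDerivation_envMap (hD : ∀ a, D' (j a) = j (D a)) (u : UniversalEnvelopingAlgebra k K) :
    envDerivation D' (envMap j u) = envMap j (envDerivation D u) := by
  suffices LinearMap.eqLocus (envDerivation D' ∘ₗ (envMap j).toLinearMap)
      ((envMap j).toLinearMap ∘ₗ envDerivation D) = ⊤ from
    LinearMap.mem_eqLocus.mp (this ▸ Submodule.mem_top (x := u))
  refine eq_top_of_ι_mul_mem (by simp) fun a u hu ↦ ?_
  have hu : envDerivation D' (envMap j u) = envMap j (envDerivation D u) := hu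
  change envDerivation D' (envMap j (ι k a * u)) = envMap j (envDerivation D (ι k a * u))
  simp only [map_mul, envMap_ι, envDerivation_mul, envDerivation_ι, hD, hu, map_add]

theorem IsLineExtension.addMulRight_mem_eigenspace_iff (h : IsLineExtension j x δ p c)
    (hD : ∀ a, D' (j a) = j (D a)) {l : k} (hx : D' x = l • x) (n : k)
    (u : UniversalEnvelopingAlgebra k K × UniversalEnvelopingAlgebra k K') :
    addMulRight j x u ∈ (envDerivation D').eigenspace n ↔
      u ∈ ((envDerivation D).eigenspace n).prod ((envDerivation D').eigenspace (n - l)) := by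
  have apply_eq : envDerivation D' (addMulRight j x u) =
      addMulRight j x (envDerivation D u.1, envDerivation D' u.2 + l • u.2) := by
    simp only [addMulRight_apply, map_add, envDerivation_envMap hD, envDerivation_mul,
      envDerivation_ι, hx, map_smul, mul_smul_comm, smul_mul_assoc, add_mul]
  rw [End.mem_eigenspace_iff, apply_eq, ← map_smul, h.bijective_addMulRight.1.eq_iff, Prod.ext_iff,
    Submodule.mem_prod, End.mem_eigenspace_iff, End.mem_eigenspace_iff, sub_smul,
    eq_sub_iff_add_eq]
  rfl

theorem IsLineExtension.finrank_eigenspace (h : IsLineExtension j x δ p c)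
    (hD : ∀ a, D' (j a) = j (D a)) {l : k} (hx : D' x = l • x) (n : k)
    [FiniteDimensional k ((envDerivation D').eigenspace n)] :
    FiniteDimensional k ((envDerivation D).eigenspace n) ∧
      finrank k ((envDerivation D').eigenspace n) =
        finrank k ((envDerivation D).eigenspace n) +
          finrank k ((envDerivation D').eigenspace (n - l)) := by
  let E := (envDerivation D).eigenspace n
  let E' := (envDerivation D').eigenspace (n - l)
  have mem_iff := h.addMulRight_mem_eigenspace_iff hD hx n
  let Φ : (E × E') ≃ₗ[k] (envDerivation D').eigenspace n := .ofBijective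
    ((addMulRight j x ∘ₗ E.subtype.prodMap E'.subtype).codRestrict _
      fun u ↦ (mem_iff _).mpr ⟨u.1.2, u.2.2⟩)
    ⟨fun u v huv ↦ by
      simpa [Prod.ext_iff] using h.bijective_addMulRight.1 (congrArg Subtype.val huv),
    fun ⟨w, hw⟩ ↦ by
      obtain ⟨u, rfl⟩ := h.bijective_addMulRight.2 w
      exact ⟨(⟨u.1, ((mem_iff u).mp hw).1⟩, ⟨u.2, ((mem_iff u).mp hw).2⟩), rfl⟩⟩
  have : FiniteDimensional k (E × E') := Φ.symm.finiteDimensional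
  have finE : FiniteDimensional k E := .of_injective (LinearMap.inl k E E') LinearMap.inl_injective
  have finE' : FiniteDimensional k E' :=
    .of_injective (LinearMap.inr k E E') LinearMap.inr_injective
  exact ⟨finE, by rw [← Φ.finrank_eq, finrank_prod]⟩

end LineExtension

/-- The sum of the eigenspaces of `T` for the eigenvalues in `ℕ` greater than `N`. -/
def eigenspacesAbove {k M : Type*} [Field k] [AddCommGroup M] [Module k M] (T : End k M) (N : ℕ) :
    Submodule k M :=
  ⨆ i : ℕ, ⨆ _ : N < i, T.eigenspace i

theorem eigenspace_le_eigenspacesAbove {k M : Type*} [Field k] [AddCommGroup M] [Module k M]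
    (T : End k M) {N i : ℕ} (hi : N < i) : T.eigenspace i ≤ eigenspacesAbove T N :=
  le_iSup₂_of_le i hi le_rfl

theorem eigenspacesAbove_eq_sup {k M : Type*} [Field k] [AddCommGroup M] [Module k M]
    (T : End k M) (N : ℕ) :
    eigenspacesAbove T N = eigenspacesAbove T (N + 1) ⊔ T.eigenspace (N + 1 : ℕ) := by
  refine le_antisymm (iSup₂_le fun i hi ↦ ?_) (sup_le (iSup₂_le fun i hi ↦ ?_) ?_)
  · obtain rfl | hi := (Nat.succ_le_of_lt hi).eq_or_lt
    · exact le_sup_right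
    · exact (eigenspace_le_eigenspacesAbove T hi).trans le_sup_left
  · exact eigenspace_le_eigenspacesAbove T (by lia)
  · exact eigenspace_le_eigenspacesAbove T (by lia)

section Positive

variable {k K : Type*} [Field k] [LieRing K] [LieAlgebra k K]

instance : Nontrivial (UniversalEnvelopingAlgebra k K) :=
  (lift k (0 : K →ₗ⁅k⁆ k)).toRingHom.domain_nontrivial

variable {D : LieDerivation k K K} {N : ℕ}

theorem span_one_sup_eigenspacesAbove_envDerivation
    (hD : eigenspacesAbove D.toLinearMap N = ⊤) :
    Submodule.span k {1} ⊔ eigenspacesAbove (envDerivation D) N = ⊤ := by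
  have ι_mem {i : ℕ} {a : K} (ha : a ∈ End.eigenspace D.toLinearMap i) :
      ι k a ∈ (envDerivation D).eigenspace i := by
    rw [End.mem_eigenspace_iff] at ha ⊢
    rw [envDerivation_ι, show D a = (i : k) • a from ha, map_smul]
  refine eq_top_of_ι_mul_mem (Submodule.mem_sup_left (Submodule.mem_span_singleton_self 1))
    fun a u hu ↦ Submodule.mem_sup_right ?_
  have ha : a ∈ eigenspacesAbove D.toLinearMap N := hD ▸ Submodule.mem_top
  suffices eigenspacesAbove D.toLinearMap N ≤
      ((eigenspacesAbove (envDerivation D) N).comap (LinearMap.mulRight k u)).comap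
        (ι k : K →ₗ⁅k⁆ UniversalEnvelopingAlgebra k K).toLinearMap from this ha
  refine iSup₂_le fun i hi b hb ↦ ?_
  suffices Submodule.span k {1} ⊔ eigenspacesAbove (envDerivation D) N ≤
      (eigenspacesAbove (envDerivation D) N).comap (LinearMap.mulLeft k (ι k b)) from this hu
  refine sup_le ((Submodule.span_singleton_le_iff_mem _ _).mpr ?_) (iSup₂_le fun j hj v hv ↦ ?_)
  · simpa [-ι_apply] using eigenspace_le_eigenspacesAbove _ hi (ι_mem hb)
  · refine eigenspace_le_eigenspacesAbove _ (i := i + j) (by lia) ?_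
    push_cast
    exact mul_mem_eigenspace_envDerivation (ι_mem hb) hv

variable [CharZero k]

theorem disjoint_eigenspace_eigenspacesAbove {M : Type*} [AddCommGroup M] [Module k M]
    (T : End k M) {N : ℕ} {n : ℤ} (hn : n ≤ N) :
    Disjoint (T.eigenspace n) (eigenspacesAbove T N) :=
  (T.eigenspaces_iSupIndep n).mono_right <| iSup₂_le fun i hi ↦
    le_iSup₂_of_le (i : k) (by exact_mod_cast (show (i : ℤ) ≠ n by lia)) le_rfl

theorem mem_of_mem_eigenspacesAbove_sup {M : Type*} [AddCommGroup M] [Module k M] {T : End k M}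
    {N : ℕ} {n : ℤ} (hn : n ≤ N) {P : Submodule k M} (hP : P ≤ T.eigenspace n) {u : M}
    (hu : u ∈ T.eigenspace n) (hmem : u ∈ eigenspacesAbove T N ⊔ P) : u ∈ P := by
  obtain ⟨w, hw, v, hv, rfl⟩ := Submodule.mem_sup.mp hmem
  have hw' : w ∈ T.eigenspace n := by simpa using sub_mem hu (hP hv)
  have disj := disjoint_eigenspace_eigenspacesAbove T hn
  rwa [Submodule.disjoint_def.mp disj w hw' hw, zero_add]

theorem eigenspace_envDerivation_zero (hD : eigenspacesAbove D.toLinearMap N = ⊤) :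
    (envDerivation D).eigenspace 0 = Submodule.span k {1} := by
  refine le_antisymm (fun u hu ↦ ?_) (by simp [Submodule.span_le])
  refine mem_of_mem_eigenspacesAbove_sup (T := envDerivation D) (N := N) (n := 0) (by lia)
    (by simp [Submodule.span_le]) (by simpa using hu) ?_
  rw [sup_comm, span_one_sup_eigenspacesAbove_envDerivation hD]
  exact Submodule.mem_top

theorem eigenspace_envDerivation_eq_bot (hD : eigenspacesAbove D.toLinearMap N = ⊤) {n : ℤ}
    (hn : n ≤ N) (hn₀ : n ≠ 0) : (envDerivation D).eigenspace n = ⊥ := by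
  have indep := (envDerivation D).eigenspaces_iSupIndep n
  rw [← disjoint_top, ← span_one_sup_eigenspacesAbove_envDerivation hD,
    ← eigenspace_envDerivation_zero hD]
  exact indep.mono_right <| sup_le (le_iSup₂_of_le 0 (by exact_mod_cast hn₀.symm) le_rfl) <|
    iSup₂_le fun i hi ↦ le_iSup₂_of_le (i : k) (by exact_mod_cast (show (i : ℤ) ≠ n by lia)) le_rfl

theorem finrank_eigenspace_envDerivation_of_le (hD : eigenspacesAbove D.toLinearMap N = ⊤) {n : ℕ}
    (hn : n ≤ N) : finrank k ((envDerivation D).eigenspace n) = if n = 0 then 1 else 0 := by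
  split_ifs with hn₀
  · rw [hn₀, Nat.cast_zero, eigenspace_envDerivation_zero hD, finrank_span_singleton one_ne_zero]
  · have := eigenspace_envDerivation_eq_bot hD (n := n) (by lia) (by lia)
    rw [Int.cast_natCast] at this
    rw [this, finrank_bot]

end Positive

section HilbertSeries

open PowerSeries

/-- The Hilbert series of the enveloping algebra graded by the eigenvalues in `ℕ` of the
derivation which extends `D`. -/
def envHilbertSeries {k K : Type*} [Field k] [LieRing K] [LieAlgebra k K]
    (D : LieDerivation k K K) : ℤ⟦X⟧ :=
  PowerSeries.mk fun n ↦ (finrank k ((envDerivation D).eigenspace n) : ℤ)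

variable {k K K' : Type*} [Field k] [CharZero k] [LieRing K] [LieAlgebra k K] [LieRing K']
  [LieAlgebra k K'] {j : K →ₗ⁅k⁆ K'} {x : K'} {δ : LieDerivation k K K} {p : K' →ₗ[k] K}
  {c : K' →ₗ[k] k} {D : LieDerivation k K K} {D' : LieDerivation k K' K'}

theorem IsLineExtension.envHilbertSeries_mul (h : IsLineExtension j x δ p c)
    (hD : ∀ a, D' (j a) = j (D a)) {l : ℕ} (hx : D' x = (l : k) • x)
    (hD' : eigenspacesAbove D'.toLinearMap 0 = ⊤)
    [∀ n : ℕ, FiniteDimensional k ((envDerivation D').eigenspace n)] :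
    envHilbertSeries D' * (1 - X ^ l) = envHilbertSeries D := by
  ext n
  have finrank_eq := (h.finrank_eigenspace hD hx n).2
  rw [mul_sub, mul_one, map_sub, PowerSeries.coeff_mul_X_pow', envHilbertSeries, envHilbertSeries,
    PowerSeries.coeff_mk, PowerSeries.coeff_mk, PowerSeries.coeff_mk, finrank_eq]
  split_ifs with hl
  · rw [← Nat.cast_sub hl, Nat.cast_add, add_sub_cancel_right]
  · have := eigenspace_envDerivation_eq_bot hD' (n := n - l) (by lia) (by lia)
    push_cast at this
    rw [this, finrank_bot, add_zero, sub_zero]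

end HilbertSeries

section UpperSubalgebra

variable {k L : Type*} [Field k] [LieRing L] [LieAlgebra k L]

/-- The restriction of a derivation to a stable Lie subalgebra. -/
def restrictDerivation (D : LieDerivation k L L) (K : LieSubalgebra k L)
    (hK : ∀ a ∈ K, D a ∈ K) : LieDerivation k K K where
  toLinearMap := D.toLinearMap.restrict hK
  leibniz' a b := Subtype.ext <| D.apply_lie_eq_sub (a : L) b

variable {D : LieDerivation k L L} {N : ℕ}

theorem lie_mem_eigenspacesAbove_succ {a b : L} (ha : a ∈ eigenspacesAbove D.toLinearMap N)
    (hb : b ∈ eigenspacesAbove D.toLinearMap N) :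
    ⁅a, b⁆ ∈ eigenspacesAbove D.toLinearMap (N + 1) := by
  suffices eigenspacesAbove D.toLinearMap N ≤
      (eigenspacesAbove D.toLinearMap (N + 1)).comap (LieModule.toEnd k L L a) from this hb
  refine iSup₂_le fun j hj b hb ↦ ?_
  suffices eigenspacesAbove D.toLinearMap N ≤ (eigenspacesAbove D.toLinearMap (N + 1)).comap
      ((LieModule.toEnd k L L : L →ₗ[k] End k L).flip b) from this ha
  refine iSup₂_le fun i hi a ha ↦ eigenspace_le_eigenspacesAbove _ (i := i + j) (by lia) ?_
  rw [End.mem_eigenspace_iff] at ha hb ⊢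
  change D a = _ at ha
  change D b = _ at hb
  change D ⁅a, b⁆ = _ • ⁅a, b⁆
  rw [D.apply_lie_eq_add, ha, hb, lie_smul, smul_lie, ← add_smul, Nat.cast_add, add_comm]

theorem exists_lieSubalgebra_of_le_eigenspacesAbove {P : Submodule k L}
    (hP : eigenspacesAbove D.toLinearMap (N + 1) ≤ P) (hP' : P ≤ eigenspacesAbove D.toLinearMap N) :
    ∃ K : LieSubalgebra k L, K.toSubmodule = P :=
  ⟨{ P with lie_mem' ha hb := hP (lie_mem_eigenspacesAbove_succ (hP' ha) (hP' hb)) }, rfl⟩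

theorem apply_mem_of_le_eigenspacesAbove {P : Submodule k L}
    (hP : eigenspacesAbove D.toLinearMap (N + 1) ≤ P) (hP' : P ≤ eigenspacesAbove D.toLinearMap N)
    {a : L} (ha : a ∈ P) : D a ∈ P := by
  have ha' := hP' ha
  rw [eigenspacesAbove_eq_sup] at ha'
  obtain ⟨b, hb, c, hc, rfl⟩ := Submodule.mem_sup.mp ha'
  have hcP : c ∈ P := by simpa using P.sub_mem ha (hP hb)
  have hDb : eigenspacesAbove D.toLinearMap (N + 1) ≤
      (eigenspacesAbove D.toLinearMap (N + 1)).comap D.toLinearMap :=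
    iSup₂_le fun i hi x hx ↦ by
      rw [Submodule.mem_comap, End.mem_eigenspace_iff.mp hx]
      exact Submodule.smul_mem _ _ (eigenspace_le_eigenspacesAbove _ hi hx)
  rw [map_add]
  refine P.add_mem (hP (hDb hb)) ?_
  rw [show D c = ((N + 1 : ℕ) : k) • c from End.mem_eigenspace_iff.mp hc]
  exact P.smul_mem _ hcP

theorem eigenspacesAbove_restrictDerivation_eq_top {K : LieSubalgebra k L}
    (hK : eigenspacesAbove D.toLinearMap (N + 1) ≤ K.toSubmodule)
    (hK' : K.toSubmodule ≤ eigenspacesAbove D.toLinearMap N) (hDK : ∀ a ∈ K, D a ∈ K) :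
    eigenspacesAbove (restrictDerivation D K hDK).toLinearMap N = ⊤ := by
  let P := (eigenspacesAbove (restrictDerivation D K hDK).toLinearMap N).map K.toSubmodule.subtype
  have mem_P {i : ℕ} (hi : N < i) {a : L} (ha : a ∈ K) (ha' : a ∈ End.eigenspace D.toLinearMap i) :
      a ∈ P :=
    ⟨⟨a, ha⟩, eigenspace_le_eigenspacesAbove _ hi <| End.mem_eigenspace_iff.mpr <|
      Subtype.ext <| End.mem_eigenspace_iff.mp ha', rfl⟩
  have above_le : eigenspacesAbove D.toLinearMap (N + 1) ≤ P := iSup₂_le fun i hi a ha ↦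
    mem_P (by lia) (hK (eigenspace_le_eigenspacesAbove _ hi ha)) ha
  refine eq_top_iff.mpr fun ⟨a, ha⟩ _ ↦ ?_
  suffices a ∈ P by
    obtain ⟨b, hb, rfl⟩ := this
    exact hb
  have ha' := hK' ha
  rw [eigenspacesAbove_eq_sup] at ha'
  obtain ⟨b, hb, c, hc, rfl⟩ := Submodule.mem_sup.mp ha'
  exact P.add_mem (above_le hb)
    (mem_P N.lt_succ_self (by simpa using K.toSubmodule.sub_mem ha (hK hb)) hc)

theorem exists_isLineExtension {K K' : LieSubalgebra k L} (hle : K ≤ K') {x : L} (hx : x ∈ K')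
    (hxK : x ∉ K) (hK' : K'.toSubmodule ≤ K.toSubmodule ⊔ Submodule.span k {x})
    (lie_mem : ∀ a ∈ K, ⁅x, a⁆ ∈ K) :
    ∃ (δ : LieDerivation k K K) (p : K' →ₗ[k] K) (c : K' →ₗ[k] k),
      IsLineExtension (LieSubalgebra.inclusion hle) ⟨x, hx⟩ δ p c := by
  obtain ⟨f, hfx, hfK⟩ := Submodule.exists_le_ker_of_notMem (p := K.toSubmodule) hxK
  have f_eq_zero {a : L} (ha : a ∈ K) : f a = 0 := LinearMap.mem_ker.mp (hfK ha)
  let c : L →ₗ[k] k := (f x)⁻¹ • f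
  have hcx : c x = 1 := by simp [c, hfx]
  have hcK {a : L} (ha : a ∈ K) : c a = 0 := by simp [c, f_eq_zero ha]
  have hp (y : K') : (y : L) - c y • x ∈ K := by
    obtain ⟨a, ha, b, hb, hy⟩ := Submodule.mem_sup.mp (hK' y.2)
    obtain ⟨r, rfl⟩ := Submodule.mem_span_singleton.mp hb
    simpa [← hy, hcK ha, hcx] using ha
  let δ : LieDerivation k K K :=
    { toLinearMap := (LieModule.toEnd k L L x).restrict lie_mem
      leibniz' a b := Subtype.ext <| by
        change ⁅x, ⁅(a : L), (b : L)⁆⁆ = ⁅(a : L), ⁅x, (b : L)⁆⁆ - ⁅(b : L), ⁅x, (a : L)⁆⁆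
        rw [leibniz_lie, ← lie_skew _ (b : L)]
        abel }
  exact ⟨δ, ((LinearMap.id - c.smulRight x) ∘ₗ K'.toSubmodule.subtype).codRestrict K.toSubmodule hp,
    c ∘ₗ K'.toSubmodule.subtype,
    { lie_apply a := rfl
      apply_add_smul y := Subtype.ext (sub_add_cancel _ _)
      left_inv a := by
        refine Subtype.ext ?_
        change (a : L) - c a • x = a
        rw [hcK a.2, zero_smul, sub_zero]
      coord_apply a := hcK a.2
      coord_self := hcx }⟩

/-- The Hilbert series of the enveloping algebra of a `D`-stable Lie subalgebra. -/
def subalgebraHilbertSeries (D : LieDerivation k L L) (K : LieSubalgebra k L)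
    (hK : ∀ a ∈ K, D a ∈ K) : PowerSeries ℤ := envHilbertSeries (restrictDerivation D K hK)

/-- The graded pieces of the enveloping algebra of `K` in degrees `n : ℕ` are finite-dimensional. -/
def HasFiniteEnvPieces (D : LieDerivation k L L) (K : LieSubalgebra k L)
    (hK : ∀ a ∈ K, D a ∈ K) : Prop :=
  ∀ n : ℕ, FiniteDimensional k ((envDerivation (restrictDerivation D K hK)).eigenspace n)

open PowerSeries

variable [CharZero k] {K K' : LieSubalgebra k L} {hDK : ∀ a ∈ K, D a ∈ K}
  {hDK' : ∀ a ∈ K', D a ∈ K'}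

theorem subalgebraHilbertSeries_mul_of_line (hle : K ≤ K')
    (hK : eigenspacesAbove D.toLinearMap (N + 1) ≤ K.toSubmodule)
    (hK' : K'.toSubmodule ≤ eigenspacesAbove D.toLinearMap N) {x : L}
    (hxN : x ∈ End.eigenspace D.toLinearMap (N + 1 : ℕ)) (hx : x ∈ K') (hxK : x ∉ K)
    (hK'x : K'.toSubmodule ≤ K.toSubmodule ⊔ Submodule.span k {x})
    (fin : HasFiniteEnvPieces D K' hDK') :
    HasFiniteEnvPieces D K hDK ∧
      subalgebraHilbertSeries D K' hDK' * (1 - X ^ (N + 1)) = subalgebraHilbertSeries D K hDK := by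
  obtain ⟨δ, p, c, h⟩ := exists_isLineExtension hle hx hxK hK'x fun a ha ↦
    hK (lie_mem_eigenspacesAbove_succ (hK' hx) (hK' (hle ha)))
  have hDx : restrictDerivation D K' hDK' ⟨x, hx⟩ = ((N + 1 : ℕ) : k) • ⟨x, hx⟩ :=
    Subtype.ext (End.mem_eigenspace_iff.mp hxN)
  have comm (a : K) : restrictDerivation D K' hDK' (LieSubalgebra.inclusion hle a) =
      LieSubalgebra.inclusion hle (restrictDerivation D K hDK a) := rfl
  have top := eigenspacesAbove_restrictDerivation_eq_top
    (hK.trans fun a ha ↦ hle ha) hK' hDK'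
  have top₀ : eigenspacesAbove (restrictDerivation D K' hDK').toLinearMap 0 = ⊤ :=
    top_unique <| top.ge.trans <| iSup₂_le fun i hi ↦ eigenspace_le_eigenspacesAbove _ (by lia)
  have (n : ℕ) := fin n
  exact ⟨fun n ↦ (h.finrank_eigenspace comm hDx n).1, h.envHilbertSeries_mul comm hDx top₀⟩

theorem subalgebraHilbertSeries_mul_of_linearIndependent {d : ℕ} {v : Fin d → L}
    (hv : LinearIndependent k v) (hvN : ∀ i, v i ∈ End.eigenspace D.toLinearMap (N + 1 : ℕ))
    (hK : K.toSubmodule = eigenspacesAbove D.toLinearMap (N + 1))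
    (hK' : K'.toSubmodule =
      eigenspacesAbove D.toLinearMap (N + 1) ⊔ Submodule.span k (Set.range v))
    (fin : HasFiniteEnvPieces D K' hDK') :
    HasFiniteEnvPieces D K hDK ∧ subalgebraHilbertSeries D K' hDK' * (1 - X ^ (N + 1)) ^ d =
      subalgebraHilbertSeries D K hDK := by
  induction d generalizing K' with
  | zero =>
    obtain rfl : K = K' := LieSubalgebra.toSubmodule_injective (by simp [hK, hK'])
    exact ⟨fin, by rw [pow_zero, mul_one]⟩
  | succ d ih =>
    obtain ⟨hv₀, hlast⟩ := linearIndependent_finSucc'.mp hv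
    let P := Submodule.span k (Set.range fun i : Fin d ↦ v i.castSucc)
    have hP : P ≤ End.eigenspace D.toLinearMap (N + 1 : ℕ) :=
      Submodule.span_le.mpr (Set.range_subset_iff.mpr fun i ↦ hvN i.castSucc)
    have hspan : Submodule.span k (Set.range v) = P ⊔ Submodule.span k {v (Fin.last d)} := by
      rw [← Fin.snoc_init_self v, Fin.range_snoc, Submodule.span_insert, sup_comm]
      simp [P, Fin.init_def]
    have hle (Q) (hQ : Q ≤ End.eigenspace D.toLinearMap (N + 1 : ℕ)) :
        eigenspacesAbove D.toLinearMap (N + 1) ⊔ Q ≤ eigenspacesAbove D.toLinearMap N := by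
      rw [eigenspacesAbove_eq_sup _ N]
      exact sup_le_sup_left hQ _
    obtain ⟨K₁, hK₁⟩ := exists_lieSubalgebra_of_le_eigenspacesAbove
      (P := eigenspacesAbove D.toLinearMap (N + 1) ⊔ P) le_sup_left (hle P hP)
    have hDK₁ (a) (ha : a ∈ K₁.toSubmodule) : D a ∈ K₁.toSubmodule := by
      rw [hK₁] at ha ⊢
      exact apply_mem_of_le_eigenspacesAbove le_sup_left (hle P hP) ha
    have hlast' : v (Fin.last d) ∉ K₁.toSubmodule := fun hmem ↦ hlast <|
      mem_of_mem_eigenspacesAbove_sup (n := (N + 1 : ℕ)) le_rfl (by exact_mod_cast hP)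
        (by exact_mod_cast hvN _) (hK₁ ▸ hmem)
    obtain ⟨fin₁, hH₁⟩ := subalgebraHilbertSeries_mul_of_line (K := K₁) (hDK := hDK₁)
      (show K₁.toSubmodule ≤ K'.toSubmodule by
        rw [hK₁, hK', hspan]; exact sup_le_sup_left le_sup_left _)
      (hK₁.symm ▸ le_sup_left)
      (hK' ▸ hle _ (Submodule.span_le.mpr (Set.range_subset_iff.mpr hvN))) (hvN _)
      (show v (Fin.last d) ∈ K'.toSubmodule from hK' ▸ Submodule.mem_sup_right
        (Submodule.subset_span (Set.mem_range_self _))) hlast'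
      (by rw [hK', hK₁, hspan, sup_assoc]) fin
    obtain ⟨fin₂, hH₂⟩ := ih hv₀ (fun i ↦ hvN i.castSucc) hK₁ fin₁
    exact ⟨fin₂, by rw [← hH₂, ← hH₁, pow_succ', mul_assoc]⟩

theorem subalgebraHilbertSeries_mul_of_finiteDimensional
    [FiniteDimensional k (End.eigenspace D.toLinearMap ((N + 1 : ℕ) : k))]
    (hK : K.toSubmodule = eigenspacesAbove D.toLinearMap (N + 1))
    (hK' : K'.toSubmodule = eigenspacesAbove D.toLinearMap N)
    (fin : HasFiniteEnvPieces D K' hDK') :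
    HasFiniteEnvPieces D K hDK ∧ subalgebraHilbertSeries D K' hDK' *
      (1 - X ^ (N + 1)) ^ finrank k (End.eigenspace D.toLinearMap ((N + 1 : ℕ) : k)) =
        subalgebraHilbertSeries D K hDK := by
  let b := finBasis k (End.eigenspace D.toLinearMap ((N + 1 : ℕ) : k))
  have hspan : Submodule.span k (Set.range fun i ↦ (b i : L)) =
      End.eigenspace D.toLinearMap ((N + 1 : ℕ) : k) := by
    have := congrArg (Submodule.map (Submodule.subtype _)) b.span_eq
    rwa [Submodule.map_span, Submodule.map_subtype_top, ← Set.range_comp] at this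
  exact subalgebraHilbertSeries_mul_of_linearIndependent
    (b.linearIndependent.map' _ (Submodule.ker_subtype _)) (fun i ↦ (b i).2) hK
    (hK'.trans <| (eigenspacesAbove_eq_sup _ N).trans <| congrArg _ hspan.symm) fin

theorem exists_subalgebraHilbertSeries_mul_prod
    [∀ n : ℕ, FiniteDimensional k (End.eigenspace D.toLinearMap (n : k))]
    (hK : K.toSubmodule = eigenspacesAbove D.toLinearMap 0) (fin : HasFiniteEnvPieces D K hDK)
    (N : ℕ) : ∃ (K' : LieSubalgebra k L) (hDK' : ∀ a ∈ K', D a ∈ K'),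
      K'.toSubmodule = eigenspacesAbove D.toLinearMap N ∧ HasFiniteEnvPieces D K' hDK' ∧
      subalgebraHilbertSeries D K hDK * ∏ l ∈ Finset.range N,
        (1 - X ^ (l + 1)) ^ finrank k (End.eigenspace D.toLinearMap ((l + 1 : ℕ) : k)) =
          subalgebraHilbertSeries D K' hDK' := by
  induction N with
  | zero => exact ⟨K, hDK, hK, fin, by rw [Finset.prod_range_zero, mul_one]⟩
  | succ N ih =>
    obtain ⟨K₁, hDK₁, hK₁, fin₁, hH₁⟩ := ih
    have hle : eigenspacesAbove D.toLinearMap (N + 1) ≤ eigenspacesAbove D.toLinearMap N :=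
      (eigenspacesAbove_eq_sup D.toLinearMap N).symm ▸ le_sup_left
    obtain ⟨K₂, hK₂⟩ := exists_lieSubalgebra_of_le_eigenspacesAbove le_rfl hle
    have hDK₂ (a) (ha : a ∈ K₂.toSubmodule) : D a ∈ K₂.toSubmodule := by
      rw [hK₂] at ha ⊢
      exact apply_mem_of_le_eigenspacesAbove le_rfl hle ha
    obtain ⟨fin₂, hH₂⟩ :=
      subalgebraHilbertSeries_mul_of_finiteDimensional (hDK := hDK₂) hK₂ hK₁ fin₁
    exact ⟨K₂, hDK₂, hK₂, fin₂, by rw [Finset.prod_range_succ, ← mul_assoc, hH₁, hH₂]⟩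

/-- The graded form of the Poincaré–Birkhoff–Witt theorem, modulo `X ^ (N + 1)`. -/
theorem coeff_subalgebraHilbertSeries_mul_prod
    [∀ n : ℕ, FiniteDimensional k (End.eigenspace D.toLinearMap (n : k))]
    (hK : K.toSubmodule = eigenspacesAbove D.toLinearMap 0) (fin : HasFiniteEnvPieces D K hDK)
    {n : ℕ} (hn : n ≤ N) : coeff n (subalgebraHilbertSeries D K hDK * ∏ l ∈ Finset.range N,
        (1 - X ^ (l + 1)) ^ finrank k (End.eigenspace D.toLinearMap ((l + 1 : ℕ) : k))) =
      if n = 0 then 1 else 0 := by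
  obtain ⟨K', hDK', hK', -, hH⟩ := exists_subalgebraHilbertSeries_mul_prod hK fin N
  have top := eigenspacesAbove_restrictDerivation_eq_top
    (hK' ▸ (eigenspacesAbove_eq_sup D.toLinearMap N).symm ▸ le_sup_left) hK'.le hDK'
  rw [hH, subalgebraHilbertSeries, envHilbertSeries, coeff_mk,
    finrank_eigenspace_envDerivation_of_le top hn]
  split_ifs <;> rfl

end UpperSubalgebra

end EnvelopingAlgebra

/-! ### Newton's identities -/

section PowerSeries

open PowerSeries Finset

section LogDerivative

variable {R : Type*} [CommRing R]

/-- `S` is the negative of the logarithmic derivative `X f' / f`. -/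
def HasNegLogDeriv (f S : R⟦X⟧) : Prop := X * d⁄dX R f = -(S * f)

theorem HasNegLogDeriv.mul {f g S T : R⟦X⟧} (hf : HasNegLogDeriv f S) (hg : HasNegLogDeriv g T) :
    HasNegLogDeriv (f * g) (S + T) := by
  rw [HasNegLogDeriv] at *
  rw [Derivation.leibniz, smul_eq_mul, smul_eq_mul]
  linear_combination g * hf + f * hg

theorem HasNegLogDeriv.one : HasNegLogDeriv (1 : R⟦X⟧) 0 := by
  simp [HasNegLogDeriv]

theorem HasNegLogDeriv.pow {f S : R⟦X⟧} (hf : HasNegLogDeriv f S) (n : ℕ) :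
    HasNegLogDeriv (f ^ n) (n • S) := by
  induction n with
  | zero => simpa using HasNegLogDeriv.one
  | succ n ih => rw [pow_succ, succ_nsmul]; exact ih.mul hf

theorem HasNegLogDeriv.prod {ι : Type*} {s : Finset ι} {f S : ι → R⟦X⟧}
    (h : ∀ i ∈ s, HasNegLogDeriv (f i) (S i)) :
    HasNegLogDeriv (∏ i ∈ s, f i) (∑ i ∈ s, S i) := by
  classical
  induction s using Finset.induction_on with
  | empty => simpa using HasNegLogDeriv.one
  | insert i s hi ih =>
    rw [prod_insert hi, sum_insert hi]
    exact (h i (mem_insert_self i s)).mul (ih fun j hj ↦ h j (mem_insert_of_mem hj))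

theorem hasNegLogDeriv_one_sub_X_pow {l : ℕ} (hl : l ≠ 0) :
    HasNegLogDeriv (1 - X ^ l : R⟦X⟧)
      (PowerSeries.mk fun n ↦ if l ∣ n ∧ n ≠ 0 then (l : R) else 0) := by
  have hX : X * d⁄dX R (1 - X ^ l) = -(l • X ^ l) := by
    rw [map_sub, Derivation.map_one_eq_zero, zero_sub, derivative_pow, derivative_X, mul_one,
      mul_neg, mul_left_comm, mul_pow_sub_one hl, nsmul_eq_mul]
  rw [HasNegLogDeriv, hX, mul_sub, mul_one, neg_inj]
  ext n
  rw [map_nsmul, map_sub, coeff_mul_X_pow', coeff_X_pow, coeff_mk]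
  obtain hn | rfl | hn := lt_trichotomy n l
  · have (hn₀ : n ≠ 0) : ¬ l ∣ n := Nat.not_dvd_of_pos_of_lt (Nat.pos_of_ne_zero hn₀) hn
    grind
  · simp [hl]
  · simp [Nat.dvd_sub_self_right, hn.ne', hn.le, hn.not_ge, Nat.sub_ne_zero_of_lt hn,
      (Nat.zero_lt_of_lt hn).ne']

theorem HasNegLogDeriv.coeff_mul {f S : R⟦X⟧} (h : HasNegLogDeriv f S) (n : ℕ) :
    n * coeff n f = -∑ p ∈ antidiagonal n, coeff p.1 S * coeff p.2 f := by
  rw [← PowerSeries.coeff_mul, ← map_neg, ← h]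
  cases n with
  | zero => simp
  | succ n => rw [coeff_succ_X_mul, coeff_derivative]; push_cast; ring

end LogDerivative

theorem eq_of_prod_one_sub_X_pow {d : ℕ → ℕ}
    (h : X ^ 9 ∣ ∏ l ∈ range 8, (1 - X ^ (l + 1) : ℤ⟦X⟧) ^ d (l + 1) - (1 - 4 • X + 11 • X ^ 4)) :
    d 1 = 4 ∧ d 2 = 6 ∧ d 3 = 20 ∧ d 4 = 49 ∧ d 5 = 160 ∧ d 6 = 494 ∧ d 7 = 1636 ∧
      d 8 = 5410 := by
  let c (n : ℕ) : ℤ := if n = 0 then 1 else if n = 1 then -4 else if n = 4 then 11 else 0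
  let σ (n : ℕ) : ℤ := ∑ l ∈ range 8, d (l + 1) * if l + 1 ∣ n ∧ n ≠ 0 then ((l + 1 : ℕ) : ℤ) else 0
  have coeff_prod {n : ℕ} (hn : n < 9) :
      coeff n (∏ l ∈ range 8, (1 - X ^ (l + 1) : ℤ⟦X⟧) ^ d (l + 1)) = c n := by
    rw [sub_eq_zero.mp ((map_sub _ _ _).symm.trans (X_pow_dvd_iff.mp h n hn)), map_add, map_sub,
      map_nsmul, map_nsmul, coeff_one, coeff_X, coeff_X_pow]
    interval_cases n <;> rfl
  have newton {n : ℕ} (hn : n < 9) : n * c n = -∑ p ∈ antidiagonal n, σ p.1 * c p.2 := by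
    have := (HasNegLogDeriv.prod (s := range 8) fun l _ ↦
      (hasNegLogDeriv_one_sub_X_pow (R := ℤ) l.succ_ne_zero).pow (d (l + 1))).coeff_mul n
    rw [coeff_prod hn] at this
    rw [this, neg_inj]
    refine sum_congr rfl fun p hp ↦ ?_
    rw [coeff_prod (by have := mem_antidiagonal.mp hp; lia), map_sum]
    simp only [map_nsmul, coeff_mk, σ]
    simp only [nsmul_eq_mul, Nat.succ_eq_add_one]
  simp only [σ, c, sum_range_succ, sum_range_zero] at newton
  have newton_one := @newton 1
  have newton_two := @newton 2
  have newton_three := @newton 3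
  have newton_four := @newton 4
  have newton_five := @newton 5
  have newton_six := @newton 6
  have newton_seven := @newton 7
  have newton_eight := @newton 8
  simp [Nat.antidiagonal_succ] at newton_one newton_two newton_three newton_four
  simp [Nat.antidiagonal_succ] at newton_five newton_six newton_seven newton_eight
  lia

end PowerSeries

/-! ### The Chevalley–Serre presentation -/

section Presentation

variable {B L L' : Type*} [LieRing L] [LieRing L']
  {A : Matrix B B ℤ} {h e f : B → L}

/-- The families `h`, `e`, `f` satisfy the Chevalley relations for `A`, but possibly not the Serre
relations. -/
structure IsChevalley (A : Matrix B B ℤ) (h e f : B → L) : Prop where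
  lie_h_h (i j : B) : ⁅h i, h j⁆ = 0
  lie_e_f (i : B) : ⁅e i, f i⁆ = h i
  lie_e_f_of_ne {i j : B} : i ≠ j → ⁅e i, f j⁆ = 0
  lie_h_e (i j : B) : ⁅h i, e j⁆ = A i j • e j
  lie_h_f (i j : B) : ⁅h i, f j⁆ = -(A i j • f j)

theorem IsChevalley.opposite (r : IsChevalley A h e f) : IsChevalley A (-h) f e where
  lie_h_h i j := by simp [r.lie_h_h]
  lie_e_f i := by rw [← lie_skew, r.lie_e_f]; rfl
  lie_e_f_of_ne hij := by rw [← lie_skew, r.lie_e_f_of_ne hij.symm, neg_zero]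
  lie_h_e i j := by simp [r.lie_h_f]
  lie_h_f i j := by simp [r.lie_h_e]

variable [LieAlgebra ℚ L] [LieAlgebra ℚ L']

/-- The element of a Lie algebra which vanishes by the Serre relation between `x i` and `x j`. -/
def serreElement (A : Matrix B B ℤ) (x : B → L) (i j : B) : L :=
  (LieAlgebra.ad ℚ L (x i) ^ (-A i j).toNat) ⁅x i, x j⁆

/-- The families `h`, `e`, `f` satisfy the Chevalley–Serre relations for `A`. -/
structure IsChevalleySerre (A : Matrix B B ℤ) (h e f : B → L) : Prop
    extends IsChevalley A h e f where
  serre_e (i j : B) : serreElement A e i j = 0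
  serre_f (i j : B) : serreElement A f i j = 0

theorem map_serreElement (φ : L →ₗ⁅ℚ⁆ L') (x : B → L) (i j : B) :
    φ (serreElement A x i j) = serreElement A (φ ∘ x) i j := by
  simp only [serreElement, Function.comp_apply, ← LieHom.map_lie]
  generalize ⁅x i, x j⁆ = y
  induction (-A i j).toNat generalizing y with
  | zero => rfl
  | succ n ih => rw [pow_succ, pow_succ, Module.End.mul_apply, Module.End.mul_apply, ih]; simp

theorem serreElement_self (hA : ∀ i, A i i = 2) (x : B → L) (i : B) : serreElement A x i i = 0 := by
  simp [serreElement, hA]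

theorem serreElement_neg (hA : ∀ i j, i ≠ j → A i j = -3) (x : B → L) {i j : B} (hij : i ≠ j) :
    serreElement A x i j = ⁅x i, ⁅x i, ⁅x i, ⁅x i, x j⁆⁆⁆⁆ := by
  simp [serreElement, hA i j hij, pow_succ]

theorem IsChevalley.map (r : IsChevalley A h e f) (φ : L →ₗ⁅ℚ⁆ L') :
    IsChevalley A (φ ∘ h) (φ ∘ e) (φ ∘ f) where
  lie_h_h i j := by simp [← LieHom.map_lie, r.lie_h_h]
  lie_e_f i := by simp [← LieHom.map_lie, r.lie_e_f]
  lie_e_f_of_ne hij := by simp [← LieHom.map_lie, r.lie_e_f_of_ne hij]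
  lie_h_e i j := by simp [← LieHom.map_lie, r.lie_h_e]
  lie_h_f i j := by simp [← LieHom.map_lie, r.lie_h_f]

theorem IsChevalley.isChevalleySerre_map (r : IsChevalley A h e f) (φ : L →ₗ⁅ℚ⁆ L')
    (he : ∀ i j, φ (serreElement A e i j) = 0) (hf : ∀ i j, φ (serreElement A f i j) = 0) :
    IsChevalleySerre A (φ ∘ h) (φ ∘ e) (φ ∘ f) where
  toIsChevalley := r.map φ
  serre_e i j := by rw [← map_serreElement, he]
  serre_f i j := by rw [← map_serreElement, hf]

theorem IsChevalleySerre.comp_equiv (r : IsChevalleySerre A h e f) (σ : B ≃ B)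
    (hσ : ∀ i j, A (σ i) (σ j) = A i j) :
    IsChevalleySerre A (h ∘ σ) (e ∘ σ) (f ∘ σ) where
  lie_h_h i j := r.lie_h_h _ _
  lie_e_f i := r.lie_e_f _
  lie_e_f_of_ne hij := r.lie_e_f_of_ne (σ.injective.ne hij)
  lie_h_e i j := by simpa [hσ] using r.lie_h_e (σ i) (σ j)
  lie_h_f i j := by simpa [hσ] using r.lie_h_f (σ i) (σ j)
  serre_e i j := by simpa [serreElement, hσ] using r.serre_e (σ i) (σ j)
  serre_f i j := by simpa [serreElement, hσ] using r.serre_f (σ i) (σ j)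

theorem IsChevalleySerre.opposite (r : IsChevalleySerre A h e f) :
    IsChevalleySerre A (-h) f e where
  toIsChevalley := r.toIsChevalley.opposite
  serre_e := r.serre_f
  serre_f := r.serre_e

theorem IsChevalley.lie_h_ad_e_pow (r : IsChevalley A h e f) (k i j : B) (n : ℕ) :
    ⁅h k, (LieAlgebra.ad ℚ L (e i) ^ n) (e j)⁆ =
      (n * A k i + A k j) • (LieAlgebra.ad ℚ L (e i) ^ n) (e j) := by
  induction n with
  | zero => simp [r.lie_h_e]
  | succ n ih =>
    rw [pow_succ', Module.End.mul_apply, LieAlgebra.ad_apply, leibniz_lie, ih, r.lie_h_e, lie_zsmul,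
      zsmul_lie, ← add_smul]
    push_cast
    ring_nf

theorem IsChevalley.lie_f_ad_e_pow_succ (r : IsChevalley A h e f) {i j : B} (hii : A i i = 2)
    (hij : i ≠ j) (n : ℕ) :
    ⁅f i, (LieAlgebra.ad ℚ L (e i) ^ (n + 1)) (e j)⁆ =
      (-(n + 1) * (n + A i j)) • (LieAlgebra.ad ℚ L (e i) ^ n) (e j) := by
  have hfe : ⁅f i, e i⁆ = -h i := r.opposite.lie_e_f i
  induction n with
  | zero => simp [leibniz_lie (f i), hfe, r.opposite.lie_e_f_of_ne hij, r.lie_h_e]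
  | succ n ih =>
    rw [pow_succ', Module.End.mul_apply, LieAlgebra.ad_apply, leibniz_lie, ih, hfe, neg_lie,
      r.lie_h_ad_e_pow, lie_zsmul, hii, ← LieAlgebra.ad_apply ℚ L (e i),
      ← Module.End.mul_apply, ← pow_succ', ← neg_smul, ← add_smul]
    push_cast
    ring_nf

theorem IsChevalley.lie_f_ad_e_pow_of_ne (r : IsChevalley A h e f) {i k : B} (hik : i ≠ k) (y : L)
    (n : ℕ) :
    ⁅f k, (LieAlgebra.ad ℚ L (e i) ^ n) y⁆ = (LieAlgebra.ad ℚ L (e i) ^ n) ⁅f k, y⁆ := by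
  induction n generalizing y with
  | zero => rfl
  | succ n ih =>
    rw [pow_succ, Module.End.mul_apply, Module.End.mul_apply, ih, LieAlgebra.ad_apply,
      leibniz_lie (f k), r.opposite.lie_e_f_of_ne hik.symm, zero_lie, zero_add,
      LieAlgebra.ad_apply]

theorem IsChevalley.lie_f_serreElement_e (hA : IsGCM A) (r : IsChevalley A h e f) {i j : B}
    (hij : i ≠ j) (k : B) : ⁅f k, serreElement A e i j⁆ = 0 := by
  obtain ⟨hA₂, hA₁, hA₀⟩ := hA
  have hpow : serreElement A e i j = (LieAlgebra.ad ℚ L (e i) ^ ((-A i j).toNat + 1)) (e j) := by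
    rw [pow_succ, Module.End.mul_apply, LieAlgebra.ad_apply, serreElement]
  rcases eq_or_ne i k with rfl | hik
  · have hm : ((-A i j).toNat : ℤ) + A i j = 0 := by have := hA₁ i j hij; lia
    rw [hpow, r.lie_f_ad_e_pow_succ (hA₂ i) hij, hm, mul_zero, zero_smul]
  rw [serreElement, r.lie_f_ad_e_pow_of_ne hik, leibniz_lie, r.opposite.lie_e_f_of_ne hik.symm,
    zero_lie, zero_add]
  rcases eq_or_ne k j with rfl | hkj
  · rw [r.opposite.lie_e_f, Pi.neg_apply, lie_neg, ← lie_skew, neg_neg, r.lie_h_e]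
    rcases eq_or_ne (A i k) 0 with h0 | h0
    · rw [(hA₀ i k).mp h0, zero_smul, map_zero]
    · obtain ⟨m, hm⟩ : ∃ m, (-A i k).toNat = m + 1 :=
        Nat.exists_eq_succ_of_ne_zero (by have := hA₁ i k hij; lia)
      rw [hm, pow_succ, Module.End.mul_apply]
      simp
  · rw [r.opposite.lie_e_f_of_ne hkj, lie_zero, map_zero]

variable [DecidableEq B]

/-- The projection of the free Lie algebra onto the Lie algebra of a Cartan matrix. -/
def kmProj (A : Matrix B B ℤ) :
    FreeLieAlgebra ℚ (Generators B) →ₗ⁅ℚ⁆ Matrix.ToLieAlgebra ℚ A where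
  toFun x := LieSubmodule.Quotient.mk (N := Relations.toIdeal ℚ A) x
  map_add' _ _ := rfl
  map_smul' _ _ := rfl
  map_lie' := rfl

theorem kmProj_surjective (A : Matrix B B ℤ) : Function.Surjective (kmProj A) :=
  fun x ↦ Quotient.inductionOn' x fun y ↦ ⟨y, rfl⟩

theorem kmProj_of (x : Generators B) : kmProj A (FreeLieAlgebra.of ℚ x) = KMgen A x := rfl

theorem kmProj_eq_zero {x : FreeLieAlgebra ℚ (Generators B)} (hx : x ∈ Relations.toSet ℚ A) :
    kmProj A x = 0 :=
  (LieSubmodule.Quotient.mk_eq_zero' (N := Relations.toIdeal ℚ A)).2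
    (LieSubmodule.subset_lieSpan hx)

theorem isChevalleySerre_gH_gE_gF (A : Matrix B B ℤ) :
    IsChevalleySerre A (gH A) (gE A) (gF A) where
  lie_h_h i j := by
    have := kmProj_eq_zero (A := A) (x := Relations.HH ℚ (i, j)) (by simp [Relations.toSet])
    simpa [Relations.HH, kmProj_of, gH] using this
  lie_e_f i := by
    have := kmProj_eq_zero (A := A) (x := Relations.EF ℚ (i, i)) (by simp [Relations.toSet])
    simpa [Relations.EF, kmProj_of, gH, gE, gF, sub_eq_zero] using this
  lie_e_f_of_ne {i j} hij := by
    have := kmProj_eq_zero (A := A) (x := Relations.EF ℚ (i, j)) (by simp [Relations.toSet])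
    simpa [Relations.EF, kmProj_of, gE, gF, hij] using this
  lie_h_e i j := by
    have := kmProj_eq_zero (A := A) (x := Relations.HE ℚ A (i, j)) (by simp [Relations.toSet])
    simpa [Relations.HE, kmProj_of, gH, gE, sub_eq_zero] using this
  lie_h_f i j := by
    have := kmProj_eq_zero (A := A) (x := Relations.HF ℚ A (i, j)) (by simp [Relations.toSet])
    simpa [Relations.HF, kmProj_of, gH, gF, ← eq_neg_iff_add_eq_zero] using this
  serre_e i j := by
    have := kmProj_eq_zero (A := A) (x := Relations.adE ℚ A (i, j)) (by simp [Relations.toSet])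
    exact (map_serreElement (kmProj A) (FreeLieAlgebra.of ℚ ∘ Generators.E) i j).symm.trans this
  serre_f i j := by
    have := kmProj_eq_zero (A := A) (x := Relations.adF ℚ A (i, j)) (by simp [Relations.toSet])
    exact (map_serreElement (kmProj A) (FreeLieAlgebra.of ℚ ∘ Generators.F) i j).symm.trans this

/-- The values on generators of the homomorphism `kmLift`. -/
def generatorMap (h e f : B → L) : Generators B → L
  | .H i => h i
  | .E i => e i
  | .F i => f i

theorem IsChevalleySerre.toIdeal_le_ker (r : IsChevalleySerre A h e f) :
    Relations.toIdeal ℚ A ≤ (FreeLieAlgebra.lift ℚ (generatorMap h e f)).ker := by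
  refine LieSubmodule.lieSpan_le.mpr ?_
  rintro x (((((⟨⟨i, j⟩, rfl⟩ | ⟨⟨i, j⟩, rfl⟩) | ⟨⟨i, j⟩, rfl⟩) | ⟨⟨i, j⟩, rfl⟩) | ⟨⟨i, j⟩, rfl⟩) |
    ⟨⟨i, j⟩, rfl⟩)
  · simp [Relations.HH, generatorMap, r.lie_h_h]
  · rcases eq_or_ne i j with rfl | hij
    · simp [Relations.EF, generatorMap, r.lie_e_f]
    · simp [Relations.EF, generatorMap, hij, r.lie_e_f_of_ne hij]
  · simp [Relations.HE, generatorMap, r.lie_h_e]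
  · simp [Relations.HF, generatorMap, r.lie_h_f]
  · refine (map_serreElement _ (FreeLieAlgebra.of ℚ ∘ Generators.E) i j).trans ?_
    convert r.serre_e i j using 2
    ext k
    simp [generatorMap]
  · refine (map_serreElement _ (FreeLieAlgebra.of ℚ ∘ Generators.F) i j).trans ?_
    convert r.serre_f i j using 2
    ext k
    simp [generatorMap]

/-- The homomorphism from the Lie algebra of a Cartan matrix determined by a family satisfying the
Chevalley–Serre relations. -/
def kmLift (r : IsChevalleySerre A h e f) : Matrix.ToLieAlgebra ℚ A →ₗ⁅ℚ⁆ L :=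
  let φ : Matrix.ToLieAlgebra ℚ A →ₗ[ℚ] L := (Relations.toIdeal ℚ A).toSubmodule.liftQ
    (FreeLieAlgebra.lift ℚ (generatorMap h e f)).toLinearMap r.toIdeal_le_ker
  have hφ (x) : φ (kmProj A x) = FreeLieAlgebra.lift ℚ (generatorMap h e f) x := rfl
  { φ with
    map_lie' {x y} := by
      obtain ⟨x, rfl⟩ := kmProj_surjective A x
      obtain ⟨y, rfl⟩ := kmProj_surjective A y
      change φ ⁅kmProj A x, kmProj A y⁆ = ⁅φ (kmProj A x), φ (kmProj A y)⁆
      rw [← LieHom.map_lie, hφ, hφ, hφ, LieHom.map_lie] }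

theorem kmLift_KMgen (r : IsChevalleySerre A h e f) (x : Generators B) :
    kmLift r (KMgen A x) = generatorMap h e f x :=
  FreeLieAlgebra.lift_of_apply ..

@[simp]
theorem kmLift_gH (r : IsChevalleySerre A h e f) (i : B) : kmLift r (gH A i) = h i :=
  kmLift_KMgen r _

@[simp]
theorem kmLift_gE (r : IsChevalleySerre A h e f) (i : B) : kmLift r (gE A i) = e i :=
  kmLift_KMgen r _

@[simp]
theorem kmLift_gF (r : IsChevalleySerre A h e f) (i : B) : kmLift r (gF A i) = f i :=
  kmLift_KMgen r _

theorem lieSpan_range_KMgen (A : Matrix B B ℤ) :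
    LieSubalgebra.lieSpan ℚ _ (Set.range (KMgen A)) = ⊤ := by
  set S := LieSubalgebra.lieSpan ℚ (Matrix.ToLieAlgebra ℚ A) (Set.range (KMgen A))
  let g : FreeLieAlgebra ℚ (Generators B) →ₗ⁅ℚ⁆ S :=
    FreeLieAlgebra.lift ℚ fun x ↦ ⟨KMgen A x, LieSubalgebra.subset_lieSpan ⟨x, rfl⟩⟩
  have hg : S.incl.comp g = kmProj A := by
    ext x
    simp [g, kmProj_of]
  refine eq_top_iff.mpr fun x _ ↦ ?_
  obtain ⟨y, rfl⟩ := kmProj_surjective A x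
  rw [← hg]
  exact (g y).2

end Presentation

/-! ### Operators on free algebras -/

section EigenspaceDecomposition

variable {K M : Type*} [Field K] [AddCommGroup M] [Module K M] {f : End K M}

theorem mem_of_sum_eigenvectors_mem {P : Submodule K M} (hP : ∀ m ∈ P, f m ∈ P) {s : Finset K}
    {v : K → M} (hv : ∀ c ∈ s, v c ∈ f.eigenspace c) (hs : ∑ c ∈ s, v c ∈ P) :
    ∀ c ∈ s, v c ∈ P := by
  classical
  induction s using Finset.induction_on generalizing v with
  | empty => simp
  | insert a s ha ih =>
    have hmem : ∀ c ∈ s, v c ∈ P := fun c hc ↦ by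
      have hca : c - a ≠ 0 := sub_ne_zero.mpr (ne_of_mem_of_not_mem hc ha)
      refine (P.smul_mem_iff hca).mp <| ih (v := fun c ↦ (c - a) • v c)
        (fun c hc ↦ (f.eigenspace c).smul_mem _ (hv c (Finset.mem_insert_of_mem hc))) ?_ c hc
      have heq : ∑ c ∈ s, (c - a) • v c =
          f (∑ c ∈ insert a s, v c) - a • ∑ c ∈ insert a s, v c := by
        rw [map_sum, Finset.smul_sum, ← Finset.sum_sub_distrib, Finset.sum_insert ha,
          End.mem_eigenspace_iff.mp (hv a (Finset.mem_insert_self a s)), sub_self, zero_add]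
        refine Finset.sum_congr rfl fun c hc ↦ ?_
        rw [End.mem_eigenspace_iff.mp (hv c (Finset.mem_insert_of_mem hc)), sub_smul]
      rw [heq]
      exact P.sub_mem (hP _ hs) (P.smul_mem _ hs)
    rw [Finset.sum_insert ha] at hs
    exact Finset.forall_mem_insert _ _ _ |>.mpr
      ⟨(P.add_mem_iff_left (P.sum_mem hmem)).mp hs, hmem⟩

theorem le_iSup_inf_eigenspace {ι : Type*} {P : Submodule K M} (hP : ∀ m ∈ P, f m ∈ P) {c : ι → K}
    (h : P ≤ ⨆ i, f.eigenspace (c i)) : P ≤ ⨆ i, P ⊓ f.eigenspace (c i) := by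
  intro m hm
  let G (a : K) : Submodule K M := ⨆ (_ : a ∈ Set.range c), f.eigenspace a
  have hmG : m ∈ ⨆ a, G a := by
    refine (h.trans (iSup_le fun i ↦ ?_)) hm
    exact le_iSup₂_of_le (c i) ⟨i, rfl⟩ le_rfl
  obtain ⟨v, hv, rfl⟩ := (Submodule.mem_iSup_iff_exists_finsupp _ _).mp hmG
  have hvf (a : K) : v a ∈ f.eigenspace a := (iSup_le fun _ ↦ le_rfl : G a ≤ _) (hv a)
  refine Submodule.sum_mem _ fun a ha ↦ ?_
  by_cases har : a ∈ Set.range c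
  · obtain ⟨i, rfl⟩ := har
    exact Submodule.mem_iSup_of_mem i
      ⟨mem_of_sum_eigenvectors_mem hP (fun a _ ↦ hvf a) hm _ ha, hvf _⟩
  · have hG : G a = ⊥ := iSup_neg har
    have hva : v a ∈ G a := hv a
    rw [hG, Submodule.mem_bot] at hva
    exact hva ▸ Submodule.zero_mem _

theorem iSup_inf_eigenspace_le {ι : Type*} {G : ι → Submodule K M} {c : ι → K}
    (hc : Function.Injective c) (hG : ∀ i, G i ≤ f.eigenspace (c i)) (i : ι) :
    (⨆ j, G j) ⊓ f.eigenspace (c i) ≤ G i := by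
  have hdisj : Disjoint (⨆ (j) (_ : j ≠ i), G j) (f.eigenspace (c i)) :=
    ((f.eigenspaces_iSupIndep.comp hc) i).symm.mono_left (iSup₂_mono fun j _ ↦ hG j)
  calc (⨆ j, G j) ⊓ f.eigenspace (c i)
      ≤ (G i ⊔ ⨆ (j) (_ : j ≠ i), G j) ⊓ f.eigenspace (c i) := by
        refine inf_le_inf_right _ (iSup_le fun j ↦ ?_)
        rcases eq_or_ne j i with rfl | hj
        · exact le_sup_left
        · exact le_sup_of_le_right (le_iSup₂_of_le j hj le_rfl)
    _ = G i := by rw [sup_inf_assoc_of_le _ (hG i), hdisj.eq_bot, sup_bot_eq]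

theorem eq_zero_of_mem_iSup_eigenspace {ι : Type*} {c : ι → K} {a : K} (ha : ∀ i, c i ≠ a) {m : M}
    (hm : m ∈ ⨆ i, f.eigenspace (c i)) (hma : m ∈ f.eigenspace a) : m = 0 := by
  have hle : ⨆ i, f.eigenspace (c i) ≤ ⨆ (b) (_ : b ≠ a), f.eigenspace b :=
    iSup_le fun i ↦ le_iSup₂_of_le (c i) (ha i) le_rfl
  exact (Submodule.disjoint_def.mp (f.eigenspaces_iSupIndep a)) m hma (hle hm)

end EigenspaceDecomposition

section FreeAlgebraOperators

open FreeAlgebra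

variable {K X : Type*} [CommRing K]

theorem top_mul_le {P Q : Submodule K (FreeAlgebra K X)} (hPQ : P ≤ Q)
    (hQ : ∀ i, ∀ q ∈ Q, ι K i * q ∈ Q) : ⊤ * P ≤ Q := by
  suffices ∀ t, ∀ q ∈ Q, t * q ∈ Q from
    Submodule.mul_le.mpr fun t _ p hp ↦ this t p (hPQ hp)
  intro t
  induction t using FreeAlgebra.induction with
  | grade0 c => exact fun q hq ↦ by simpa [Algebra.algebraMap_eq_smul_one] using Q.smul_mem c hq
  | grade1 i => exact hQ i
  | add s t hs ht => exact fun q hq ↦ by simpa [add_mul] using Q.add_mem (hs q hq) (ht q hq)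
  | mul s t hs ht => exact fun q hq ↦ by simpa [mul_assoc] using hs _ (ht q hq)

theorem eq_top_of_freeAlgebra_ι_mul_mem {Q : Submodule K (FreeAlgebra K X)} (one : 1 ∈ Q)
    (ι_mul : ∀ i, ∀ q ∈ Q, ι K i * q ∈ Q) : Q = ⊤ :=
  top_le_iff.mp <| (mul_one (⊤ : Submodule K (FreeAlgebra K X))).symm.trans_le <|
    top_mul_le (Submodule.one_le.mpr one) ι_mul

theorem end_freeAlgebra_ext {A A' : End K (FreeAlgebra K X)} (one : A 1 = A' 1)
    (lie : ∀ i : X, ⁅A, Algebra.lmul K _ (ι K i)⁆ = ⁅A', Algebra.lmul K _ (ι K i)⁆) : A = A' := by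
  suffices LinearMap.eqLocus A A' = ⊤ from LinearMap.eqLocus_eq_top.mp this
  refine eq_top_of_freeAlgebra_ι_mul_mem one fun i t ht ↦ ?_
  have := LinearMap.congr_fun (lie i) t
  simp only [Ring.lie_def, LinearMap.sub_apply, Module.End.mul_apply, Algebra.coe_lmul_eq_mul,
    LinearMap.mul_apply', LinearMap.mem_eqLocus.mp ht] at this
  simpa using this

/-- The lift to an algebra homomorphism of the operators `(s, t) ↦ (x_i s + C_i t, x_i t)`. -/
def twistedMul (C : X → End K (FreeAlgebra K X)) :
    FreeAlgebra K X →ₐ[K] End K (FreeAlgebra K X × FreeAlgebra K X) :=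
  FreeAlgebra.lift K fun i ↦
    ((Algebra.lmul K _ (ι K i)).coprod (C i)).prod (Algebra.lmul K _ (ι K i) ∘ₗ .snd K _ _)

/-- The operator on the free algebra which kills `1` and whose commutator with left multiplication
by the generator `ι i` is `C i`. -/
def extendOp (C : X → End K (FreeAlgebra K X)) : End K (FreeAlgebra K X) :=
  .fst K _ _ ∘ₗ (twistedMul C).toLinearMap.flip (0, 1)

variable (C : X → End K (FreeAlgebra K X))

@[simp]
theorem extendOp_one : extendOp C 1 = 0 := by
  simp [extendOp]

theorem twistedMul_apply_snd (t : FreeAlgebra K X) : (twistedMul C t (0, 1)).2 = t := by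
  suffices LinearMap.eqLocus (.snd K _ _ ∘ₗ (twistedMul C).toLinearMap.flip (0, 1)) .id = ⊤ from
    LinearMap.congr_fun (LinearMap.eqLocus_eq_top.mp this) t
  refine eq_top_of_freeAlgebra_ι_mul_mem (by simp) fun i t ht ↦ ?_
  simp only [LinearMap.mem_eqLocus, LinearMap.comp_apply, LinearMap.flip_apply,
    AlgHom.toLinearMap_apply, LinearMap.snd_apply, LinearMap.id_apply] at ht ⊢
  rw [map_mul, Module.End.mul_apply]
  nth_rewrite 1 [twistedMul]
  simp [ht]

theorem extendOp_ι_mul (i : X) (t : FreeAlgebra K X) :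
    extendOp C (ι K i * t) = ι K i * extendOp C t + C i t := by
  simp only [extendOp, LinearMap.comp_apply, LinearMap.flip_apply, AlgHom.toLinearMap_apply,
    map_mul, Module.End.mul_apply]
  nth_rewrite 1 [twistedMul]
  simp [twistedMul_apply_snd]

theorem lie_extendOp (i : X) : ⁅extendOp C, Algebra.lmul K _ (ι K i)⁆ = C i := by
  ext t
  simp [Ring.lie_def, extendOp_ι_mul]

/-- The derivation of the free algebra with the given values on the generators. -/
def freeDerivation (v : X → FreeAlgebra K X) : End K (FreeAlgebra K X) :=
  extendOp fun i ↦ Algebra.lmul K _ (v i)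

@[simp]
theorem freeDerivation_one (v : X → FreeAlgebra K X) : freeDerivation v 1 = 0 :=
  extendOp_one _

@[simp]
theorem freeDerivation_ι (v : X → FreeAlgebra K X) (i : X) : freeDerivation v (ι K i) = v i := by
  simpa [freeDerivation] using extendOp_ι_mul (fun i ↦ Algebra.lmul K _ (v i)) i 1

theorem freeDerivation_mul (v : X → FreeAlgebra K X) (s t : FreeAlgebra K X) :
    freeDerivation v (s * t) = freeDerivation v s * t + s * freeDerivation v t := by
  have hι (i : X) (t : FreeAlgebra K X) :
      freeDerivation v (ι K i * t) = ι K i * freeDerivation v t + v i * t :=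
    extendOp_ι_mul _ i t
  induction s using FreeAlgebra.induction generalizing t with
  | grade0 c => simp [Algebra.algebraMap_eq_smul_one]
  | grade1 i => rw [hι, freeDerivation_ι, add_comm]
  | add s s' hs hs' => rw [add_mul, map_add, hs, hs', map_add, add_mul, add_mul]; abel
  | mul s s' hs hs' => rw [mul_assoc, hs, hs', hs s']; noncomm_ring

@[simp]
theorem lie_freeDerivation (v : X → FreeAlgebra K X) (t : FreeAlgebra K X) :
    ⁅freeDerivation v, Algebra.lmul K _ t⁆ = Algebra.lmul K _ (freeDerivation v t) := by
  ext s
  simp [Ring.lie_def, freeDerivation_mul]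

@[simp]
theorem freeDerivation_zero : freeDerivation (0 : X → FreeAlgebra K X) = 0 :=
  end_freeAlgebra_ext (by simp) fun i ↦ by rw [lie_freeDerivation]; simp

theorem freeDerivation_lie_eq {u v w : X → FreeAlgebra K X}
    (h : ∀ i, freeDerivation v (w i) - freeDerivation w (v i) = u i) :
    ⁅freeDerivation v, freeDerivation w⁆ = freeDerivation u := by
  refine end_freeAlgebra_ext (by simp [Ring.lie_def]) fun i ↦ ?_
  rw [lie_lie, lie_freeDerivation, lie_freeDerivation, lie_freeDerivation, lie_freeDerivation,
    lie_freeDerivation, ← map_sub, freeDerivation_ι, freeDerivation_ι, freeDerivation_ι, h]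

theorem mul_le_comap_freeDerivation {v : X → FreeAlgebra K X}
    {P Q : Submodule K (FreeAlgebra K X)} (hP : P ≤ P.comap (freeDerivation v))
    (hQ : Q ≤ Q.comap (freeDerivation v)) : P * Q ≤ (P * Q).comap (freeDerivation v) := by
  refine Submodule.mul_le.mpr fun p hp q hq ↦ ?_
  rw [Submodule.mem_comap, freeDerivation_mul]
  exact add_mem (Submodule.mul_mem_mul (hP hp) hq) (Submodule.mul_mem_mul hp (hQ hq))

theorem freeDerivation_mul_mem_eigenspace {v : X → FreeAlgebra K X} {a b : K}
    {s t : FreeAlgebra K X} (hs : s ∈ (freeDerivation v).eigenspace a)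
    (ht : t ∈ (freeDerivation v).eigenspace b) : s * t ∈ (freeDerivation v).eigenspace (a + b) := by
  rw [End.mem_eigenspace_iff] at *
  rw [freeDerivation_mul, hs, ht, smul_mul_assoc, mul_smul_comm, add_smul]

end FreeAlgebraOperators

/-! ### Gradings by an inner derivation -/

section GradingElement

variable {K L M : Type*} [Field K] [LieRing L] [LieAlgebra K L] [AddCommGroup M] [Module K M]

/-- The grading of a Lie algebra by the integral eigenspaces of the adjoint action of an element. -/
def adGrading (K : Type*) {L : Type*} [Field K] [LieRing L] [LieAlgebra K L] (D : L) (k : ℤ) :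
    Submodule K L :=
  End.eigenspace (LieAlgebra.ad K L D) (k : K)

variable {D : L}

theorem mem_adGrading {k : ℤ} {x : L} : x ∈ adGrading K D k ↔ ⁅D, x⁆ = k • x := by
  rw [adGrading, End.mem_eigenspace_iff, LieAlgebra.ad_apply, Int.cast_smul_eq_zsmul]

theorem lie_mem_adGrading {i j : ℤ} {x y : L} (hx : x ∈ adGrading K D i)
    (hy : y ∈ adGrading K D j) : ⁅x, y⁆ ∈ adGrading K D (i + j) := by
  rw [mem_adGrading] at *
  rw [leibniz_lie, hx, hy, zsmul_lie, lie_zsmul, add_smul]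

/-- The successive subspaces obtained from `Q` by bracketing with `P`. -/
def bracketLadder (P Q : Submodule K L) (n : ℕ) : Submodule K L := (bracketSpan P)^[n] Q

theorem bracketLadder_succ (P Q : Submodule K L) (n : ℕ) :
    bracketLadder P Q (n + 1) = bracketSpan P (bracketLadder P Q n) :=
  Function.iterate_succ_apply' _ _ _

theorem bracketLadder_fg {P Q : Submodule K L} (hP : P.FG) (hQ : Q.FG) (n : ℕ) :
    (bracketLadder P Q n).FG := by
  induction n with
  | zero => exact hQ
  | succ n ih =>
    rw [bracketLadder_succ]
    exact hP.map₂ _ ih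

theorem bracketLadder_le_adGrading {P Q : Submodule K L} {i j : ℤ} (hP : P ≤ adGrading K D i)
    (hQ : Q ≤ adGrading K D j) (n : ℕ) : bracketLadder P Q n ≤ adGrading K D (n * i + j) := by
  induction n with
  | zero => simpa [bracketLadder] using hQ
  | succ n ih =>
    rw [bracketLadder_succ]
    refine bracketSpan_le.mpr fun x hx y hy ↦ ?_
    have := lie_mem_adGrading (hP hx) (ih hy)
    rwa [show i + (n * i + j) = (n + 1 : ℕ) * i + j by push_cast; ring] at this

theorem lie_mem_bracketLadder {P₀ P₁ : Submodule K L} (h : ∀ x ∈ P₀, ∀ y ∈ P₁, ⁅x, y⁆ ∈ P₁)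
    (n : ℕ) : ∀ x ∈ P₀, ∀ y ∈ bracketLadder P₁ P₁ n, ⁅x, y⁆ ∈ bracketLadder P₁ P₁ n := by
  intro x hx
  induction n with
  | zero => exact h x hx
  | succ n ih =>
    rw [bracketLadder_succ]
    suffices bracketSpan P₁ (bracketLadder P₁ P₁ n) ≤
        (bracketSpan P₁ (bracketLadder P₁ P₁ n)).comap (LieAlgebra.ad K L x) from this
    refine bracketSpan_le.mpr fun y hy z hz ↦ ?_
    rw [Submodule.mem_comap, LieAlgebra.ad_apply, leibniz_lie]
    exact add_mem (lie_mem_bracketSpan (h x hx y hy) hz) (lie_mem_bracketSpan hy (ih z hz))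

/-- Subspaces `Q`, `P₀`, `P` of degrees `-1`, `0`, `1` under the adjoint action of `D` which are
closed under brackets as far as these stay in degrees `-1`, `0`, `1`, and which generate `L`. -/
structure IsLocalGenerating (D : L) (Q P₀ P : Submodule K L) : Prop where
  left_le : Q ≤ adGrading K D (-1)
  mid_le : P₀ ≤ adGrading K D 0
  right_le : P ≤ adGrading K D 1
  lie_mid_mid : ∀ x ∈ P₀, ∀ y ∈ P₀, ⁅x, y⁆ ∈ P₀
  lie_mid_left : ∀ x ∈ P₀, ∀ y ∈ Q, ⁅x, y⁆ ∈ Q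
  lie_mid_right : ∀ x ∈ P₀, ∀ y ∈ P, ⁅x, y⁆ ∈ P
  lie_right_left : ∀ x ∈ P, ∀ y ∈ Q, ⁅x, y⁆ ∈ P₀
  lieSpan_eq_top : LieSubalgebra.lieSpan K L (Q ⊔ P₀ ⊔ P : Submodule K L) = ⊤

theorem lie_left_mem_ladder {Q P₀ P : Submodule K L}
    (lie_mid_right : ∀ x ∈ P₀, ∀ y ∈ P, ⁅x, y⁆ ∈ P) (lie_right_left : ∀ x ∈ P, ∀ y ∈ Q, ⁅x, y⁆ ∈ P₀)
    (n : ℕ) : ∀ x ∈ Q, ∀ y ∈ bracketLadder P P (n + 1), ⁅x, y⁆ ∈ bracketLadder P P n := by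
  intro x hx
  have hPQ : ∀ y ∈ P, ⁅x, y⁆ ∈ P₀ := fun y hy ↦ by
    rw [← lie_skew]
    exact neg_mem (lie_right_left y hy x hx)
  have step (n : ℕ) (h : ∀ z ∈ bracketLadder P P n, ∀ y ∈ P,
      ⁅y, ⁅x, z⁆⁆ ∈ bracketLadder P P n) :
      ∀ y ∈ bracketLadder P P (n + 1), ⁅x, y⁆ ∈ bracketLadder P P n := by
    rw [bracketLadder_succ]
    suffices bracketSpan P (bracketLadder P P n) ≤
        (bracketLadder P P n).comap (LieAlgebra.ad K L x) from this
    refine bracketSpan_le.mpr fun y hy z hz ↦ ?_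
    rw [Submodule.mem_comap, LieAlgebra.ad_apply, leibniz_lie]
    exact add_mem (lie_mem_bracketLadder lie_mid_right n _ (hPQ y hy) z hz) (h z hz y hy)
  induction n with
  | zero =>
    refine step 0 fun z hz y hy ↦ ?_
    rw [← lie_skew]
    exact neg_mem (lie_mid_right _ (hPQ z hz) y hy)
  | succ n ih =>
    refine step (n + 1) fun z hz y hy ↦ ?_
    rw [bracketLadder_succ]
    exact lie_mem_bracketSpan hy (ih z hz)

/-- The family of subspaces of `L` generated from those in degrees `-1`, `0`, `1`. -/
def localLadder (Q P₀ P : Submodule K L) : ℤ → Submodule K L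
  | .ofNat 0 => P₀
  | .ofNat (n + 1) => bracketLadder P P n
  | .negSucc n => bracketLadder Q Q n

namespace IsLocalGenerating

variable {Q P₀ P : Submodule K L}

theorem localLadder_le (h : IsLocalGenerating D Q P₀ P) (k : ℤ) :
    localLadder Q P₀ P k ≤ adGrading K D k := by
  rcases k with (_ | n) | n
  · exact h.mid_le
  · exact (bracketLadder_le_adGrading h.right_le h.right_le n).trans_eq (by simp)
  · refine (bracketLadder_le_adGrading h.left_le h.left_le n).trans_eq ?_
    rw [Int.negSucc_eq]
    congr 1
    ring

theorem lie_mem_iSup_localLadder (h : IsLocalGenerating D Q P₀ P) {x y : L}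
    (hx : x ∈ Q ⊔ P₀ ⊔ P) (hy : y ∈ ⨆ k, localLadder Q P₀ P k) :
    ⁅x, y⁆ ∈ ⨆ k, localLadder Q P₀ P k := by
  set U := ⨆ k, localLadder Q P₀ P k
  have mem (k : ℤ) {z : L} (hz : z ∈ localLadder Q P₀ P k) : z ∈ U := Submodule.mem_iSup_of_mem k hz
  have lie_left_right : ∀ z ∈ Q, ∀ y ∈ P, ⁅z, y⁆ ∈ P₀ := fun z hz y hy ↦ by
    rw [← lie_skew]
    exact neg_mem (h.lie_right_left y hy z hz)
  suffices U ≤ U.comap (LieAlgebra.ad K L x) from this hy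
  refine iSup_le fun k y hy ↦ ?_
  suffices Q ⊔ P₀ ⊔ P ≤ U.comap ((LieAlgebra.ad K L : L →ₗ[K] End K L).flip y) from this hx
  refine sup_le (sup_le (fun z hz ↦ ?_) (fun z hz ↦ ?_)) (fun z hz ↦ ?_) <;>
    change ⁅z, y⁆ ∈ U <;> rcases k with (_ | _ | n) | n
  · exact mem (-1) (by rw [← lie_skew]; exact neg_mem (h.lie_mid_left y hy z hz))
  · exact mem 0 (lie_left_right z hz y hy)
  · exact mem (.ofNat (n + 1)) (lie_left_mem_ladder h.lie_mid_right h.lie_right_left n z hz y hy)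
  · exact mem (.negSucc (n + 1)) ((bracketLadder_succ Q Q n).ge (lie_mem_bracketSpan hz hy))
  · exact mem 0 (h.lie_mid_mid z hz y hy)
  · exact mem 1 (h.lie_mid_right z hz y hy)
  · exact mem (.ofNat (n + 2)) (lie_mem_bracketLadder h.lie_mid_right (n + 1) z hz y hy)
  · exact mem (.negSucc n) (lie_mem_bracketLadder h.lie_mid_left n z hz y hy)
  · exact mem 1 (by rw [← lie_skew]; exact neg_mem (h.lie_mid_right y hy z hz))
  · exact mem 2 ((bracketLadder_succ P P 0).ge (lie_mem_bracketSpan hz hy))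
  · exact mem (.ofNat (n + 3)) ((bracketLadder_succ P P (n + 1)).ge (lie_mem_bracketSpan hz hy))
  · cases n with
    | zero => exact mem 0 (h.lie_right_left z hz y hy)
    | succ n =>
      exact mem (.negSucc n) (lie_left_mem_ladder h.lie_mid_left lie_left_right n z hz y hy)

theorem iSup_localLadder (h : IsLocalGenerating D Q P₀ P) : ⨆ k, localLadder Q P₀ P k = ⊤ := by
  set U := ⨆ k, localLadder Q P₀ P k
  have hQP : Q ⊔ P₀ ⊔ P ≤ U :=
    sup_le (sup_le (le_iSup_of_le (-1) le_rfl) (le_iSup_of_le 0 le_rfl)) (le_iSup_of_le 1 le_rfl)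
  let N : LieSubalgebra K L :=
    { U.compatibleMaps U |>.comap (LieAlgebra.ad K L : L →ₗ[K] End K L) with
      lie_mem' := fun {x y} hx hy z hz ↦ by
        change ⁅⁅x, y⁆, z⁆ ∈ U
        rw [lie_lie]
        exact sub_mem (hx (hy hz)) (hy (hx hz)) }
  have hN : N = ⊤ := top_le_iff.mp <| h.lieSpan_eq_top ▸ LieSubalgebra.lieSpan_le.mpr
    fun x hx y hy ↦ h.lie_mem_iSup_localLadder hx hy
  have lie_mem (x : L) {y : L} (hy : y ∈ U) : ⁅x, y⁆ ∈ U :=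
    (hN ▸ LieSubalgebra.mem_top x : x ∈ N) hy
  let U' : LieSubalgebra K L := { U with lie_mem' := fun {x _} _ hy ↦ lie_mem x hy }
  have hU' : U' = ⊤ := top_le_iff.mp <| h.lieSpan_eq_top ▸ LieSubalgebra.lieSpan_le.mpr hQP
  exact congrArg LieSubalgebra.toSubmodule hU'

variable [CharZero K]

theorem adGrading_eq (h : IsLocalGenerating D Q P₀ P) (k : ℤ) :
    adGrading K D k = localLadder Q P₀ P k := by
  refine le_antisymm ?_ (h.localLadder_le k)
  have := iSup_inf_eigenspace_le Int.cast_injective h.localLadder_le k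
  rwa [h.iSup_localLadder, top_inf_eq] at this

theorem isGeneratedGrading (h : IsLocalGenerating D Q P₀ P) :
    IsGeneratedGrading (adGrading K D) where
  lie_mem := lie_mem_adGrading
  succ_le n hn := by
    obtain ⟨n, rfl⟩ := Nat.exists_eq_succ_of_ne_zero hn
    rw [h.adGrading_eq 1, h.adGrading_eq, h.adGrading_eq]
    exact (bracketLadder_succ P P n).le
  neg_succ_le n hn := by
    obtain ⟨n, rfl⟩ := Nat.exists_eq_succ_of_ne_zero hn
    rw [h.adGrading_eq (-1), h.adGrading_eq, h.adGrading_eq]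
    exact (bracketLadder_succ Q Q n).le

theorem finiteDimensional_adGrading (h : IsLocalGenerating D Q P₀ P) (hQ : Q.FG) (hP₀ : P₀.FG)
    (hP : P.FG) (k : ℤ) : FiniteDimensional K (adGrading K D k) := by
  rw [h.adGrading_eq]
  refine Module.Finite.iff_fg.mpr ?_
  rcases k with (_ | n) | n
  exacts [hP₀, bracketLadder_fg hP hP n, bracketLadder_fg hQ hQ n]

end IsLocalGenerating

theorem apply_mem_eigenspace {φ : L →ₗ⁅K⁆ End K M} {i j k : ℤ} (hk : i + j = k) {x : L}
    (hx : x ∈ adGrading K D i) {m : M} (hm : m ∈ End.eigenspace (φ D) (j : K)) :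
    φ x m ∈ End.eigenspace (φ D) (k : K) := by
  rw [mem_adGrading] at hx
  rw [End.mem_eigenspace_iff] at hm ⊢
  have := LinearMap.congr_fun (LieHom.map_lie φ D x) m
  rw [hx, map_zsmul, Ring.lie_def, LinearMap.sub_apply, Module.End.mul_apply, Module.End.mul_apply,
    hm, map_smul, eq_sub_iff_add_eq, LinearMap.smul_apply, ← Int.cast_smul_eq_zsmul K,
    ← add_smul] at this
  rw [← this, ← hk, Int.cast_add]

section GeneratedModule

variable {φ : L →ₗ⁅K⁆ End K M} {c : ℤ} {R₀ : Submodule K M} [CharZero K]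
  (hR₀ : R₀ ≤ End.eigenspace (φ D) (c : K))
  (hgen : ∀ Q : Submodule K M, R₀ ≤ Q → (∀ x ∈ adGrading K D 1, ∀ m ∈ Q, φ x m ∈ Q) → Q = ⊤)
include hR₀ hgen

theorem eigenspace_eq_moduleLadder (n : ℕ) :
    End.eigenspace (φ D) ((n + c : ℤ) : K) =
      (Submodule.map₂ (φ : L →ₗ[K] End K M) (adGrading K D 1))^[n] R₀ ∧
    ⨆ n : ℕ, End.eigenspace (φ D) ((n + c : ℤ) : K) = ⊤ := by
  set G : ℕ → Submodule K M :=
    fun n ↦ (Submodule.map₂ (φ : L →ₗ[K] End K M) (adGrading K D 1))^[n] R₀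
  have hG (n : ℕ) : G (n + 1) = Submodule.map₂ (φ : L →ₗ[K] End K M) (adGrading K D 1) (G n) :=
    Function.iterate_succ_apply' _ _ _
  have hGle (n : ℕ) : G n ≤ End.eigenspace (φ D) ((n + c : ℤ) : K) := by
    induction n with
    | zero => simpa [G] using hR₀
    | succ n ih =>
      rw [hG]
      exact Submodule.map₂_le.mpr fun x hx m hm ↦
        apply_mem_eigenspace (by push_cast; ring) hx (ih hm)
  have hGtop : ⨆ n, G n = ⊤ := by
    refine hgen _ (le_iSup G 0) fun x hx ↦ ?_
    suffices ⨆ n, G n ≤ (⨆ n, G n).comap (φ x) from this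
    exact iSup_le fun n m hm ↦ Submodule.mem_iSup_of_mem (n + 1) <|
      (hG n).ge (Submodule.apply_mem_map₂ _ hx hm)
  have hinj : Function.Injective fun n : ℕ ↦ ((n + c : ℤ) : K) := fun m n h ↦ by simpa using h
  refine ⟨le_antisymm ?_ (hGle n), top_le_iff.mp (hGtop.ge.trans (iSup_mono hGle))⟩
  have := iSup_inf_eigenspace_le hinj hGle n
  rwa [hGtop, top_inf_eq] at this

theorem isGeneratedModule_eigenspace :
    IsGeneratedModule (adGrading K D) φ fun d ↦ End.eigenspace (φ D) ((d + c : ℤ) : K) where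
  apply_mem hx hm := apply_mem_eigenspace (by ring) hx hm
  eq_bot {d} hd := by
    refine (Submodule.eq_bot_iff _).mpr fun m hm ↦ eq_zero_of_mem_iSup_eigenspace (fun n ↦ ?_)
      ((eigenspace_eq_moduleLadder hR₀ hgen 0).2 ▸ Submodule.mem_top : m ∈ _) hm
    rw [Ne, Int.cast_inj]
    lia
  succ_le d := by
    have h := (eigenspace_eq_moduleLadder hR₀ hgen (d + 1)).1
    rw [Function.iterate_succ_apply', ← (eigenspace_eq_moduleLadder hR₀ hgen d).1] at h
    exact_mod_cast h.le

theorem eigenspace_le_of_generates : End.eigenspace (φ D) (c : K) ≤ R₀ := by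
  simpa using (eigenspace_eq_moduleLadder hR₀ hgen 0).1.le

end GeneratedModule

end GradingElement

section Lowering

variable {K M : Type*} [Field K] [CharZero K] [AddCommGroup M] [Module K M] {D F : End K M}

theorem eq_bot_of_lowering {P : Submodule K M} (hD : ∀ m ∈ P, D m ∈ P) (hF : ∀ m ∈ P, F m ∈ P)
    (hDF : ⁅D, F⁆ = -F) (hP : P ≤ ⨆ k : ℕ, D.eigenspace (k : K))
    (h : ∀ k : ℕ, ∀ m ∈ P, D m = (k : K) • m → F m = 0 → m = 0) : P = ⊥ := by
  have hDF_apply {c : K} {m : M} (hm : D m = c • m) : D (F m) = (c - 1) • F m := by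
    have := LinearMap.congr_fun hDF m
    rw [Ring.lie_def, LinearMap.sub_apply, Module.End.mul_apply, Module.End.mul_apply, hm,
      map_smul, LinearMap.neg_apply, sub_eq_iff_eq_add] at this
    rw [this, sub_smul, one_smul, neg_add_eq_sub]
  have eq_zero (k : ℕ) : ∀ m ∈ P, D m = (k : K) • m → m = 0 := by
    induction k with
    | zero =>
      refine fun m hm hDm ↦ h 0 m hm hDm <| eq_zero_of_mem_iSup_eigenspace (fun k ↦ ?_)
        (hP (hF m hm)) (End.mem_eigenspace_iff.mpr (hDF_apply hDm))
      rw [Nat.cast_zero, zero_sub, Ne, eq_neg_iff_add_eq_zero]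
      exact Nat.cast_add_one_ne_zero k
    | succ k ih =>
      exact fun m hm hDm ↦ h (k + 1) m hm hDm (ih (F m) (hF m hm) (by simpa using hDF_apply hDm))
  exact eq_bot_iff.mpr <| (le_iSup_inf_eigenspace hD hP).trans <| iSup_le fun k m hm ↦
    eq_zero k m hm.1 (End.mem_eigenspace_iff.mp hm.2)

end Lowering

/-! ### Products of homogeneous subspaces of a free algebra -/

section FreeAlgebraDisjointness

open FreeAlgebra

variable (K X : Type*) [Field K]

/-- The linear span of the generators of a free algebra. -/
def generatorSpan : Submodule K (FreeAlgebra K X) := Submodule.span K (Set.range (ι K))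

variable {K X}

theorem ι_mem_generatorSpan (i : X) : ι K i ∈ generatorSpan K X :=
  Submodule.subset_span ⟨i, rfl⟩

theorem mul_generatorSpan_le {P Q : Submodule K (FreeAlgebra K X)} :
    P * generatorSpan K X ≤ Q ↔ ∀ p ∈ P, ∀ i, p * ι K i ∈ Q := by
  refine ⟨fun h p hp i ↦ h (Submodule.mul_mem_mul hp (ι_mem_generatorSpan i)), fun h ↦ ?_⟩
  refine Submodule.mul_le.mpr fun p hp v hv ↦ ?_
  suffices generatorSpan K X ≤ Q.comap (LinearMap.mulLeft K p) from this hv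
  exact Submodule.span_le.mpr (Set.range_subset_iff.mpr fun i ↦ h p hp i)

theorem iSup_generatorSpan_pow : ⨆ n, generatorSpan K X ^ n = ⊤ := by
  refine eq_top_of_freeAlgebra_ι_mul_mem (Submodule.mem_iSup_of_mem 0 ?_) fun i t ht ↦ ?_
  · simp
  suffices ⨆ n, generatorSpan K X ^ n ≤
      (⨆ n, generatorSpan K X ^ n).comap (LinearMap.mulLeft K (ι K i)) from this ht
  refine iSup_le fun n t ht ↦ Submodule.mem_iSup_of_mem (n + 1) ?_
  rw [pow_succ']
  exact Submodule.mul_mem_mul (ι_mem_generatorSpan i) ht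

theorem linearIndependent_ι : LinearIndependent K (ι K : X → FreeAlgebra K X) := by
  have h : ι K = basisFreeMonoid K X ∘ FreeMonoid.of := by
    ext i : 1
    simp [basisFreeMonoid, equivMonoidAlgebraFreeMonoid, MonoidAlgebra.of]
  exact h ▸ (basisFreeMonoid K X).linearIndependent.comp _ FreeMonoid.of_injective

theorem finrank_generatorSpan [Fintype X] :
    finrank K (generatorSpan K X) = Fintype.card X :=
  finrank_span_eq_card linearIndependent_ι

instance finiteDimensional_generatorSpan_pow [Finite X] (n : ℕ) :
    FiniteDimensional K ↥(generatorSpan K X ^ n) :=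
  Module.Finite.iff_fg.mpr (.pow (Submodule.fg_span (Set.finite_range _)) n)

/-- The operator sending `t * ι i` to `t`, and `t * ι j` to `0` for `j ≠ i`. -/
def rightContraction [DecidableEq X] (i : X) : End K (FreeAlgebra K X) :=
  extendOp fun j ↦
    if j = i then Algebra.linearMap K _ ∘ₗ algebraMapInv.toLinearMap else 0

theorem rightContraction_mul_ι [DecidableEq X] (i j : X) (t : FreeAlgebra K X) :
    rightContraction i (t * ι K j) = if j = i then t else 0 := by
  suffices LinearMap.eqLocus (rightContraction i ∘ₗ LinearMap.mulRight K (ι K j))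
      (if j = i then .id else 0) = ⊤ by
    have := LinearMap.congr_fun (LinearMap.eqLocus_eq_top.mp this) t
    split_ifs at this ⊢ <;> exact this
  have h (k : X) (s : FreeAlgebra K X) : rightContraction i (ι K k * s) =
      ι K k * rightContraction i s + if k = i then algebraMap K _ (algebraMapInv s) else 0 := by
    rw [rightContraction, extendOp_ι_mul]
    split_ifs <;> rfl
  refine eq_top_of_freeAlgebra_ι_mul_mem ?_ fun k s hs ↦ ?_
  · have := h j 1
    split_ifs at this ⊢ <;> simpa [rightContraction] using this
  · have := h k (s * ι K j)
    split_ifs at hs this ⊢ <;> simp_all [mul_assoc, algebraMapInv]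

theorem exists_contraction [Finite X] (n : ℕ) (φ : Dual K (FreeAlgebra K X)) :
    ∃ c : End K (FreeAlgebra K X), ∀ t, ∀ w ∈ generatorSpan K X ^ n, c (t * w) = φ w • t := by
  classical
  have := Fintype.ofFinite X
  induction n generalizing φ with
  | zero =>
    refine ⟨φ 1 • .id, fun t w hw ↦ ?_⟩
    obtain ⟨a, rfl⟩ := Submodule.mem_one.mp (by simpa using hw)
    simp [Algebra.algebraMap_eq_smul_one, smul_smul]
  | succ n ih =>
    choose c hc using fun i ↦ ih (φ ∘ₗ LinearMap.mulRight K (ι K i))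
    refine ⟨∑ i, c i ∘ₗ rightContraction i, fun t ↦ ?_⟩
    suffices generatorSpan K X ^ (n + 1) ≤ LinearMap.eqLocus
        ((∑ i, c i ∘ₗ rightContraction i) ∘ₗ LinearMap.mulLeft K t) (φ.smulRight t) from
      fun w hw ↦ this hw
    rw [pow_succ]
    refine mul_generatorSpan_le.mpr fun u hu j ↦ ?_
    simp [LinearMap.mem_eqLocus, ← mul_assoc, rightContraction_mul_ι, apply_ite, hc j t u hu]

theorem linearDisjoint_of_le_generatorSpan_pow [Finite X] (P : Submodule K (FreeAlgebra K X))
    {Q : Submodule K (FreeAlgebra K X)} {n : ℕ} (hQ : Q ≤ generatorSpan K X ^ n) :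
    P.LinearDisjoint Q := by
  let b := Basis.ofVectorSpace K Q
  refine .of_basis_right' _ _ b <| (injective_iff_map_eq_zero _).mpr fun p hp ↦ ?_
  ext i : 2
  obtain ⟨φ, hφ⟩ := LinearMap.exists_extend (b.coord i)
  obtain ⟨c, hc⟩ := exists_contraction n φ
  have hcb (j) : c (p j * b j) = b.repr (b j) i • p j := by
    rw [hc _ _ (hQ (b j).2), ← Basis.coord_apply, ← hφ]
    rfl
  have hcp : c (p.sum fun j q ↦ q * b j) = p i := by
    classical
    simp only [Finsupp.sum, map_sum, hcb, b.repr_self, Finsupp.single_apply, ite_smul, one_smul,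
      zero_smul, Finset.sum_ite_eq', Finsupp.mem_support_iff, ne_eq, ite_not]
    split_ifs with h <;> simp [h]
  have hp' : (p.sum fun j q ↦ (q : FreeAlgebra K X) * b j) = 0 := hp
  rw [← hcp, hp', map_zero]
  rfl

theorem finrank_mul [Finite X] (P : Submodule K (FreeAlgebra K X))
    {Q : Submodule K (FreeAlgebra K X)} {n : ℕ} (hQ : Q ≤ generatorSpan K X ^ n) :
    finrank K ↥(P * Q) = finrank K P * finrank K Q := by
  rw [← (linearDisjoint_of_le_generatorSpan_pow P hQ).mulMap.finrank_eq,
    Module.finrank_tensorProduct]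

theorem finrank_generatorSpan_pow [Fintype X] (n : ℕ) :
    finrank K ↥(generatorSpan K X ^ n) = Fintype.card X ^ n := by
  induction n with
  | zero =>
    rw [pow_zero, pow_zero, Submodule.one_eq_span]
    exact finrank_span_singleton one_ne_zero
  | succ n ih => rw [pow_succ, finrank_mul _ (pow_one _).ge, ih, finrank_generatorSpan, pow_succ]

end FreeAlgebraDisjointness

/-! ### The action on the tensor algebra of the level one subspace -/

open FreeAlgebra

theorem isGCM_A2hyp : IsGCM A2hyp := by
  simp [IsGCM, A2hyp, Fin.forall_fin_two]

/-- The free algebra on the level one subspace of the Kac–Moody algebra, whose `k`-th generator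
stands for `(ad e₂)ᵏ e₁ / k!`. -/
abbrev T : Type := FreeAlgebra ℚ (Fin 4)

/-- The left multiplication operators of `T`. -/
def lmulT : T →ₐ[ℚ] End ℚ T := Algebra.lmul ℚ T

@[simp] theorem lmulT_apply (s t : T) : lmulT s t = s * t := rfl

/-- The degree operators of `T`: `opD 0` measures the level, and `opD 1` the other coordinate of
the weight. -/
def opD : Fin 2 → End ℚ T :=
  ![freeDerivation (ι ℚ), freeDerivation fun k ↦ (k : ℚ) • ι ℚ k]

/-- The action of the Cartan generators on `T`. -/
def opH (i : Fin 2) : End ℚ T := ∑ j, A2hyp i j • opD j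

/-- The action of the raising generators on `T`. -/
def opE : Fin 2 → End ℚ T :=
  ![lmulT (ι ℚ 0), freeDerivation ![ι ℚ 1, (2 : ℚ) • ι ℚ 2, (3 : ℚ) • ι ℚ 3, 0]]

/-- The action of the lowering generators on `T`. The commutator of `opF 0` with the generators is
dictated by the brackets of `f₁` with the level one subspace. -/
def opF : Fin 2 → End ℚ T :=
  ![extendOp ![-opH 0, (-3 : ℚ) • opE 1, 0, 0],
    freeDerivation ![0, (3 : ℚ) • ι ℚ 0, (2 : ℚ) • ι ℚ 1, ι ℚ 2]]

theorem opH_zero : opH 0 = (2 : ℚ) • opD 0 - (3 : ℚ) • opD 1 := by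
  simp only [opH, A2hyp, Fin.sum_univ_two, Matrix.of_apply, Matrix.cons_val', Matrix.cons_val_zero,
    Matrix.cons_val_one]
  module

theorem opH_one : opH 1 = (-3 : ℚ) • opD 0 + (2 : ℚ) • opD 1 := by
  simp only [opH, A2hyp, Fin.sum_univ_two, Matrix.of_apply, Matrix.cons_val', Matrix.cons_val_zero,
    Matrix.cons_val_one]
  module

@[simp] theorem opD_apply_one (i : Fin 2) : opD i 1 = 0 := by
  fin_cases i <;> simp [opD]

@[simp] theorem opE_one_apply_one : opE 1 1 = 0 := by
  simp [opE]

@[simp] theorem opF_apply_one (i : Fin 2) : opF i 1 = 0 := by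
  fin_cases i <;> simp [opF]

@[simp] theorem opD_zero_ι (k : Fin 4) : opD 0 (ι ℚ k) = ι ℚ k := by
  simp [opD]

@[simp] theorem opD_one_ι (k : Fin 4) : opD 1 (ι ℚ k) = (k : ℚ) • ι ℚ k := by
  simp [opD]

theorem opE_one_ι (k : Fin 4) :
    opE 1 (ι ℚ k) = ![ι ℚ 1, (2 : ℚ) • ι ℚ 2, (3 : ℚ) • ι ℚ 3, 0] k :=
  freeDerivation_ι _ k

theorem opF_one_ι (k : Fin 4) :
    opF 1 (ι ℚ k) = ![0, (3 : ℚ) • ι ℚ 0, (2 : ℚ) • ι ℚ 1, ι ℚ 2] k :=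
  freeDerivation_ι _ k

theorem lie_opD_lmulT (i : Fin 2) (t : T) : ⁅opD i, lmulT t⁆ = lmulT (opD i t) := by
  fin_cases i <;> exact lie_freeDerivation _ t

theorem lie_opE_one_lmulT (t : T) : ⁅opE 1, lmulT t⁆ = lmulT (opE 1 t) :=
  lie_freeDerivation _ t

theorem lie_opF_one_lmulT (t : T) : ⁅opF 1, lmulT t⁆ = lmulT (opF 1 t) :=
  lie_freeDerivation _ t

theorem lie_opF_zero_lmulT_ι (k : Fin 4) :
    ⁅opF 0, lmulT (ι ℚ k)⁆ = ![-opH 0, (-3 : ℚ) • opE 1, 0, 0] k :=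
  lie_extendOp _ k

theorem lie_opD_opD (i j : Fin 2) : ⁅opD i, opD j⁆ = 0 := by
  rw [← freeDerivation_zero]
  fin_cases i <;> fin_cases j <;> refine freeDerivation_lie_eq fun k ↦ ?_ <;> simp

theorem lie_opD_opE (i j : Fin 2) : ⁅opD i, opE j⁆ = if i = j then opE j else 0 := by
  fin_cases j
  · change ⁅opD i, lmulT _⁆ = if i = 0 then lmulT _ else 0
    rw [lie_opD_lmulT]
    fin_cases i <;> simp
  · fin_cases i
    · rw [if_neg (by decide), ← freeDerivation_zero]
      refine freeDerivation_lie_eq fun k ↦ ?_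
      fin_cases k <;> simp
    · refine freeDerivation_lie_eq fun k ↦ ?_
      fin_cases k <;> simp
      all_goals module

theorem lie_opH_opE (i j : Fin 2) : ⁅opH i, opE j⁆ = A2hyp i j • opE j := by
  simp only [opH, sum_lie, zsmul_lie, lie_opD_opE, smul_ite, smul_zero, Finset.sum_ite_eq',
    Finset.mem_univ, if_true]

theorem lie_opD_opH (i j : Fin 2) : ⁅opD i, opH j⁆ = 0 := by
  simp only [opH, lie_sum, lie_zsmul, lie_opD_opD, smul_zero, Finset.sum_const_zero]

theorem lie_opD_opF (i j : Fin 2) : ⁅opD i, opF j⁆ = if i = j then -opF j else 0 := by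
  fin_cases j
  · refine end_freeAlgebra_ext (by split <;> simp [Ring.lie_def]) fun k ↦ ?_
    change ⁅⁅opD i, opF 0⁆, lmulT (ι ℚ k)⁆ = ⁅if i = 0 then -opF 0 else 0, lmulT (ι ℚ k)⁆
    rw [lie_lie, lie_opF_zero_lmulT_ι, lie_opD_lmulT]
    have hHD : ⁅opH 0, opD i⁆ = 0 := by rw [← lie_skew, lie_opD_opH, neg_zero]
    fin_cases i <;> fin_cases k <;>
      simp_all [lie_opF_zero_lmulT_ι, lie_opD_opE]
  · fin_cases i
    · rw [if_neg (by decide), ← freeDerivation_zero]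
      refine freeDerivation_lie_eq fun k ↦ ?_
      fin_cases k <;> simp
    · rw [if_pos (by decide), ← neg_eq_iff_eq_neg, lie_skew]
      refine freeDerivation_lie_eq fun k ↦ ?_
      fin_cases k <;> simp
      all_goals module

theorem lie_opH_opF (i j : Fin 2) : ⁅opH i, opF j⁆ = -(A2hyp i j • opF j) := by
  simp only [opH, sum_lie, zsmul_lie, lie_opD_opF, smul_ite, smul_zero, Finset.sum_ite_eq',
    Finset.mem_univ, if_true, smul_neg]

theorem lie_opE_opF_self (i : Fin 2) : ⁅opE i, opF i⁆ = opH i := by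
  fin_cases i
  · rw [← lie_skew]
    exact neg_eq_iff_eq_neg.mpr (lie_opF_zero_lmulT_ι 0)
  · refine end_freeAlgebra_ext (by simp [Ring.lie_def, opH_one]) fun k ↦ ?_
    change ⁅⁅opE 1, opF 1⁆, lmulT (ι ℚ k)⁆ = ⁅opH 1, lmulT (ι ℚ k)⁆
    rw [lie_lie, lie_opF_one_lmulT, lie_opE_one_lmulT, lie_opE_one_lmulT, lie_opF_one_lmulT,
      opH_one, add_lie, smul_lie, smul_lie, lie_opD_lmulT, lie_opD_lmulT]
    simp only [← map_smul, ← map_sub, ← map_add]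
    fin_cases k <;> simp [opE, opF]
    all_goals module

theorem lie_opE_opF_of_ne {i j : Fin 2} (hij : i ≠ j) : ⁅opE i, opF j⁆ = 0 := by
  fin_cases i <;> fin_cases j
  · exact absurd rfl hij
  · rw [← lie_skew]
    change -⁅opF 1, lmulT (ι ℚ 0)⁆ = 0
    rw [lie_opF_one_lmulT]
    simp [opF]
  · refine end_freeAlgebra_ext (by simp [Ring.lie_def]) fun k ↦ ?_
    change ⁅⁅opE 1, opF 0⁆, lmulT (ι ℚ k)⁆ = ⁅0, lmulT (ι ℚ k)⁆
    have hHE : ⁅opE 1, opH 0⁆ = (3 : ℚ) • opE 1 := by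
      rw [← lie_skew, lie_opH_opE]
      simp only [A2hyp, Matrix.of_apply, Matrix.cons_val', Matrix.cons_val_zero,
        Matrix.cons_val_one]
      module
    rw [lie_lie, lie_opF_zero_lmulT_ι, lie_opE_one_lmulT, opE_one_ι]
    fin_cases k <;> simp [hHE, lie_opF_zero_lmulT_ι]
  · exact absurd rfl hij

theorem isChevalley_op : IsChevalley A2hyp opH opE opF where
  lie_h_h i j := by
    rw [opH, sum_lie]
    simp only [zsmul_lie, lie_opD_opH, smul_zero, Finset.sum_const_zero]
  lie_e_f := lie_opE_opF_self
  lie_e_f_of_ne := lie_opE_opF_of_ne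
  lie_h_e := lie_opH_opE
  lie_h_f := lie_opH_opF

theorem eq_zero_of_lie_opE {A : End ℚ T} (one : A 1 = 0) (lie : ∀ i, ⁅opE i, A⁆ = 0) : A = 0 := by
  have lie_succ {s t : T} (hs : ⁅A, lmulT s⁆ = 0) (h : opE 1 s = t) : ⁅A, lmulT t⁆ = 0 := by
    rw [← h, ← lie_opE_one_lmulT, lie_lie_eq_sub, hs, ← lie_skew A, lie 1]
    simp
  have h0 : ⁅A, lmulT (ι ℚ 0)⁆ = 0 := by
    rw [← lie_skew, neg_eq_zero]
    exact lie 0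
  have h1 : ⁅A, lmulT (ι ℚ 1)⁆ = 0 := lie_succ h0 (opE_one_ι 0)
  have h2 : ⁅A, lmulT (ι ℚ 2)⁆ = 0 := by
    simpa using lie_succ h1 (opE_one_ι 1)
  have h3 : ⁅A, lmulT (ι ℚ 3)⁆ = 0 := by
    simpa using lie_succ h2 (opE_one_ι 2)
  refine end_freeAlgebra_ext (by simpa using one) fun k ↦ ?_
  change ⁅A, lmulT (ι ℚ k)⁆ = ⁅0, lmulT (ι ℚ k)⁆
  fin_cases k <;> simp [h0, h1, h2, h3]

theorem A2hyp_self (i : Fin 2) : A2hyp i i = 2 := isGCM_A2hyp.1 i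

theorem A2hyp_of_ne (i j : Fin 2) (hij : i ≠ j) : A2hyp i j = -3 := by
  fin_cases i <;> fin_cases j <;> first | exact absurd rfl hij | rfl

theorem serreElement_opF (i j : Fin 2) : serreElement A2hyp opF i j = 0 := by
  rcases eq_or_ne i j with rfl | hij
  · exact serreElement_self A2hyp_self _ _
  refine eq_zero_of_lie_opE ?_ (isChevalley_op.opposite.lie_f_serreElement_e isGCM_A2hyp hij)
  rw [serreElement_neg A2hyp_of_ne _ hij]
  simp [Ring.lie_def]

/-- The element of `T` on which the Serre relation between `e₁` and `e₂` is expressed. -/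
def serreVector : T := ⁅ι ℚ (0 : Fin 4), ⁅ι ℚ (0 : Fin 4), ⁅ι ℚ (0 : Fin 4), ι ℚ (1 : Fin 4)⁆⁆⁆

theorem lmulT_lie (s t : T) : lmulT ⁅s, t⁆ = ⁅lmulT s, lmulT t⁆ := by
  simp [Ring.lie_def]

theorem serreElement_opE_zero_one : serreElement A2hyp opE 0 1 = -lmulT serreVector := by
  have h : ⁅opE 0, opE 1⁆ = -lmulT (ι ℚ 1) := by
    rw [← lie_skew]
    exact congrArg Neg.neg ((lie_opE_one_lmulT _).trans (congrArg lmulT (opE_one_ι 0)))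
  rw [serreElement_neg A2hyp_of_ne _ zero_ne_one, h]
  simp only [serreVector, lmulT_lie, lie_neg]
  rfl

theorem serreElement_opE_one_zero : serreElement A2hyp opE 1 0 = 0 := by
  rw [serreElement_neg A2hyp_of_ne _ one_ne_zero]
  change ⁅opE 1, ⁅opE 1, ⁅opE 1, ⁅opE 1, lmulT (ι ℚ 0)⁆⁆⁆⁆ = 0
  simp only [lie_opE_one_lmulT, opE_one_ι, Matrix.cons_val_zero, Matrix.cons_val_one, map_smul,
    Matrix.cons_val, map_zero, lie_smul, smul_zero]

theorem lie_opF_lmulT_serreVector (i : Fin 2) : ⁅opF i, lmulT serreVector⁆ = 0 := by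
  simpa only [serreElement_opE_zero_one, lie_neg, neg_eq_zero] using
    isChevalley_op.lie_f_serreElement_e isGCM_A2hyp zero_ne_one i

section SerreString

/-- The string of `serreVector` under the raising operator `opE 1`. -/
def serreString (k : ℕ) : T := (opE 1 ^ k) serreVector

theorem serreString_succ (k : ℕ) : serreString (k + 1) = opE 1 (serreString k) := by
  rw [serreString, pow_succ', Module.End.mul_apply, serreString]

theorem lie_opF_zero_lmulT_serreString (k : ℕ) : ⁅opF 0, lmulT (serreString k)⁆ = 0 := by
  induction k with
  | zero => exact lie_opF_lmulT_serreVector 0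
  | succ k ih =>
    rw [serreString_succ, ← lie_opE_one_lmulT, leibniz_lie, ih, lie_zero, add_zero,
      isChevalley_op.opposite.lie_e_f_of_ne zero_ne_one, zero_lie]

theorem opD_serreVector (i : Fin 2) :
    opD i serreVector = (![4, 1] : Fin 2 → ℚ) i • serreVector := by
  have h : opD i = freeDerivation fun k : Fin 4 ↦ (![1, k] : Fin 2 → ℚ) i • ι ℚ k := by
    fin_cases i <;> simp [opD]
  simp only [serreVector, Ring.lie_def, h, map_sub, freeDerivation_mul, freeDerivation_ι]
  fin_cases i <;> simp [mul_sub, sub_mul, mul_add, add_mul, mul_assoc]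
  module

theorem opD_serreString (k : ℕ) (i : Fin 2) :
    opD i (serreString k) = (![4, k + 1] : Fin 2 → ℚ) i • serreString k := by
  induction k with
  | zero => simpa [serreString] using opD_serreVector i
  | succ k ih =>
    have := LinearMap.congr_fun (lie_opD_opE i 1) (serreString k)
    rw [Ring.lie_def, LinearMap.sub_apply, Module.End.mul_apply, Module.End.mul_apply, ih,
      sub_eq_iff_eq_add, map_smul, ← serreString_succ] at this
    rw [this]
    fin_cases i <;> simp [← serreString_succ]
    module

end SerreString

/-- The component of level `n` of `T`. -/
abbrev level (n : ℕ) : Submodule ℚ T := generatorSpan ℚ (Fin 4) ^ n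

theorem mul_mem_level {m n : ℕ} {s t : T} (hs : s ∈ level m) (ht : t ∈ level n) :
    s * t ∈ level (m + n) := by
  rw [level, pow_add]
  exact Submodule.mul_mem_mul hs ht

theorem opD_mul_mem_eigenspace {i : Fin 2} {a b : ℚ} {s t : T} (hs : s ∈ (opD i).eigenspace a)
    (ht : t ∈ (opD i).eigenspace b) : s * t ∈ (opD i).eigenspace (a + b) := by
  fin_cases i <;> exact freeDerivation_mul_mem_eigenspace hs ht

theorem level_le_eigenspace (n : ℕ) : level n ≤ (opD 0).eigenspace (n : ℚ) := by
  induction n with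
  | zero =>
    rw [level, pow_zero, Submodule.one_le]
    simp
  | succ n ih =>
    rw [level, pow_succ, mul_generatorSpan_le]
    intro p hp i
    rw [Nat.cast_succ]
    exact opD_mul_mem_eigenspace (ih hp) (by simp)

theorem level_eq_eigenspace (n : ℕ) : level n = (opD 0).eigenspace (n : ℚ) := by
  refine (level_le_eigenspace n).antisymm ?_
  have := iSup_inf_eigenspace_le (G := level) Nat.cast_injective level_le_eigenspace n
  rwa [iSup_generatorSpan_pow, top_inf_eq] at this

theorem level_le_iSup_eigenspace (n : ℕ) :
    level n ≤ ⨆ k : Fin (3 * n + 1), (opD 1).eigenspace (k : ℚ) := by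
  induction n with
  | zero =>
    rw [level, pow_zero, Submodule.one_le]
    exact Submodule.mem_iSup_of_mem 0 (by simp)
  | succ n ih =>
    rw [level, pow_succ, mul_generatorSpan_le]
    intro p hp i
    suffices ⨆ k : Fin (3 * n + 1), (opD 1).eigenspace (k : ℚ) ≤
        (⨆ k : Fin (3 * (n + 1) + 1), (opD 1).eigenspace (k : ℚ)).comap
          (LinearMap.mulRight ℚ (ι ℚ i)) from this (ih hp)
    refine iSup_le fun k q hq ↦ Submodule.mem_iSup_of_mem ⟨k + i, by lia⟩ ?_
    push_cast
    exact opD_mul_mem_eigenspace hq (by simp)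

section SerreSpan

theorem opD_serreString_mem (i : Fin 2) (k : ℕ) :
    serreString k ∈ (opD i).eigenspace ((![4, k + 1] : Fin 2 → ℚ) i) :=
  End.mem_eigenspace_iff.mpr (opD_serreString k i)

theorem serreString_mem_level (k : ℕ) : serreString k ∈ level 4 := by
  rw [level_eq_eigenspace]
  exact opD_serreString_mem 0 k

theorem serreVector_ne_zero : serreVector ≠ 0 := by
  intro h
  have := congrArg (rightContraction 1) h
  simp only [serreVector, Ring.lie_def, sub_mul, mul_sub, map_sub, map_zero, ← mul_assoc,
    rightContraction_mul_ι] at this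
  simp at this

theorem opF_serreVector (i : Fin 2) : opF i serreVector = 0 := by
  simpa [Ring.lie_def] using LinearMap.congr_fun (lie_opF_lmulT_serreVector i) 1

theorem opF_zero_serreString (k : ℕ) : opF 0 (serreString k) = 0 := by
  simpa [Ring.lie_def] using LinearMap.congr_fun (lie_opF_zero_lmulT_serreString k) 1

theorem isSl2Triple_op : IsSl2Triple (-opH 1) (opF 1) (opE 1) where
  h_ne_zero h := by
    have := LinearMap.congr_fun h (ι ℚ 0)
    simp [opH_one, FreeAlgebra.ι_ne_zero] at this
  lie_e_f := by rw [← lie_skew, lie_opE_opF_self]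
  lie_h_e_nsmul := by rw [neg_lie, lie_opH_opF, A2hyp_self, neg_neg, ofNat_zsmul]
  lie_h_f_nsmul := by rw [neg_lie, lie_opH_opE, A2hyp_self, ofNat_zsmul]

theorem hasPrimitiveVectorWith_serreVector :
    isSl2Triple_op.HasPrimitiveVectorWith serreVector (10 : ℚ) where
  ne_zero := serreVector_ne_zero
  lie_h := by
    change (-opH 1) serreVector = _
    simp [opH_one, opD_serreVector]
    module
  lie_e := opF_serreVector 1

theorem opF_one_serreString_succ (k : ℕ) :
    opF 1 (serreString (k + 1)) = ((k + 1) * (10 - k) : ℚ) • serreString k :=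
  hasPrimitiveVectorWith_serreVector.lie_e_pow_succ_toEnd_f k

theorem serreString_ne_zero {k : ℕ} (hk : k ≤ 10) : serreString k ≠ 0 :=
  hasPrimitiveVectorWith_serreVector.pow_toEnd_f_ne_zero_of_eq_nat (n := 10) (by norm_num) hk

theorem serreString_eq_zero {k : ℕ} (hk : 11 ≤ k) : serreString k = 0 := by
  induction k, hk using Nat.le_induction with
  | base =>
    have h12 : serreString 12 = 0 := by
      refine eq_zero_of_mem_iSup_eigenspace (fun k hk ↦ ?_)
        (level_le_iSup_eigenspace 4 (serreString_mem_level 12)) (opD_serreString_mem 1 12)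
      have : ((k : ℕ) : ℚ) = (13 : ℕ) := hk.trans (by norm_num)
      have := Nat.cast_injective this
      lia
    have := opF_one_serreString_succ 11
    rw [h12, map_zero, eq_comm, smul_eq_zero] at this
    exact this.resolve_left (by norm_num)
  | succ k _ ih => rw [serreString_succ, ih, map_zero]

/-- The `sl₂`-submodule of `T` generated by `serreVector`; together with `serreVector` it is the
space of relations of the positive part of the Kac–Moody algebra. -/
def serreSpan : Submodule ℚ T := Submodule.span ℚ (Set.range serreString)

theorem serreString_mem_serreSpan (k : ℕ) : serreString k ∈ serreSpan :=
  Submodule.subset_span ⟨k, rfl⟩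

theorem serreSpan_le {P : Submodule ℚ T} : serreSpan ≤ P ↔ ∀ k, serreString k ∈ P := by
  rw [serreSpan, Submodule.span_le, Set.range_subset_iff]
  rfl

theorem serreSpan_le_level : serreSpan ≤ level 4 :=
  serreSpan_le.mpr serreString_mem_level

theorem linearIndependent_serreString : LinearIndependent ℚ fun k : Fin 11 ↦ serreString k := by
  refine End.eigenvectors_linearIndependent' (opD 1) (fun k : Fin 11 ↦ (k + 1 : ℚ)) ?_ _
    fun k ↦ ⟨opD_serreString_mem 1 k, serreString_ne_zero (by lia)⟩
  intro k l h
  simpa [Fin.ext_iff] using h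

theorem finrank_serreSpan : finrank ℚ serreSpan = 11 := by
  have h : serreSpan = Submodule.span ℚ (Set.range fun k : Fin 11 ↦ serreString k) := by
    refine le_antisymm (serreSpan_le.mpr fun k ↦ ?_) (Submodule.span_mono ?_)
    · rcases lt_or_ge k 11 with hk | hk
      · exact Submodule.subset_span ⟨⟨k, hk⟩, rfl⟩
      · exact serreString_eq_zero hk ▸ Submodule.zero_mem _
    · rintro _ ⟨k, rfl⟩
      exact ⟨k, rfl⟩
  rw [h, finrank_span_eq_card linearIndependent_serreString, Fintype.card_fin]

end SerreSpan

section Subquotient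

variable {K M : Type*} [CommRing K] [AddCommGroup M] [Module K M] (S J : Submodule K M)

/-- The algebra of operators which preserve two submodules `S` and `J`. -/
def stabilizer : Subalgebra K (End K M) where
  carrier := {A | S ≤ S.comap A ∧ J ≤ J.comap A}
  mul_mem' ha hb := ⟨fun _ h ↦ ha.1 (hb.1 h), fun _ h ↦ ha.2 (hb.2 h)⟩
  add_mem' ha hb :=
    ⟨fun _ h ↦ S.add_mem (ha.1 h) (hb.1 h), fun _ h ↦ J.add_mem (ha.2 h) (hb.2 h)⟩
  algebraMap_mem' c := ⟨fun _ h ↦ S.smul_mem c h, fun _ h ↦ J.smul_mem c h⟩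

/-- The subquotient `S / (S ∩ J)`. -/
abbrev Subquotient : Type _ := S ⧸ J.submoduleOf S

/-- The action on a subquotient of the operators which preserve it. -/
def subquotientMap : stabilizer S J →ₐ[K] End K (Subquotient S J) where
  toFun A := Submodule.mapQ _ _ (A.1.restrict A.2.1) fun s hs ↦ A.2.2 hs
  map_one' := by ext; rfl
  map_mul' _ _ := by ext; rfl
  map_zero' := by ext; rfl
  map_add' _ _ := by ext; rfl
  commutes' _ := by ext; rfl

theorem subquotientMap_mk (A : stabilizer S J) (s : S) :
    subquotientMap S J A (Submodule.Quotient.mk s) =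
      Submodule.Quotient.mk ⟨A.1 s, A.2.1 s.2⟩ := rfl

theorem mk_mem_of_le_map {S J P : Submodule K M} {Q : Submodule K (Subquotient S J)}
    (h : P ≤ (Q.comap (Submodule.mkQ _)).map S.subtype) {s : S} (hs : (s : M) ∈ P) :
    Submodule.Quotient.mk s ∈ Q := by
  obtain ⟨s', hs', hss'⟩ := h hs
  exact Subtype.ext hss' ▸ hs'

theorem subquotientMap_eq_zero {A : stabilizer S J} (hA : ∀ s ∈ S, A.1 s ∈ J) :
    subquotientMap S J A = 0 := by
  ext s
  exact (Submodule.Quotient.mk_eq_zero _).mpr (hA s s.2)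

end Subquotient

theorem le_top_mul {K A : Type*} [CommSemiring K] [Semiring A] [Algebra K A]
    {P : Submodule K A} : P ≤ ⊤ * P :=
  fun p hp ↦ one_mul p ▸ Submodule.mul_mem_mul trivial hp

theorem mul_mem_top_mul {K A : Type*} [CommSemiring K] [Semiring A] [Algebra K A]
    {P : Submodule K A} (a : A) {q : A} (hq : q ∈ ⊤ * P) : a * q ∈ ⊤ * P := by
  suffices ⊤ * P ≤ (⊤ * P).comap (LinearMap.mulLeft K a) from this hq
  refine Submodule.mul_le.mpr fun b _ p hp ↦ ?_
  rw [Submodule.mem_comap, LinearMap.mulLeft_apply, ← mul_assoc]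
  exact Submodule.mul_mem_mul trivial hp

/-- A subspace of `T` is stable if it is preserved by the degree operators, by the lowering
operators, and by the raising operator `opE 1`. -/
structure IsStable (P : Submodule ℚ T) : Prop where
  opD_le (i : Fin 2) : P ≤ P.comap (opD i)
  opE_one_le : P ≤ P.comap (opE 1)
  opF_le (i : Fin 2) : P ≤ P.comap (opF i)

theorem isStable_one : IsStable 1 where
  opD_le i := Submodule.one_le.mpr (by simp)
  opE_one_le := Submodule.one_le.mpr (by simp)
  opF_le i := Submodule.one_le.mpr (by simp)

theorem opF_zero_ι (k : Fin 4) : opF 0 (ι ℚ k) = 0 := by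
  have := LinearMap.congr_fun (lie_opF_zero_lmulT_ι k) 1
  rw [Ring.lie_def] at this
  fin_cases k <;> simpa [opH_zero] using this

theorem isStable_generatorSpan : IsStable (generatorSpan ℚ (Fin 4)) where
  opD_le i := by
    refine Submodule.span_le.mpr (Set.range_subset_iff.mpr fun k ↦ ?_)
    fin_cases i <;> simp [ι_mem_generatorSpan, Submodule.smul_mem]
  opE_one_le := by
    refine Submodule.span_le.mpr (Set.range_subset_iff.mpr fun k ↦ ?_)
    fin_cases k <;> simp [opE_one_ι, ι_mem_generatorSpan]
  opF_le i := by
    refine Submodule.span_le.mpr (Set.range_subset_iff.mpr fun k ↦ ?_)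
    fin_cases i
    · simp [opF_zero_ι]
    · fin_cases k <;> simp [opF_one_ι, ι_mem_generatorSpan]

theorem isStable_serreSpan : IsStable serreSpan where
  opD_le i := serreSpan_le.mpr fun k ↦ by
    rw [Submodule.mem_comap, opD_serreString]
    exact serreSpan.smul_mem _ (serreString_mem_serreSpan k)
  opE_one_le := serreSpan_le.mpr fun k ↦ by
    rw [Submodule.mem_comap, ← serreString_succ]
    exact serreString_mem_serreSpan (k + 1)
  opF_le i := serreSpan_le.mpr fun k ↦ by
    rw [Submodule.mem_comap]
    fin_cases i
    · simp [opF_zero_serreString]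
    · cases k with
      | zero => simp [serreString, opF_serreVector]
      | succ k =>
        simpa [opF_one_serreString_succ] using
          serreSpan.smul_mem _ (serreString_mem_serreSpan k)

namespace IsStable

variable {P Q : Submodule ℚ T}

theorem mul_le_comap_opD {i : Fin 2} (hP : P ≤ P.comap (opD i)) (hQ : Q ≤ Q.comap (opD i)) :
    P * Q ≤ (P * Q).comap (opD i) := by
  fin_cases i <;> exact mul_le_comap_freeDerivation hP hQ

theorem mul (hP : IsStable P) (hQ : IsStable Q)
    (h : ∀ p ∈ P, ∀ q ∈ Q, opF 0 (p * q) ∈ P * Q) : IsStable (P * Q) where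
  opD_le i := mul_le_comap_opD (hP.opD_le i) (hQ.opD_le i)
  opE_one_le := mul_le_comap_freeDerivation hP.opE_one_le hQ.opE_one_le
  opF_le i := by
    fin_cases i
    · exact Submodule.mul_le.mpr h
    · exact mul_le_comap_freeDerivation (hP.opF_le 1) (hQ.opF_le 1)

theorem serreSpan_mul (hP : IsStable P) : IsStable (serreSpan * P) := by
  refine isStable_serreSpan.mul hP fun w hw p hp ↦ ?_
  suffices serreSpan ≤ (serreSpan * P).comap (opF 0 ∘ₗ LinearMap.mulRight ℚ p) from this hw
  refine serreSpan_le.mpr fun k ↦ ?_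
  have := LinearMap.congr_fun (lie_opF_zero_lmulT_serreString k) p
  rw [Ring.lie_def, LinearMap.zero_apply, LinearMap.sub_apply, sub_eq_zero] at this
  rw [Submodule.mem_comap]
  exact this ▸ Submodule.mul_mem_mul (serreString_mem_serreSpan k) (hP.opF_le 0 hp)

/-- Only `opF 0` is not a derivation of `T`, but its commutators with left multiplications by
generators are again among the operators preserving `P`. -/
theorem top_mul (hP : IsStable P) : IsStable (⊤ * P) := by
  have opD_le (i) : ⊤ * P ≤ (⊤ * P).comap (opD i) := mul_le_comap_opD le_top (hP.opD_le i)
  have opE_le : ⊤ * P ≤ (⊤ * P).comap (opE 1) :=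
    mul_le_comap_freeDerivation le_top hP.opE_one_le
  have opH_le : ⊤ * P ≤ (⊤ * P).comap (opH 0) := fun q hq ↦ by
    rw [Submodule.mem_comap, opH_zero]
    exact sub_mem (Submodule.smul_mem _ _ (opD_le 0 hq)) (Submodule.smul_mem _ _ (opD_le 1 hq))
  refine ⟨opD_le, opE_le, fun i ↦ ?_⟩
  fin_cases i
  · refine (top_mul_le (Q := ⊤ * P ⊓ (⊤ * P).comap (opF 0)) ?_ ?_).trans inf_le_right
    · exact fun p hp ↦ ⟨le_top_mul hp, le_top_mul (hP.opF_le 0 hp)⟩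
    · refine fun k q hq ↦ ⟨mul_mem_top_mul _ hq.1, ?_⟩
      have h := LinearMap.congr_fun (lie_opF_zero_lmulT_ι k) q
      rw [Ring.lie_def, LinearMap.sub_apply, sub_eq_iff_eq_add] at h
      refine Submodule.mem_comap.mpr (h ▸ add_mem ?_ (mul_mem_top_mul _ hq.2))
      fin_cases k
      · exact neg_mem (opH_le hq.1)
      · exact Submodule.smul_mem _ _ (opE_le hq.1)
      · exact zero_mem _
      · exact zero_mem _
  · exact mul_le_comap_freeDerivation le_top (hP.opF_le 1)

end IsStable

/-- The ideal of `T` generated by the Serre relations. -/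
def serreIdeal : Submodule ℚ T := ⊤ * serreSpan * ⊤

/-- The Kac–Moody algebra of `A2hyp`. -/
abbrev KM : Type := Matrix.ToLieAlgebra ℚ A2hyp

namespace IsStable

variable {P : Submodule ℚ T}

theorem serreIdeal_mul (hP : IsStable P) : IsStable (serreIdeal * P) := by
  rw [serreIdeal, mul_assoc, mul_assoc]
  exact hP.top_mul.serreSpan_mul.top_mul

theorem opD_mem_stabilizer (hP : IsStable P) (i : Fin 2) :
    opD i ∈ stabilizer (⊤ * P) (serreIdeal * P) :=
  ⟨hP.top_mul.opD_le i, hP.serreIdeal_mul.opD_le i⟩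

theorem opF_mem_stabilizer (hP : IsStable P) (i : Fin 2) :
    opF i ∈ stabilizer (⊤ * P) (serreIdeal * P) :=
  ⟨hP.top_mul.opF_le i, hP.serreIdeal_mul.opF_le i⟩

theorem opE_mem_stabilizer (hP : IsStable P) (i : Fin 2) :
    opE i ∈ stabilizer (⊤ * P) (serreIdeal * P) := by
  fin_cases i
  · refine ⟨fun s hs ↦ mul_mem_top_mul _ hs, fun s hs ↦ ?_⟩
    rw [serreIdeal, mul_assoc, mul_assoc] at hs ⊢
    exact mul_mem_top_mul _ hs
  · exact ⟨hP.top_mul.opE_one_le, hP.serreIdeal_mul.opE_one_le⟩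

theorem opH_mem_stabilizer (hP : IsStable P) (i : Fin 2) :
    opH i ∈ stabilizer (⊤ * P) (serreIdeal * P) := by
  rw [opH]
  exact sum_mem fun j _ ↦ zsmul_mem (hP.opD_mem_stabilizer j) _

/-- The representation of the Kac–Moody algebra on `⊤ * P` modulo the Serre relations. -/
abbrev Rep (_ : IsStable P) : Type := Subquotient (⊤ * P) (serreIdeal * P)

theorem serreVector_mul_mem {s : T} (hs : s ∈ ⊤ * P) : serreVector * s ∈ serreIdeal * P := by
  rw [serreIdeal, mul_assoc, mul_assoc, ← one_mul (_ * s)]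
  exact Submodule.mul_mem_mul trivial (Submodule.mul_mem_mul (serreString_mem_serreSpan 0) hs)

variable (hP : IsStable P)

/-- The operator `opH i` as an element of the algebra which acts on `hP.Rep`. -/
def stableH (i : Fin 2) : stabilizer (⊤ * P) (serreIdeal * P) :=
  ⟨opH i, hP.opH_mem_stabilizer i⟩

/-- The operator `opE i` as an element of the algebra which acts on `hP.Rep`. -/
def stableE (i : Fin 2) : stabilizer (⊤ * P) (serreIdeal * P) :=
  ⟨opE i, hP.opE_mem_stabilizer i⟩

/-- The operator `opF i` as an element of the algebra which acts on `hP.Rep`. -/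
def stableF (i : Fin 2) : stabilizer (⊤ * P) (serreIdeal * P) :=
  ⟨opF i, hP.opF_mem_stabilizer i⟩

theorem isChevalley_stable : IsChevalley A2hyp hP.stableH hP.stableE hP.stableF where
  lie_h_h i j := Subtype.ext (isChevalley_op.lie_h_h i j)
  lie_e_f i := Subtype.ext (isChevalley_op.lie_e_f i)
  lie_e_f_of_ne h := Subtype.ext (isChevalley_op.lie_e_f_of_ne h)
  lie_h_e i j := Subtype.ext (isChevalley_op.lie_h_e i j)
  lie_h_f i j := Subtype.ext (isChevalley_op.lie_h_f i j)

theorem coe_serreElement (x : Fin 2 → stabilizer (⊤ * P) (serreIdeal * P)) (i j : Fin 2) :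
    (serreElement A2hyp x i j).1 = serreElement A2hyp (fun k ↦ (x k).1) i j :=
  map_serreElement (stabilizer (⊤ * P) (serreIdeal * P)).val.toLieHom x i j

theorem isChevalleySerre_rep :
    IsChevalleySerre A2hyp ((subquotientMap (⊤ * P) (serreIdeal * P)).toLieHom ∘ hP.stableH)
      ((subquotientMap (⊤ * P) (serreIdeal * P)).toLieHom ∘ hP.stableE)
      ((subquotientMap (⊤ * P) (serreIdeal * P)).toLieHom ∘ hP.stableF) := by
  refine hP.isChevalley_stable.isChevalleySerre_map _ (fun i j ↦ ?_) fun i j ↦ ?_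
  · refine subquotientMap_eq_zero _ _ fun s hs ↦ ?_
    rw [coe_serreElement]
    change serreElement A2hyp opE i j s ∈ _
    fin_cases i <;> fin_cases j
    · simp [serreElement_self A2hyp_self]
    · simpa [serreElement_opE_zero_one] using serreVector_mul_mem hs
    · simp [serreElement_opE_one_zero]
    · simp [serreElement_self A2hyp_self]
  · refine subquotientMap_eq_zero _ _ fun s _ ↦ ?_
    rw [coe_serreElement]
    change serreElement A2hyp opF i j s ∈ _
    simp [serreElement_opF]

/-- The action of the Kac–Moody algebra on `hP.Rep`. -/
def rep : KM →ₗ⁅ℚ⁆ End ℚ hP.Rep := kmLift hP.isChevalleySerre_rep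

end IsStable

/-! ### The local part of the Kac–Moody algebra -/

section LocalPart

variable {L L' : Type*} [LieRing L] [LieAlgebra ℚ L] [LieRing L'] [LieAlgebra ℚ L']

/-- The basis of the span of the Cartan generators on which the simple roots take the values
`0` and `1`. -/
def coweight (h : Fin 2 → L) : Fin 2 → L :=
  ![-((2 / 5 : ℚ) • h 0 + (3 / 5 : ℚ) • h 1), -((3 / 5 : ℚ) • h 0 + (2 / 5 : ℚ) • h 1)]

/-- The divided powers `(ad x₂)ᵏ x₁ / k!`, which span the level one subspace when `x` consists of
the raising generators. -/
def levelOne (x : Fin 2 → L) (k : Fin 4) : L :=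
  ((k : ℕ).factorial : ℚ)⁻¹ • (LieAlgebra.ad ℚ L (x 1) ^ (k : ℕ)) (x 0)

theorem map_coweight (φ : L →ₗ⁅ℚ⁆ L') (h : Fin 2 → L) (i : Fin 2) :
    φ (coweight h i) = coweight (φ ∘ h) i := by
  fin_cases i <;> simp [coweight]

theorem coweight_neg (h : Fin 2 → L) (i : Fin 2) : coweight (-h) i = -coweight h i := by
  fin_cases i <;> simp only [coweight, Fin.zero_eta, Fin.mk_one, Matrix.cons_val_zero,
    Matrix.cons_val_one, Pi.neg_apply] <;> module

theorem sum_smul_coweight (h : Fin 2 → L) (i : Fin 2) :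
    ∑ j, (A2hyp i j : ℚ) • coweight h j = h i := by
  fin_cases i <;> simp [coweight, A2hyp_self, A2hyp_of_ne, Fin.sum_univ_two] <;> module

theorem map_levelOne (φ : L →ₗ⁅ℚ⁆ L') (x : Fin 2 → L) (k : Fin 4) :
    φ (levelOne x k) = levelOne (φ ∘ x) k := by
  fin_cases k <;> simp [levelOne, pow_succ]

@[simp] theorem levelOne_zero (x : Fin 2 → L) : levelOne x 0 = x 0 := by simp [levelOne]

namespace IsChevalleySerre

variable {h e f : Fin 2 → L} (r : IsChevalleySerre A2hyp h e f)
include r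

theorem lie_coweight_h (i j : Fin 2) : ⁅coweight h i, h j⁆ = 0 := by
  fin_cases i <;> simp [coweight, r.lie_h_h]

theorem lie_coweight_e (i j : Fin 2) : ⁅coweight h i, e j⁆ = if i = j then e j else 0 := by
  fin_cases i <;> fin_cases j <;>
  · simp only [coweight, Fin.zero_eta, Fin.mk_one, Matrix.cons_val_zero, Matrix.cons_val_one,
      neg_lie, add_lie, smul_lie, r.lie_h_e, A2hyp, Matrix.of_apply, Matrix.cons_val',
      Matrix.cons_val_fin_one, Fin.isValue, zero_ne_one, one_ne_zero, if_true, if_false]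
    module

theorem lie_coweight_f (i j : Fin 2) : ⁅coweight h i, f j⁆ = if i = j then -f j else 0 := by
  have := r.opposite.lie_coweight_e i j
  rw [coweight_neg, neg_lie, neg_eq_iff_eq_neg] at this
  rw [this, neg_ite, neg_zero]

theorem lie_e_one_levelOne (k : Fin 4) : ⁅e 1, levelOne e k⁆ =
    ![levelOne e 1, (2 : ℚ) • levelOne e 2, (3 : ℚ) • levelOne e 3, 0] k := by
  have h4 : ⁅e 1, ⁅e 1, ⁅e 1, ⁅e 1, e 0⁆⁆⁆⁆ = 0 := by
    rw [← serreElement_neg A2hyp_of_ne e one_ne_zero, r.serre_e]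
  fin_cases k <;> simp [levelOne, pow_succ, smul_smul, Nat.factorial, h4]
  norm_num

theorem lie_f_one_levelOne (k : Fin 4) : ⁅f 1, levelOne e k⁆ =
    ![0, (3 : ℚ) • levelOne e 0, (2 : ℚ) • levelOne e 1, levelOne e 2] k := by
  have hsucc := r.lie_f_ad_e_pow_succ (i := 1) (j := 0) (A2hyp_self 1) one_ne_zero
  have hpow (n : ℕ) (hn : n < 3) : ⁅f 1, levelOne e ⟨n + 1, by lia⟩⁆ =
      (3 - n : ℚ) • levelOne e ⟨n, by lia⟩ := by
    rw [levelOne, lie_smul, hsucc, A2hyp_of_ne 1 0 one_ne_zero, levelOne, Nat.factorial_succ,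
      ← Int.cast_smul_eq_zsmul ℚ, smul_smul, smul_smul]
    congr 1
    push_cast
    field_simp
    ring
  match k with
  | 0 => simpa using r.opposite.lie_e_f_of_ne one_ne_zero
  | 1 => simpa using hpow 0 (by lia)
  | 2 => exact (hpow 1 (by lia)).trans (by norm_num; rfl)
  | 3 => exact (hpow 2 (by lia)).trans (by norm_num; rfl)

theorem lie_coweight_levelOne (i : Fin 2) (k : Fin 4) :
    ⁅coweight h i, levelOne e k⁆ = (![1, k] : Fin 2 → ℚ) i • levelOne e k := by
  have hpow (j : Fin 2) := r.lie_h_ad_e_pow j 1 0 k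
  fin_cases i <;>
  · simp only [coweight, Fin.zero_eta, Fin.mk_one, Matrix.cons_val_zero, Matrix.cons_val_one,
      neg_lie, add_lie, smul_lie, levelOne, lie_smul, hpow, A2hyp, Matrix.of_apply,
      Matrix.cons_val', Matrix.cons_val_fin_one]
    module

end IsChevalleySerre

/-- The subspace spanned by the divided powers `levelOne`. -/
def levelOneSpan (x : Fin 2 → L) : Submodule ℚ L := Submodule.span ℚ (Set.range (levelOne x))

theorem levelOne_mem (x : Fin 2 → L) (k : Fin 4) : levelOne x k ∈ levelOneSpan x :=
  Submodule.subset_span ⟨k, rfl⟩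

theorem levelOneSpan_le {x : Fin 2 → L} {P : Submodule ℚ L} :
    levelOneSpan x ≤ P ↔ ∀ k, levelOne x k ∈ P := by
  simp [levelOneSpan, Submodule.span_le, Set.range_subset_iff]

/-- The subspace spanned by the Cartan generators and by the generators for the second node. -/
def levelZeroSpan (h e f : Fin 2 → L) : Submodule ℚ L :=
  Submodule.span ℚ (Set.range h ∪ {e 1, f 1})

theorem levelZeroSpan_le {h e f : Fin 2 → L} {P : Submodule ℚ L} :
    levelZeroSpan h e f ≤ P ↔ (∀ i, h i ∈ P) ∧ e 1 ∈ P ∧ f 1 ∈ P := by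
  simp [levelZeroSpan, Submodule.span_le, Set.range_subset_iff, Set.insert_subset_iff,
    and_comm, and_assoc, and_left_comm]

theorem mem_levelZeroSpan (h e f : Fin 2 → L) :
    (∀ i, h i ∈ levelZeroSpan h e f) ∧ e 1 ∈ levelZeroSpan h e f ∧ f 1 ∈ levelZeroSpan h e f :=
  levelZeroSpan_le.mp le_rfl

theorem levelZeroSpan_opposite (h e f : Fin 2 → L) :
    levelZeroSpan (-h) f e = levelZeroSpan h e f := by
  refine le_antisymm ?_ ?_ <;> rw [levelZeroSpan_le]
  · obtain ⟨hh, he, hf⟩ := mem_levelZeroSpan h e f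
    exact ⟨fun i ↦ neg_mem (hh i), hf, he⟩
  · obtain ⟨hh, hf, he⟩ := mem_levelZeroSpan (-h) f e
    exact ⟨fun i ↦ neg_mem_iff.mp (hh i), he, hf⟩

namespace IsChevalleySerre

variable {h e f : Fin 2 → L} (r : IsChevalleySerre A2hyp h e f)
include r

theorem lie_mem_levelZeroSpan :
    ∀ x ∈ levelZeroSpan h e f, ∀ y ∈ levelZeroSpan h e f, ⁅x, y⁆ ∈ levelZeroSpan h e f := by
  obtain ⟨hh, he, hf⟩ := mem_levelZeroSpan h e f
  have hfe : ⁅f 1, e 1⁆ = -h 1 := by rw [← lie_skew, r.lie_e_f]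
  have lie_left (x : L) (h₁ : ∀ i, ⁅x, h i⁆ ∈ levelZeroSpan h e f)
      (h₂ : ⁅x, e 1⁆ ∈ levelZeroSpan h e f) (h₃ : ⁅x, f 1⁆ ∈ levelZeroSpan h e f) :
      levelZeroSpan h e f ≤ (levelZeroSpan h e f).comap (LieAlgebra.ad ℚ L x) :=
    levelZeroSpan_le.mpr ⟨h₁, h₂, h₃⟩
  suffices levelZeroSpan h e f ≤
      ((levelZeroSpan h e f).compatibleMaps (levelZeroSpan h e f)).comap
        (LieAlgebra.ad ℚ L : L →ₗ[ℚ] End ℚ L) from this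
  refine levelZeroSpan_le.mpr ⟨fun i ↦ lie_left _ (fun j ↦ ?_) ?_ ?_,
    lie_left _ (fun j ↦ ?_) ?_ ?_, lie_left _ (fun j ↦ ?_) ?_ ?_⟩
  · simp [r.lie_h_h]
  · simpa [r.lie_h_e] using zsmul_mem he _
  · simpa [r.lie_h_f] using zsmul_mem hf _
  · rw [← lie_skew, r.lie_h_e]
    exact neg_mem (zsmul_mem he _)
  · simp
  · simpa [r.lie_e_f] using hh 1
  · rw [← lie_skew, r.lie_h_f, neg_neg]
    exact zsmul_mem hf _
  · simpa [hfe] using hh 1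
  · simp

theorem levelOneSpan_le_adGrading : levelOneSpan e ≤ adGrading ℚ (coweight h 0) 1 :=
  levelOneSpan_le.mpr fun k ↦ by simp [mem_adGrading, r.lie_coweight_levelOne]

theorem levelOneSpan_le_adGrading_neg : levelOneSpan f ≤ adGrading ℚ (coweight h 0) (-1) :=
  levelOneSpan_le.mpr fun k ↦ by
    have := r.opposite.lie_coweight_levelOne 0 k
    rw [coweight_neg, neg_lie, neg_eq_iff_eq_neg] at this
    simp [mem_adGrading, this]

theorem levelZeroSpan_le_adGrading : levelZeroSpan h e f ≤ adGrading ℚ (coweight h 0) 0 :=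
  levelZeroSpan_le.mpr (by
    simp [mem_adGrading, r.lie_coweight_h, r.lie_coweight_e, r.lie_coweight_f])

theorem lie_mem_levelOneSpan :
    ∀ x ∈ levelZeroSpan h e f, ∀ y ∈ levelOneSpan e, ⁅x, y⁆ ∈ levelOneSpan e := by
  suffices levelZeroSpan h e f ≤ ((levelOneSpan e).compatibleMaps (levelOneSpan e)).comap
      (LieAlgebra.ad ℚ L : L →ₗ[ℚ] End ℚ L) from this
  have lie_left (x : L) (hx : ∀ k, ⁅x, levelOne e k⁆ ∈ levelOneSpan e) :
      levelOneSpan e ≤ (levelOneSpan e).comap (LieAlgebra.ad ℚ L x) := levelOneSpan_le.mpr hx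
  refine levelZeroSpan_le.mpr ⟨fun i ↦ lie_left _ fun k ↦ ?_, lie_left _ fun k ↦ ?_,
    lie_left _ fun k ↦ ?_⟩
  · rw [levelOne, lie_smul, r.lie_h_ad_e_pow, smul_comm]
    exact zsmul_mem (levelOne_mem e k) _
  · rw [r.lie_e_one_levelOne]
    fin_cases k <;> simp [levelOne_mem]
  · rw [r.lie_f_one_levelOne]
    fin_cases k <;> simp [levelOne_mem, -levelOne_zero]

theorem lie_levelOneSpan_mem_levelZeroSpan :
    ∀ x ∈ levelOneSpan e, ∀ y ∈ levelOneSpan f, ⁅x, y⁆ ∈ levelZeroSpan h e f := by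
  obtain ⟨hh, he, hf⟩ := mem_levelZeroSpan h e f
  have lie_e_pow (n : ℕ) : ∀ y ∈ levelOneSpan f,
      ⁅(LieAlgebra.ad ℚ L (e 1) ^ n) (e 0), y⁆ ∈ levelZeroSpan h e f := by
    induction n with
    | zero =>
      suffices levelOneSpan f ≤ (levelZeroSpan h e f).comap (LieAlgebra.ad ℚ L (e 0)) from this
      refine levelOneSpan_le.mpr fun k ↦ ?_
      rw [Submodule.mem_comap, levelOne, map_smul, LieAlgebra.ad_apply,
        r.opposite.lie_f_ad_e_pow_of_ne one_ne_zero, r.lie_e_f]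
      refine Submodule.smul_mem _ _ ?_
      exact Module.End.pow_apply_mem_of_forall_mem _ (r.lie_mem_levelZeroSpan _ hf) _ (hh 0)
    | succ n ih =>
      intro y hy
      rw [pow_succ', Module.End.mul_apply, LieAlgebra.ad_apply, lie_lie]
      refine sub_mem (r.lie_mem_levelZeroSpan _ he _ (ih y hy)) (ih _ ?_)
      refine r.opposite.lie_mem_levelOneSpan _ ?_ y hy
      rwa [levelZeroSpan_opposite]
  suffices levelOneSpan e ≤ ((levelOneSpan f).compatibleMaps (levelZeroSpan h e f)).comap
      (LieAlgebra.ad ℚ L : L →ₗ[ℚ] End ℚ L) from this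
  exact levelOneSpan_le.mpr fun k y hy ↦ by
    change ⁅levelOne e k, y⁆ ∈ levelZeroSpan h e f
    rw [levelOne, smul_lie]
    exact Submodule.smul_mem _ _ (lie_e_pow k y hy)

theorem isLocalGenerating (hgen : ∀ N : LieSubalgebra ℚ L, (∀ i, h i ∈ N) → (∀ i, e i ∈ N) →
      (∀ i, f i ∈ N) → N = ⊤) :
    IsLocalGenerating (coweight h 0) (levelOneSpan f) (levelZeroSpan h e f) (levelOneSpan e) where
  left_le := r.levelOneSpan_le_adGrading_neg
  mid_le := r.levelZeroSpan_le_adGrading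
  right_le := r.levelOneSpan_le_adGrading
  lie_mid_mid := r.lie_mem_levelZeroSpan
  lie_mid_left := levelZeroSpan_opposite h e f ▸ r.opposite.lie_mem_levelOneSpan
  lie_mid_right := r.lie_mem_levelOneSpan
  lie_right_left := r.lie_levelOneSpan_mem_levelZeroSpan
  lieSpan_eq_top := by
    obtain ⟨hh, he, hf⟩ := mem_levelZeroSpan h e f
    refine hgen _ (fun i ↦ ?_) (fun i ↦ ?_) (fun i ↦ ?_) <;> apply LieSubalgebra.subset_lieSpan
    · exact Submodule.mem_sup_left (Submodule.mem_sup_right (hh i))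
    · fin_cases i
      · exact Submodule.mem_sup_right (levelOne_zero e ▸ levelOne_mem e 0)
      · exact Submodule.mem_sup_left (Submodule.mem_sup_right he)
    · fin_cases i
      · exact Submodule.mem_sup_left (Submodule.mem_sup_left (levelOne_zero f ▸ levelOne_mem f 0))
      · exact Submodule.mem_sup_left (Submodule.mem_sup_right hf)

end IsChevalleySerre

end LocalPart

/-- The elements of the Cartan subalgebra which measure the two coordinates of a root. -/
def kmD (i : Fin 2) : KM := coweight (gH A2hyp) i

/-- The grading of the Kac–Moody algebra by the level. -/
def kmLevel (k : ℤ) : Submodule ℚ KM := adGrading ℚ (kmD 0) k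

theorem isChevalleySerre_KM : IsChevalleySerre A2hyp (gH A2hyp) (gE A2hyp) (gF A2hyp) :=
  isChevalleySerre_gH_gE_gF A2hyp

theorem eq_top_of_generators_mem {N : LieSubalgebra ℚ KM} (hH : ∀ i, gH A2hyp i ∈ N)
    (hE : ∀ i, gE A2hyp i ∈ N) (hF : ∀ i, gF A2hyp i ∈ N) : N = ⊤ := by
  rw [← top_le_iff, ← lieSpan_range_KMgen A2hyp, LieSubalgebra.lieSpan_le]
  rintro _ ⟨i | i | i, rfl⟩
  exacts [hH i, hE i, hF i]

theorem kmHom_ext {φ ψ : KM →ₗ⁅ℚ⁆ KM} (hH : ∀ i, φ (gH A2hyp i) = ψ (gH A2hyp i))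
    (hE : ∀ i, φ (gE A2hyp i) = ψ (gE A2hyp i)) (hF : ∀ i, φ (gF A2hyp i) = ψ (gF A2hyp i)) :
    φ = ψ := by
  let N : LieSubalgebra ℚ KM :=
    { LinearMap.eqLocus (φ : KM →ₗ[ℚ] KM) (ψ : KM →ₗ[ℚ] KM) with
      lie_mem' := fun {x y} hx hy ↦ by
        replace hx : φ x = ψ x := hx
        replace hy : φ y = ψ y := hy
        change φ ⁅x, y⁆ = ψ ⁅x, y⁆
        rw [LieHom.map_lie, LieHom.map_lie, hx, hy] }
  have hN : N = ⊤ := eq_top_of_generators_mem hH hE hF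
  exact LieHom.ext fun x ↦ (hN ▸ LieSubalgebra.mem_top x : x ∈ N)

theorem isLocalGenerating_KM : IsLocalGenerating (kmD 0) (levelOneSpan (gF A2hyp))
    (levelZeroSpan (gH A2hyp) (gE A2hyp) (gF A2hyp)) (levelOneSpan (gE A2hyp)) :=
  isChevalleySerre_KM.isLocalGenerating fun _ ↦ eq_top_of_generators_mem

theorem isGeneratedGrading_kmLevel : IsGeneratedGrading kmLevel :=
  isLocalGenerating_KM.isGeneratedGrading

theorem kmLevel_zero : kmLevel 0 = levelZeroSpan (gH A2hyp) (gE A2hyp) (gF A2hyp) :=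
  isLocalGenerating_KM.adGrading_eq 0

theorem kmLevel_one : kmLevel 1 = levelOneSpan (gE A2hyp) :=
  isLocalGenerating_KM.adGrading_eq 1

theorem kmLevel_neg_one : kmLevel (-1) = levelOneSpan (gF A2hyp) :=
  isLocalGenerating_KM.adGrading_eq (-1)

instance finiteDimensional_kmLevel (k : ℤ) : FiniteDimensional ℚ (kmLevel k) :=
  isLocalGenerating_KM.finiteDimensional_adGrading (Submodule.fg_span (Set.finite_range _))
    (Submodule.fg_span (Set.toFinite _)) (Submodule.fg_span (Set.finite_range _)) k

theorem coweight_opH (i : Fin 2) : coweight opH i = opD i := by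
  fin_cases i <;> simp only [coweight, opH_zero, opH_one, Fin.zero_eta, Fin.mk_one,
    Matrix.cons_val_zero, Matrix.cons_val_one] <;> module

theorem levelOne_opE (k : Fin 4) : levelOne opE k = lmulT (ι ℚ k) := by
  have h0 : opE 0 = lmulT (ι ℚ 0) := rfl
  fin_cases k <;>
    simp [levelOne, pow_succ, Nat.factorial, h0, lie_opE_one_lmulT, opE_one_ι, smul_smul,
      -lmulT_apply]
  norm_num

namespace IsStable

variable {P : Submodule ℚ T} (hP : IsStable P) (s : ↥(⊤ * P))

theorem rep_gE_mk (i : Fin 2) : hP.rep (gE A2hyp i) (Submodule.Quotient.mk s) =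
    Submodule.Quotient.mk ⟨opE i s, (hP.opE_mem_stabilizer i).1 s.2⟩ := by
  rw [rep, kmLift_gE]
  rfl

theorem rep_gF_mk (i : Fin 2) : hP.rep (gF A2hyp i) (Submodule.Quotient.mk s) =
    Submodule.Quotient.mk ⟨opF i s, (hP.opF_mem_stabilizer i).1 s.2⟩ := by
  rw [rep, kmLift_gF]
  rfl

theorem rep_kmD (i : Fin 2) :
    hP.rep (kmD i) = subquotientMap _ _ ⟨opD i, hP.opD_mem_stabilizer i⟩ := by
  have h : coweight hP.stableH i = ⟨opD i, hP.opD_mem_stabilizer i⟩ := Subtype.ext <|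
    (map_coweight (stabilizer (⊤ * P) (serreIdeal * P)).val.toLieHom hP.stableH i).trans
      (coweight_opH i)
  rw [kmD, map_coweight, ← h]
  exact (congrArg (coweight · i) (funext fun j ↦ kmLift_gH _ j)).trans
    (map_coweight (subquotientMap (⊤ * P) (serreIdeal * P)).toLieHom hP.stableH i).symm

theorem rep_kmD_mk (i : Fin 2) : hP.rep (kmD i) (Submodule.Quotient.mk s) =
    Submodule.Quotient.mk ⟨opD i s, (hP.opD_mem_stabilizer i).1 s.2⟩ := by
  rw [rep_kmD]
  rfl

theorem rep_levelOne_mk (k : Fin 4) :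
    hP.rep (levelOne (gE A2hyp) k) (Submodule.Quotient.mk s) =
      Submodule.Quotient.mk ⟨ι ℚ k * s, mul_mem_top_mul _ s.2⟩ := by
  have h : (levelOne hP.stableE k).1 = lmulT (ι ℚ k) :=
    (map_levelOne (stabilizer (⊤ * P) (serreIdeal * P)).val.toLieHom hP.stableE k).trans
      (levelOne_opE k)
  have hrep : hP.rep (levelOne (gE A2hyp) k) = subquotientMap _ _ (levelOne hP.stableE k) := by
    rw [map_levelOne]
    exact (congrArg (levelOne · k) (funext fun j ↦ kmLift_gE _ j)).trans
      (map_levelOne (subquotientMap (⊤ * P) (serreIdeal * P)).toLieHom hP.stableE k).symm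
  rw [hrep, subquotientMap_mk]
  congr 2
  exact LinearMap.congr_fun h s

end IsStable

/-! ### The invariant form on the local part -/

/-- The homomorphism which keeps the terms of degree at most one of an element of `T`. -/
def linearPart : T →ₐ[ℚ] TrivSqZeroExt ℚ (Fin 4 → ℚ) :=
  lift ℚ fun k ↦ TrivSqZeroExt.inr (Pi.single k 1)

theorem linearPart_ι (k : Fin 4) : linearPart (ι ℚ k) = TrivSqZeroExt.inr (Pi.single k 1) :=
  lift_ι_apply ..

theorem serreIdeal_le_ker_linearPart : serreIdeal ≤ LinearMap.ker linearPart.toLinearMap := by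
  have h : level 1 ≤ (LinearMap.ker (TrivSqZeroExt.fstHom ℚ ℚ (Fin 4 → ℚ)).toLinearMap).comap
      linearPart.toLinearMap := by
    rw [level, pow_one]
    exact Submodule.span_le.mpr (Set.range_subset_iff.mpr fun k ↦ by simp [linearPart_ι])
  have h2 : level 2 ≤ LinearMap.ker linearPart.toLinearMap := by
    refine (pow_add (generatorSpan ℚ (Fin 4)) 1 1).trans_le <|
      Submodule.mul_le.mpr fun s hs t ht ↦ ?_
    have hs := h hs
    have ht := h ht
    ext <;> simp_all
  have h4 : level 4 ≤ LinearMap.ker linearPart.toLinearMap := by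
    refine (pow_add (generatorSpan ℚ (Fin 4)) 2 2).trans_le <|
      Submodule.mul_le.mpr fun s hs t _ ↦ ?_
    have hs := h2 hs
    simp_all
  refine Submodule.mul_le.mpr fun a ha b _ ↦ ?_
  suffices a ∈ LinearMap.ker linearPart.toLinearMap by simp_all
  refine (Submodule.mul_le (P := LinearMap.ker linearPart.toLinearMap)).mpr
    (fun s _ w hw ↦ ?_) ha
  have hw := h4 (serreSpan_le_level hw)
  simp_all

/-- The coefficients of the linear part of an element of the quotient of `T` by the Serre
relations. -/
def linearCoeff : isStable_one.Rep →ₗ[ℚ] Fin 4 → ℚ :=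
  Submodule.liftQ _ (TrivSqZeroExt.sndHom ℚ (Fin 4 → ℚ) ∘ₗ linearPart.toLinearMap ∘ₗ
    Submodule.subtype _) fun s hs ↦ by
      change (s : T) ∈ serreIdeal * 1 at hs
      rw [mul_one] at hs
      exact congrArg TrivSqZeroExt.snd (serreIdeal_le_ker_linearPart hs)

theorem mem_top_mul_one (t : T) : t ∈ (⊤ * 1 : Submodule ℚ T) :=
  (mul_one (⊤ : Submodule ℚ T)).ge trivial

/-- The class of an element of `T` modulo the Serre relations. -/
def toRep : T →ₗ[ℚ] isStable_one.Rep :=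
  Submodule.mkQ _ ∘ₗ LinearMap.codRestrict _ .id mem_top_mul_one

theorem toRep_eq_zero {t : T} : toRep t = 0 ↔ t ∈ serreIdeal := by
  refine (Submodule.Quotient.mk_eq_zero _).trans ?_
  change t ∈ serreIdeal * 1 ↔ t ∈ serreIdeal
  rw [mul_one]

theorem rep_kmD_toRep (i : Fin 2) (t : T) :
    isStable_one.rep (kmD i) (toRep t) = toRep (opD i t) :=
  isStable_one.rep_kmD_mk ⟨t, mem_top_mul_one t⟩ i

theorem rep_gE_toRep (i : Fin 2) (t : T) :
    isStable_one.rep (gE A2hyp i) (toRep t) = toRep (opE i t) :=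
  isStable_one.rep_gE_mk ⟨t, mem_top_mul_one t⟩ i

theorem rep_gF_toRep (i : Fin 2) (t : T) :
    isStable_one.rep (gF A2hyp i) (toRep t) = toRep (opF i t) :=
  isStable_one.rep_gF_mk ⟨t, mem_top_mul_one t⟩ i

theorem rep_levelOne_toRep (k : Fin 4) (t : T) :
    isStable_one.rep (levelOne (gE A2hyp) k) (toRep t) = toRep (ι ℚ k * t) :=
  isStable_one.rep_levelOne_mk ⟨t, mem_top_mul_one t⟩ k

theorem linearCoeff_toRep_ι (k : Fin 4) : linearCoeff (toRep (ι ℚ k)) = Pi.single k 1 :=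
  congrArg TrivSqZeroExt.snd (linearPart_ι k)

/-- The matrix coefficients of the action of the Kac–Moody algebra on the classes of the
generators of `T`. -/
def matrixCoeff (i j : Fin 4) : KM →ₗ[ℚ] ℚ :=
  LinearMap.proj i ∘ₗ linearCoeff ∘ₗ
    LinearMap.flip (isStable_one.rep : KM →ₗ[ℚ] End ℚ isStable_one.Rep) (toRep (ι ℚ j))

theorem matrixCoeff_apply (i j : Fin 4) (x : KM) :
    matrixCoeff i j x = linearCoeff (isStable_one.rep x (toRep (ι ℚ j))) i := rfl

theorem matrixCoeff_kmD (a : Fin 2) (i j : Fin 4) :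
    matrixCoeff i j (kmD a) = if i = j then (![1, j] : Fin 2 → ℚ) a else 0 := by
  rw [matrixCoeff_apply, rep_kmD_toRep]
  fin_cases a <;> simp [linearCoeff_toRep_ι, Pi.single_apply]

theorem matrixCoeff_gE_one (i j : Fin 4) :
    matrixCoeff i j (gE A2hyp 1) =
      if (i : ℕ) = j + 1 then (![1, 2, 3, 0] : Fin 4 → ℚ) j else 0 := by
  rw [matrixCoeff_apply, rep_gE_toRep, opE_one_ι]
  fin_cases i <;> fin_cases j <;> simp [linearCoeff_toRep_ι]

theorem matrixCoeff_gF_one (i j : Fin 4) :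
    matrixCoeff i j (gF A2hyp 1) =
      if (i + 1 : ℕ) = j then (![0, 3, 2, 1] : Fin 4 → ℚ) j else 0 := by
  rw [matrixCoeff_apply, rep_gF_toRep, opF_one_ι]
  fin_cases i <;> fin_cases j <;> simp [linearCoeff_toRep_ι]

theorem matrixCoeff_gH (a : Fin 2) (i j : Fin 4) : matrixCoeff i j (gH A2hyp a) =
    if i = j then (![2 - 3 * j, 2 * j - 3] : Fin 2 → ℚ) a else 0 := by
  rw [← sum_smul_coweight (gH A2hyp), map_sum]
  change ∑ b, matrixCoeff i j ((A2hyp a b : ℚ) • kmD b) = _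
  fin_cases a <;> simp [matrixCoeff_kmD, A2hyp_self, A2hyp_of_ne] <;> grind

/-- The standard basis of `kmLevel 0`. -/
def levelZeroBasis : Fin 4 → KM := ![gH A2hyp 0, gH A2hyp 1, gE A2hyp 1, gF A2hyp 1]

/-- The basis of `kmLevel 0` dual to `levelZeroBasis` with respect to `levelZeroForm`. -/
def levelZeroDual : Fin 4 → KM := ![kmD 0, kmD 1, gF A2hyp 1, gE A2hyp 1]

/-- Extensions to the whole algebra of the coordinates of `kmLevel 0` with respect to
`levelZeroBasis`. -/
def levelZeroCoord : Fin 4 → KM →ₗ[ℚ] ℚ :=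
  ![(1 / 5 : ℚ) • (matrixCoeff 0 0 - (3 : ℚ) • matrixCoeff 1 1),
    -(1 / 5 : ℚ) • (matrixCoeff 0 0 + (2 : ℚ) • matrixCoeff 1 1),
    matrixCoeff 1 0, (1 / 3 : ℚ) • matrixCoeff 0 1]

theorem levelZeroCoord_levelZeroBasis (i j : Fin 4) :
    levelZeroCoord i (levelZeroBasis j) = if i = j then 1 else 0 := by
  fin_cases i <;> fin_cases j <;> norm_num [levelZeroCoord, levelZeroBasis, matrixCoeff_gH,
    matrixCoeff_gE_one, matrixCoeff_gF_one]

theorem kmLevel_zero_eq_span : kmLevel 0 = Submodule.span ℚ (Set.range levelZeroBasis) := by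
  rw [kmLevel_zero]
  refine le_antisymm (levelZeroSpan_le.mpr ?_) (Submodule.span_le.mpr ?_)
  · have (i : Fin 4) := Submodule.subset_span (R := ℚ) (Set.mem_range_self (f := levelZeroBasis) i)
    exact ⟨fun i ↦ by fin_cases i; exacts [this 0, this 1], this 2, this 3⟩
  · obtain ⟨hh, he, hf⟩ := mem_levelZeroSpan (gH A2hyp) (gE A2hyp) (gF A2hyp)
    rintro _ ⟨i, rfl⟩
    fin_cases i
    exacts [hh 0, hh 1, he, hf]

theorem sum_levelZeroCoord_smul {x : KM} (hx : x ∈ kmLevel 0) :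
    ∑ i, levelZeroCoord i x • levelZeroBasis i = x := by
  rw [kmLevel_zero_eq_span, Submodule.mem_span_range_iff_exists_fun] at hx
  obtain ⟨c, rfl⟩ := hx
  simp [levelZeroCoord_levelZeroBasis]

/-- The restriction of the standard invariant form to `kmLevel 0`, in coordinates. -/
def levelZeroForm : KM →ₗ[ℚ] KM →ₗ[ℚ] ℚ :=
  (Matrix.toBilin' !![2, -3, 0, 0; -3, 2, 0, 0; 0, 0, 0, 1; 0, 0, 1, 0]).compl₁₂
    (LinearMap.pi levelZeroCoord) (LinearMap.pi levelZeroCoord)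

theorem levelZeroForm_apply (x y : KM) : levelZeroForm x y =
    levelZeroCoord 0 x * (2 * levelZeroCoord 0 y - 3 * levelZeroCoord 1 y) +
    levelZeroCoord 1 x * (2 * levelZeroCoord 1 y - 3 * levelZeroCoord 0 y) +
    levelZeroCoord 2 x * levelZeroCoord 3 y + levelZeroCoord 3 x * levelZeroCoord 2 y := by
  simp [levelZeroForm, Matrix.toBilin'_apply, Fin.sum_univ_four]
  ring

theorem levelZeroForm_symm (x y : KM) : levelZeroForm x y = levelZeroForm y x := by
  simp only [levelZeroForm_apply]
  ring

theorem levelZeroCoord_kmD (i : Fin 4) (a : Fin 2) : levelZeroCoord i (kmD a) =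
    (![![-2 / 5, -3 / 5, 0, 0], ![-3 / 5, -2 / 5, 0, 0]] : Fin 2 → Fin 4 → ℚ) a i := by
  fin_cases i <;> fin_cases a <;> norm_num [levelZeroCoord, matrixCoeff_kmD]

theorem levelZeroForm_levelZeroDual (x : KM) (i : Fin 4) :
    levelZeroForm x (levelZeroDual i) = levelZeroCoord i x := by
  have hE (j : Fin 4) := levelZeroCoord_levelZeroBasis j 2
  have hF (j : Fin 4) := levelZeroCoord_levelZeroBasis j 3
  simp only [levelZeroBasis, Matrix.cons_val] at hE hF
  fin_cases i <;> simp [levelZeroForm_apply, levelZeroDual, levelZeroCoord_kmD, hE, hF] <;> ring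

theorem lie_sum_smul_levelZeroBasis (a b : Fin 4 → ℚ) :
    ⁅∑ j, a j • levelZeroBasis j, ∑ j, b j • levelZeroBasis j⁆ =
      ∑ j, (![0, a 2 * b 3 - a 3 * b 2, (2 * a 1 - 3 * a 0) * b 2 - a 2 * (2 * b 1 - 3 * b 0),
        a 3 * (2 * b 1 - 3 * b 0) - (2 * a 1 - 3 * a 0) * b 3] : Fin 4 → ℚ) j •
        levelZeroBasis j := by
  have r := isChevalleySerre_KM
  have h₀ : A2hyp 0 1 = -3 := A2hyp_of_ne 0 1 zero_ne_one
  have hfe : ⁅gF A2hyp 1, gE A2hyp 1⁆ = -gH A2hyp 1 := by rw [← lie_skew, r.lie_e_f]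
  have hfh (j : Fin 2) : ⁅gF A2hyp 1, gH A2hyp j⁆ = A2hyp j 1 • gF A2hyp 1 := by
    rw [← lie_skew, r.lie_h_f, neg_neg]
  have heh (j : Fin 2) : ⁅gE A2hyp 1, gH A2hyp j⁆ = -(A2hyp j 1 • gE A2hyp 1) := by
    rw [← lie_skew, r.lie_h_e]
  simp only [Fin.sum_univ_four, levelZeroBasis, Matrix.cons_val, lie_add, add_lie, lie_smul,
    smul_lie, lie_self, hfe, hfh, heh, r.lie_h_h, r.lie_h_e, r.lie_h_f, r.lie_e_f, A2hyp_self, h₀]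
  generalize gE A2hyp 1 = x, gF A2hyp 1 = y, gH A2hyp 1 = z
  module

theorem levelZeroCoord_lie {x y : KM} (hx : x ∈ kmLevel 0) (hy : y ∈ kmLevel 0) (i : Fin 4) :
    levelZeroCoord i ⁅x, y⁆ = (![0,
      levelZeroCoord 2 x * levelZeroCoord 3 y - levelZeroCoord 3 x * levelZeroCoord 2 y,
      (2 * levelZeroCoord 1 x - 3 * levelZeroCoord 0 x) * levelZeroCoord 2 y -
        levelZeroCoord 2 x * (2 * levelZeroCoord 1 y - 3 * levelZeroCoord 0 y),
      levelZeroCoord 3 x * (2 * levelZeroCoord 1 y - 3 * levelZeroCoord 0 y) -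
        (2 * levelZeroCoord 1 x - 3 * levelZeroCoord 0 x) * levelZeroCoord 3 y] :
        Fin 4 → ℚ) i := by
  conv_lhs => rw [← sum_levelZeroCoord_smul hx, ← sum_levelZeroCoord_smul hy]
  rw [lie_sum_smul_levelZeroBasis, map_sum]
  simp [levelZeroCoord_levelZeroBasis]

theorem sum_levelZeroForm_smul_levelZeroDual (j : Fin 4) :
    ∑ i, levelZeroForm (levelZeroBasis i) (levelZeroBasis j) • levelZeroDual i =
      levelZeroBasis j := by
  simp only [levelZeroForm_apply, levelZeroCoord_levelZeroBasis]
  have h₀ := sum_smul_coweight (gH A2hyp) 0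
  have h₁ := sum_smul_coweight (gH A2hyp) 1
  rw [Fin.sum_univ_two] at h₀ h₁
  fin_cases j <;>
    simp [Fin.sum_univ_four, levelZeroBasis, levelZeroDual, ← h₀, ← h₁, A2hyp_self, A2hyp_of_ne,
      kmD]

theorem isDualPair_levelZero : IsDualPair levelZeroForm (kmLevel 0) (kmLevel 0)
    levelZeroBasis levelZeroDual where
  left_mem i := by
    rw [kmLevel_zero_eq_span]
    exact Submodule.subset_span ⟨i, rfl⟩
  right_mem i := by
    obtain ⟨-, he, hf⟩ := mem_levelZeroSpan (gH A2hyp) (gE A2hyp) (gF A2hyp)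
    have lie_h (j : Fin 2) : ⁅kmD 0, gH A2hyp j⁆ = 0 := isChevalleySerre_KM.lie_coweight_h 0 j
    have hD (i : Fin 2) : kmD i ∈ kmLevel 0 := by
      refine mem_adGrading.mpr ?_
      change ⁅kmD 0, coweight (gH A2hyp) i⁆ = _
      fin_cases i <;> simp [coweight, lie_h]
    rw [← kmLevel_zero] at he hf
    fin_cases i
    exacts [hD 0, hD 1, hf, he]
  sum_left ha := by simpa only [levelZeroForm_levelZeroDual] using sum_levelZeroCoord_smul ha
  sum_right {b} hb := by
    suffices kmLevel 0 ≤ LinearMap.eqLocus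
        (∑ i, (levelZeroForm (levelZeroBasis i)).smulRight (levelZeroDual i)) .id by
      simpa using this hb
    rw [kmLevel_zero_eq_span, Submodule.span_le]
    rintro _ ⟨j, rfl⟩
    simpa using sum_levelZeroForm_smul_levelZeroDual j

theorem IsChevalleySerre.lie_e_zero_levelOne {L : Type*} [LieRing L] [LieAlgebra ℚ L]
    {h e f : Fin 2 → L} (r : IsChevalleySerre A2hyp h e f) (k : Fin 4) :
    ⁅e 0, levelOne f k⁆ = ![h 0, (-3 : ℚ) • f 1, 0, 0] k := by
  have hfh : ⁅f 1, h 0⁆ = (-3 : ℚ) • f 1 := by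
    rw [← lie_skew, r.lie_h_f, neg_neg, A2hyp_of_ne 0 1 zero_ne_one]
    module
  have hpow := r.opposite.lie_f_ad_e_pow_of_ne (i := 1) (k := 0) one_ne_zero (f 0) k
  rw [levelOne, lie_smul, hpow, r.lie_e_f]
  fin_cases k <;> simp [pow_succ, hfh, Nat.factorial]

theorem levelZeroForm_lie {x y z : KM} (hx : x ∈ kmLevel 0) (hy : y ∈ kmLevel 0)
    (hz : z ∈ kmLevel 0) : levelZeroForm ⁅x, y⁆ z = levelZeroForm x ⁅y, z⁆ := by
  simp only [levelZeroForm_apply, levelZeroCoord_lie hx hy, levelZeroCoord_lie hy hz,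
    Matrix.cons_val]
  ring

theorem lie_levelOne_levelZeroDual (k i : Fin 4) :
    ⁅levelOne (gF A2hyp) k, levelZeroDual i⁆ = (![levelOne (gF A2hyp) k,
      (k : ℚ) • levelOne (gF A2hyp) k, -⁅gF A2hyp 1, levelOne (gF A2hyp) k⁆,
      -⁅gE A2hyp 1, levelOne (gF A2hyp) k⁆] : Fin 4 → KM) i := by
  have h (a : Fin 2) :
      ⁅levelOne (gF A2hyp) k, kmD a⁆ = (![1, k] : Fin 2 → ℚ) a • levelOne (gF A2hyp) k := by
    have := isChevalleySerre_KM.opposite.lie_coweight_levelOne a k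
    rwa [coweight_neg, neg_lie, lie_skew] at this
  fin_cases i
  exacts [(h 0).trans (one_smul ℚ _), h 1, (lie_skew _ _).symm, (lie_skew _ _).symm]

theorem levelZeroCoord_lie_gE_zero (k i : Fin 4) :
    levelZeroCoord i ⁅gE A2hyp 0, levelOne (gF A2hyp) k⁆ =
      levelZeroCoord 0 ⁅gE A2hyp 0, ⁅levelOne (gF A2hyp) k, levelZeroDual i⁆⁆ := by
  have r := isChevalleySerre_KM
  have h₀ (i : Fin 4) : levelZeroCoord i (gH A2hyp 0) = _ := levelZeroCoord_levelZeroBasis i 0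
  have h₁ (i : Fin 4) : levelZeroCoord i (gF A2hyp 1) = _ := levelZeroCoord_levelZeroBasis i 3
  rw [lie_levelOne_levelZeroDual, r.opposite.lie_e_one_levelOne, r.opposite.lie_f_one_levelOne]
  fin_cases i <;> fin_cases k <;> simp [r.lie_e_f, r.lie_e_zero_levelOne, h₀, h₁]

theorem levelZeroForm_lie_gE_zero {q z : KM} (hq : q ∈ kmLevel (-1)) (hz : z ∈ kmLevel 0) :
    levelZeroForm ⁅gE A2hyp 0, q⁆ z = levelZeroCoord 0 ⁅gE A2hyp 0, ⁅q, z⁆⁆ := by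
  rw [← lie_skew q z, lie_neg, map_neg]
  suffices kmLevel (-1) ≤ LinearMap.eqLocus
      (levelZeroForm.flip z ∘ₗ (LieAlgebra.ad ℚ KM (gE A2hyp 0) : KM →ₗ[ℚ] KM))
      (-(levelZeroCoord 0 ∘ₗ (LieAlgebra.ad ℚ KM (gE A2hyp 0) : KM →ₗ[ℚ] KM) ∘ₗ
        (LieAlgebra.ad ℚ KM z : KM →ₗ[ℚ] KM))) from this hq
  rw [kmLevel_neg_one, levelOneSpan_le]
  intro k
  change levelZeroForm ⁅gE A2hyp 0, levelOne (gF A2hyp) k⁆ z =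
    -levelZeroCoord 0 ⁅gE A2hyp 0, ⁅z, levelOne (gF A2hyp) k⁆⁆
  rw [← map_neg, ← lie_neg, lie_skew, ← isDualPair_levelZero.sum_right hz]
  simp only [lie_sum, lie_smul, map_sum, map_smul, levelZeroForm_levelZeroDual,
    levelZeroCoord_lie_gE_zero]

theorem levelZeroCoord_zero_lie {x y : KM} (hx : x ∈ kmLevel 0) (hy : y ∈ kmLevel 0) :
    levelZeroCoord 0 ⁅x, y⁆ = 0 :=
  levelZeroCoord_lie hx hy 0

theorem gE_one_mem_kmLevel : gE A2hyp 1 ∈ kmLevel 0 := isDualPair_levelZero.left_mem 2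

theorem gF_one_mem_kmLevel : gF A2hyp 1 ∈ kmLevel 0 := isDualPair_levelZero.left_mem 3

theorem levelZeroForm_lie_ad_pow (n : ℕ) {q z : KM} (hq : q ∈ kmLevel (-1)) (hz : z ∈ kmLevel 0) :
    levelZeroForm ⁅(LieAlgebra.ad ℚ KM (gE A2hyp 1) ^ n) (gE A2hyp 0), q⁆ z =
      levelZeroCoord 0 ⁅(LieAlgebra.ad ℚ KM (gE A2hyp 1) ^ n) (gE A2hyp 0), ⁅q, z⁆⁆ := by
  have hF := isGeneratedGrading_kmLevel
  have hx := gE_one_mem_kmLevel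
  induction n generalizing q z with
  | zero => exact levelZeroForm_lie_gE_zero hq hz
  | succ n ih =>
    have hp : (LieAlgebra.ad ℚ KM (gE A2hyp 1) ^ n) (gE A2hyp 0) ∈ kmLevel 1 :=
      Module.End.pow_apply_mem_of_forall_mem n (fun y hy ↦ hF.lie_mem_of_eq hx hy (zero_add 1)) _
        (kmLevel_one ▸ levelOne_zero (gE A2hyp) ▸ levelOne_mem (gE A2hyp) 0)
    rw [pow_succ', Module.End.mul_apply, LieAlgebra.ad_apply]
    set p := (LieAlgebra.ad ℚ KM (gE A2hyp 1) ^ n) (gE A2hyp 0)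
    set x := gE A2hyp 1
    have hqz := hF.lie_mem_of_eq hq hz (add_zero (-1))
    have hpq := hF.lie_mem_of_eq hp hq (add_neg_cancel 1)
    rw [lie_lie x p q, lie_lie x p ⁅q, z⁆, map_sub, map_sub, LinearMap.sub_apply,
      levelZeroCoord_zero_lie hx (hF.lie_mem_of_eq hp hqz (add_neg_cancel 1)), leibniz_lie x q z,
      lie_add, map_add, ← lie_skew x ⁅p, q⁆, map_neg, LinearMap.neg_apply,
      levelZeroForm_lie hpq hx hz, ih hq (hF.lie_mem_of_eq hx hz (zero_add 0)),
      ih (hF.lie_mem_of_eq hx hq (zero_add (-1))) hz]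
    ring

theorem isLocalForm_levelZeroForm : IsLocalForm kmLevel (levelZeroCoord 0) levelZeroForm where
  map_lie := levelZeroCoord_zero_lie
  symm _ _ := levelZeroForm_symm _ _
  lie_apply := levelZeroForm_lie
  lie_apply_one {p q z} hp hq hz := by
    suffices kmLevel 1 ≤ LinearMap.eqLocus
        (levelZeroForm.flip z ∘ₗ (LieAlgebra.ad ℚ KM : KM →ₗ[ℚ] End ℚ KM).flip q)
        (levelZeroCoord 0 ∘ₗ (LieAlgebra.ad ℚ KM : KM →ₗ[ℚ] End ℚ KM).flip ⁅q, z⁆) from this hp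
    rw [kmLevel_one, levelOneSpan_le]
    intro k
    change levelZeroForm ⁅levelOne (gE A2hyp) k, q⁆ z =
      levelZeroCoord 0 ⁅levelOne (gE A2hyp) k, ⁅q, z⁆⁆
    simp [levelOne, levelZeroForm_lie_ad_pow k hq hz]

/-! ### The Casimir operator -/

section Casimir

variable {A : Type*} [Ring A] [Algebra ℚ A]

/-- The Casimir operator of `KM` in a representation, without the terms `φ (e i) * φ (f i)` from the
positive levels. The multiple of `kmD 0` makes the whole operator commute with `KM`. -/
def levelZeroCasimir (φ : KM →ₗ⁅ℚ⁆ A) : A :=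
  (2 : ℚ)⁻¹ • (casimirTerm φ levelZeroBasis levelZeroDual - (5 : ℚ) • φ (kmD 0))

theorem IsChevalleySerre.lie_h_levelOne {L : Type*} [LieRing L] [LieAlgebra ℚ L]
    {h e f : Fin 2 → L} (r : IsChevalleySerre A2hyp h e f) (i : Fin 2) (k : Fin 4) :
    ⁅h i, levelOne e k⁆ = (![2 - 3 * k, 2 * k - 3] : Fin 2 → ℚ) i • levelOne e k := by
  rw [← sum_smul_coweight h i, Fin.sum_univ_two, add_lie, smul_lie, smul_lie,
    r.lie_coweight_levelOne, r.lie_coweight_levelOne]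
  fin_cases i <;> simp [A2hyp_self, A2hyp_of_ne] <;> module

theorem IsChevalleySerre.casimir_levelOne {L : Type*} [LieRing L] [LieAlgebra ℚ L]
    {h e f : Fin 2 → L} (r : IsChevalleySerre A2hyp h e f) (k : Fin 4) :
    ⁅coweight h 0, ⁅h 0, levelOne e k⁆⁆ + ⁅coweight h 1, ⁅h 1, levelOne e k⁆⁆ +
      ⁅f 1, ⁅e 1, levelOne e k⁆⁆ + ⁅e 1, ⁅f 1, levelOne e k⁆⁆ = (5 : ℚ) • levelOne e k := by
  rw [r.lie_h_levelOne, r.lie_h_levelOne, lie_smul, lie_smul, r.lie_coweight_levelOne,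
    r.lie_coweight_levelOne, r.lie_e_one_levelOne, r.lie_f_one_levelOne]
  fin_cases k <;> simp [-levelOne_zero, r.lie_e_one_levelOne, r.lie_f_one_levelOne] <;> module

theorem sum_lie_lie_levelZero {x : KM} (hx : x ∈ kmLevel 1) :
    ∑ i, ⁅levelZeroDual i, ⁅levelZeroBasis i, x⁆⁆ = (5 : ℚ) • x := by
  let a (y : KM) : KM →ₗ[ℚ] KM := LieAlgebra.ad ℚ KM y
  suffices kmLevel 1 ≤ LinearMap.eqLocus
      (∑ i, a (levelZeroDual i) ∘ₗ a (levelZeroBasis i)) ((5 : ℚ) • .id) by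
    simpa [a] using this hx
  rw [kmLevel_one, levelOneSpan_le]
  intro k
  simpa [a, Fin.sum_univ_four, levelZeroBasis, levelZeroDual, kmD] using
    isChevalleySerre_KM.casimir_levelOne k

theorem sum_levelZeroBasis_levelZeroDual_comm {M : Type*} [AddCommGroup M] [Module ℚ M]
    (β : KM →ₗ[ℚ] KM →ₗ[ℚ] M) :
    ∑ i, β (levelZeroBasis i) (levelZeroDual i) = ∑ i, β (levelZeroDual i) (levelZeroBasis i) := by
  have h₀ := sum_smul_coweight (gH A2hyp) 0
  have h₁ := sum_smul_coweight (gH A2hyp) 1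
  rw [Fin.sum_univ_two] at h₀ h₁
  simp [Fin.sum_univ_four, levelZeroBasis, levelZeroDual, ← h₀, ← h₁, A2hyp_self,
    A2hyp_of_ne, kmD]
  module

theorem lie_levelZeroCasimir_of_mem_zero (φ : KM →ₗ⁅ℚ⁆ A) {z : KM} (hz : z ∈ kmLevel 0) :
    ⁅φ z, levelZeroCasimir φ⁆ = 0 := by
  have hD : ⁅z, kmD 0⁆ = 0 := by
    rw [← lie_skew, mem_adGrading.mp hz, zero_smul, neg_zero]
  have h₀ : IsDualPair (gradedForm (levelZeroCoord 0) levelZeroForm 0) (kmLevel 0) (kmLevel (-0))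
      levelZeroBasis levelZeroDual := by
    rw [gradedForm_zero, neg_zero]
    exact isDualPair_levelZero
  rw [levelZeroCasimir, lie_smul, lie_sub, lie_smul, ← LieHom.map_lie, hD, map_zero,
    lie_casimirTerm_eq_sub isGeneratedGrading_kmLevel isLocalForm_levelZeroForm φ (add_zero 0)
      h₀ h₀ hz, sub_self, smul_zero, sub_zero, smul_zero]

theorem lie_levelZeroCasimir (φ : KM →ₗ⁅ℚ⁆ A) {x : KM} (hx : x ∈ kmLevel 1) :
    ⁅φ x, levelZeroCasimir φ⁆ = casimirBoundary φ levelZeroBasis levelZeroDual x := by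
  have hD : ⁅x, kmD 0⁆ = -x := by
    rw [← lie_skew, mem_adGrading.mp hx, one_smul]
  have hcomm : ∑ i, φ (levelZeroBasis i) * φ ⁅x, levelZeroDual i⁆ =
      casimirBoundary φ levelZeroBasis levelZeroDual x - (5 : ℚ) • φ x := by
    have := sum_levelZeroBasis_levelZeroDual_comm ((LinearMap.mul ℚ A).compl₁₂ (φ : KM →ₗ[ℚ] A)
      ((φ : KM →ₗ[ℚ] A) ∘ₗ (LieAlgebra.ad ℚ KM x : KM →ₗ[ℚ] KM)))
    simp only [LinearMap.compl₁₂_apply] at this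
    refine this.trans ?_
    rw [← map_smul, ← sum_lie_lie_levelZero hx, map_sum, casimirBoundary,
      ← Finset.sum_sub_distrib]
    refine Finset.sum_congr rfl fun i _ ↦ ?_
    rw [← lie_skew _ x, lie_neg, lie_skew, LieHom.map_lie φ _ (levelZeroDual i), Ring.lie_def,
      sub_sub_cancel]
    rfl
  rw [levelZeroCasimir, lie_smul, lie_sub, lie_smul, ← LieHom.map_lie, hD, lie_casimirTerm, hcomm,
    map_neg]
  module

end Casimir

variable {M : Type*} [AddCommGroup M] [Module ℚ M]

theorem levelZeroCasimir_apply (φ : KM →ₗ⁅ℚ⁆ End ℚ M) {m : M} {a b : ℚ}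
    (ha : φ (kmD 0) m = a • m) (hb : φ (kmD 1) m = b • m) (hf : φ (gF A2hyp 1) m = 0) :
    levelZeroCasimir φ m = (a ^ 2 + b ^ 2 - 3 * a * b - a - b) • m := by
  have hef : φ (gF A2hyp 1) (φ (gE A2hyp 1) m) = -φ (gH A2hyp 1) m := by
    rw [← isChevalleySerre_KM.lie_e_f, LieHom.map_lie, Ring.lie_def]
    simp [hf]
  have hH (i : Fin 2) : φ (gH A2hyp i) m = (A2hyp i 0 * a + A2hyp i 1 * b : ℚ) • m := by
    rw [← sum_smul_coweight (gH A2hyp) i, Fin.sum_univ_two]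
    change φ ((A2hyp i 0 : ℚ) • kmD 0 + (A2hyp i 1 : ℚ) • kmD 1) m = _
    simp only [map_add, map_smul, LinearMap.add_apply, LinearMap.smul_apply, ha, hb, smul_smul,
      add_smul]
  have h₀ := hH 0
  have h₁ := hH 1
  rw [h₁] at hef
  simp [levelZeroCasimir, casimirTerm, Fin.sum_univ_four, levelZeroBasis, levelZeroDual, ha, hb, hf,
    h₀, h₁, hef, A2hyp_self, A2hyp_of_ne]
  module

/-- The invariant form pairs the levels `l` and `-l` of `KM` perfectly. -/
def HasDualBases (l : ℕ) : Prop :=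
  ∃ (N : ℕ) (e f : Fin N → KM), IsDualPair (gradedForm (levelZeroCoord 0) levelZeroForm l)
    (kmLevel l) (kmLevel (-l)) e f

theorem IsGeneratedModule.levelZeroCasimir_apply_eq_zero {M : Type*} [AddCommGroup M] [Module ℚ M]
    {φ : KM →ₗ⁅ℚ⁆ End ℚ M} {R : ℤ → Submodule ℚ M} (hR : IsGeneratedModule kmLevel φ R)
    (hC₀ : ∀ m ∈ R 0, levelZeroCasimir φ m = 0) {n : ℕ} (hdual : ∀ l ≤ n, HasDualBases l) {m : M}
    (hm : m ∈ R n) (hm' : ∀ y ∈ kmLevel (-1), φ y m = 0) : levelZeroCasimir φ m = 0 := by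
  have h (l : ℕ) : ∃ (N : ℕ) (e f : Fin N → KM), (l ≤ n →
      IsDualPair (gradedForm (levelZeroCoord 0) levelZeroForm l) (kmLevel l) (kmLevel (-l)) e f) ∧
      (l = 0 → ∀ x ∈ kmLevel 1, ⁅φ x, levelZeroCasimir φ⁆ = casimirBoundary φ e f x) := by
    obtain rfl | hl := eq_or_ne l 0
    · refine ⟨4, levelZeroBasis, levelZeroDual, fun _ ↦ ?_, fun _ _ ↦ lie_levelZeroCasimir φ⟩
      simpa [gradedForm_zero] using isDualPair_levelZero
    · by_cases hln : l ≤ n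
      · obtain ⟨N, e, f, hef⟩ := hdual l hln
        exact ⟨N, e, f, fun _ ↦ hef, fun h ↦ absurd h hl⟩
      · exact ⟨0, Fin.elim0, Fin.elim0, fun h ↦ absurd h hln, fun h ↦ absurd h hl⟩
  choose N e f hef hC using h
  exact hR.apply_eq_zero_of_singular isGeneratedGrading_kmLevel isLocalForm_levelZeroForm hef
    (hC 0 rfl) hC₀ hm hm'

/-- On a module generated by `R 0`, the Casimir operator is determined on singular vectors by its
vanishing on `R 0`, while on weight vectors it is a scalar. -/
theorem IsGeneratedModule.casimir_smul_eq_zero {M : Type*} [AddCommGroup M] [Module ℚ M]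
    {φ : KM →ₗ⁅ℚ⁆ End ℚ M} {R : ℤ → Submodule ℚ M} (hR : IsGeneratedModule kmLevel φ R)
    (hC₀ : ∀ m ∈ R 0, levelZeroCasimir φ m = 0) {n : ℕ} (hdual : ∀ l ≤ n, HasDualBases l) {m : M}
    (hm : m ∈ R n) (hm' : ∀ y ∈ kmLevel (-1), φ y m = 0) (hf : φ (gF A2hyp 1) m = 0) {a b : ℚ}
    (ha : φ (kmD 0) m = a • m) (hb : φ (kmD 1) m = b • m) :
    (a ^ 2 + b ^ 2 - 3 * a * b - a - b) • m = 0 :=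
  (levelZeroCasimir_apply φ ha hb hf).symm.trans <|
    hR.levelZeroCasimir_apply_eq_zero hC₀ hdual hm hm'

namespace IsStable

variable {P : Submodule ℚ T} (hP : IsStable P)

/-- The image of `P` in `hP.Rep`, from which `hP.Rep` is generated. -/
def lowest : Submodule ℚ hP.Rep := (P.submoduleOf (⊤ * P)).map (Submodule.mkQ _)

theorem eq_top_of_lowest_le {Q : Submodule ℚ hP.Rep} (hQ : hP.lowest ≤ Q)
    (hmem : ∀ x ∈ kmLevel 1, ∀ m ∈ Q, hP.rep x m ∈ Q) : Q = ⊤ := by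
  suffices ⊤ * P ≤ (Q.comap (Submodule.mkQ _)).map (⊤ * P).subtype by
    refine Submodule.eq_top_iff'.mpr fun m ↦ ?_
    obtain ⟨s, rfl⟩ := Submodule.Quotient.mk_surjective _ m
    exact mk_mem_of_le_map this s.2
  refine top_mul_le (fun p hp ↦ ⟨⟨p, le_top_mul hp⟩, hQ ⟨_, hp, rfl⟩, rfl⟩) ?_
  rintro k _ ⟨s, hs, rfl⟩
  refine ⟨⟨ι ℚ k * s, mul_mem_top_mul _ s.2⟩, ?_, rfl⟩
  have := hmem _ (kmLevel_one ▸ levelOne_mem (gE A2hyp) k) _ hs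
  rwa [Submodule.mkQ_apply, rep_levelOne_mk] at this

variable {c : ℤ} (h : P ≤ (opD 0).eigenspace (c : ℚ))
include h

theorem lowest_le_eigenspace : hP.lowest ≤ (hP.rep (kmD 0)).eigenspace (c : ℚ) := by
  rintro _ ⟨s, hs, rfl⟩
  rw [End.mem_eigenspace_iff, Submodule.mkQ_apply, rep_kmD_mk]
  exact congrArg Submodule.Quotient.mk <| Subtype.ext (End.mem_eigenspace_iff.mp (h hs))

theorem isGeneratedModule_rep : IsGeneratedModule kmLevel hP.rep
    fun d ↦ (hP.rep (kmD 0)).eigenspace ((d + c : ℤ) : ℚ) :=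
  isGeneratedModule_eigenspace (hP.lowest_le_eigenspace h) fun _ ↦ hP.eq_top_of_lowest_le

theorem eigenspace_le_lowest : (hP.rep (kmD 0)).eigenspace (c : ℚ) ≤ hP.lowest :=
  eigenspace_le_of_generates (hP.lowest_le_eigenspace h) fun _ ↦ hP.eq_top_of_lowest_le

end IsStable

/-- The Chevalley involution `e i ↦ f i`, `f i ↦ e i`, `h i ↦ -h i`. -/
def chevalleyInvolution : KM →ₗ⁅ℚ⁆ KM := kmLift isChevalleySerre_KM.opposite

theorem chevalleyInvolution_involutive (x : KM) :
    chevalleyInvolution (chevalleyInvolution x) = x := by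
  suffices chevalleyInvolution.comp chevalleyInvolution = LieHom.id from LieHom.congr_fun this x
  apply kmHom_ext <;> simp [chevalleyInvolution]

theorem chevalleyInvolution_kmD (i : Fin 2) : chevalleyInvolution (kmD i) = -kmD i := by
  rw [kmD, map_coweight, ← coweight_neg]
  exact congrArg (coweight · i) (funext fun j ↦ kmLift_gH _ j)

theorem chevalleyInvolution_mem {k : ℤ} {x : KM} (hx : x ∈ kmLevel k) :
    chevalleyInvolution x ∈ kmLevel (-k) := by
  rw [kmLevel, mem_adGrading] at hx ⊢
  rw [← neg_eq_iff_eq_neg.mpr (chevalleyInvolution_kmD 0), neg_lie, ← LieHom.map_lie, hx, map_zsmul,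
    neg_smul]

theorem levelZeroCoord_chevalleyInvolution {x : KM} (hx : x ∈ kmLevel 0) :
    levelZeroCoord 0 (chevalleyInvolution x) = -levelZeroCoord 0 x := by
  suffices kmLevel 0 ≤ LinearMap.eqLocus
      (levelZeroCoord 0 ∘ₗ (chevalleyInvolution : KM →ₗ[ℚ] KM)) (-levelZeroCoord 0) from this hx
  rw [kmLevel_zero_eq_span, Submodule.span_le]
  rintro _ ⟨i, rfl⟩
  have h (j : Fin 4) := levelZeroCoord_levelZeroBasis 0 j
  change levelZeroCoord 0 (chevalleyInvolution (levelZeroBasis i)) =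
    -levelZeroCoord 0 (levelZeroBasis i)
  have h₁ : levelZeroCoord 0 (gH A2hyp 0) = _ := h 0
  have h₂ : levelZeroCoord 0 (gH A2hyp 1) = _ := h 1
  have h₃ : levelZeroCoord 0 (gE A2hyp 1) = _ := h 2
  have h₄ : levelZeroCoord 0 (gF A2hyp 1) = _ := h 3
  fin_cases i <;> simp [levelZeroBasis, chevalleyInvolution, h₁, h₂, h₃, h₄]

/-- The elements of level `l` which are annihilated by all elements of level `-1`. -/
def singularLevel (l : ℤ) : Submodule ℚ KM :=
  kmLevel l ⊓ ⨅ y ∈ kmLevel (-1), LinearMap.ker (LieAlgebra.ad ℚ KM y : KM →ₗ[ℚ] KM)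

theorem mem_singularLevel {l : ℤ} {a : KM} :
    a ∈ singularLevel l ↔ a ∈ kmLevel l ∧ ∀ y ∈ kmLevel (-1), ⁅y, a⁆ = 0 := by
  simp [singularLevel]

theorem lie_mem_singularLevel {l : ℤ} {z a : KM} (hz : z ∈ kmLevel 0) (ha : a ∈ singularLevel l) :
    ⁅z, a⁆ ∈ singularLevel l := by
  rw [mem_singularLevel] at ha ⊢
  have hF := isGeneratedGrading_kmLevel
  refine ⟨hF.lie_mem_of_eq hz ha.1 (zero_add l), fun y hy ↦ ?_⟩
  rw [leibniz_lie, ha.2 y hy, lie_zero, add_zero, ha.2 _ (hF.lie_mem_of_eq hy hz (add_zero (-1)))]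

theorem eq_zero_of_gradedForm_eq_zero {l : ℕ} (h : ∀ k : ℕ, k ≤ l → k ≠ 0 → singularLevel k = ⊥)
    {a : KM} (ha : a ∈ kmLevel l)
    (h₀ : ∀ b ∈ kmLevel (-l), gradedForm (levelZeroCoord 0) levelZeroForm l a b = 0) : a = 0 := by
  induction l generalizing a with
  | zero =>
    rw [← isDualPair_levelZero.sum_left ha]
    exact Finset.sum_eq_zero fun i _ ↦ by
      rw [← gradedForm_zero (τ := levelZeroCoord 0) (κ := levelZeroForm)]
      exact (congrArg (· • _) (h₀ _ (by simpa using isDualPair_levelZero.right_mem i))).trans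
        (zero_smul ℚ _)
  | succ l ih =>
    have hF := isGeneratedGrading_kmLevel
    suffices a ∈ singularLevel (l + 1 : ℕ) from
      (Submodule.mem_bot ℚ).mp (h _ le_rfl l.succ_ne_zero ▸ this)
    refine mem_singularLevel.mpr ⟨ha, fun y hy ↦ ?_⟩
    rw [← lie_skew, neg_eq_zero]
    have hl : ((l + 1 : ℕ) : ℤ) + -1 = l := by lia
    refine ih (fun k hk ↦ h k (by lia)) (hF.lie_mem_of_eq ha hy hl) fun b hb ↦ ?_
    rw [← hl, gradedForm_lie_apply hF isLocalForm_levelZeroForm (k := -l) (by lia) ha hy hb]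
    exact h₀ _ (hF.lie_mem_of_eq hy hb (by lia))

theorem hasDualBases_of_singularLevel_eq_bot {l : ℕ}
    (h : ∀ k : ℕ, k ≤ l → k ≠ 0 → singularLevel k = ⊥) : HasDualBases l := by
  rcases eq_or_ne l 0 with rfl | hl
  · exact ⟨4, levelZeroBasis, levelZeroDual, by simpa using isDualPair_levelZero⟩
  refine exists_isDualPair (fun a ha h₀ ↦ eq_zero_of_gradedForm_eq_zero h ha h₀) fun b hb h₀ ↦ ?_
  have hω := chevalleyInvolution_mem hb
  rw [neg_neg] at hω
  rw [← chevalleyInvolution_involutive b, eq_zero_of_gradedForm_eq_zero h hω fun c hc ↦ ?_,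
    map_zero]
  have hc' := chevalleyInvolution_mem hc
  rw [neg_neg] at hc'
  have hl' : (l : ℤ) ≠ 0 := by lia
  rw [← h₀ _ hc', gradedForm_apply hl', gradedForm_apply hl', ← chevalleyInvolution_involutive c,
    ← LieHom.map_lie, chevalleyInvolution_involutive,
    levelZeroCoord_chevalleyInvolution (isGeneratedGrading_kmLevel.lie_mem_of_eq hb hc' (by lia)),
    ← map_neg, lie_skew]

theorem sum_smul_levelOne_mem_singularLevel {c : Fin 4 → ℚ}
    (hc : ∑ k, c k • levelOne (gE A2hyp) k ∈ singularLevel 1) :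
    c 0 = 0 ∧ ∑ k, (![3 * c 1, 2 * c 2, c 3, 0] : Fin 4 → ℚ) k • levelOne (gE A2hyp) k ∈
      singularLevel 1 := by
  have hf := (mem_levelZeroSpan (gH A2hyp) (gE A2hyp) (gF A2hyp)).2.2
  constructor
  · have h := (mem_singularLevel.mp hc).2 _ (kmLevel_neg_one ▸ levelOne_mem (gF A2hyp) 0)
    have hcoord (i : Fin 4) := levelZeroCoord_levelZeroBasis 0 i
    have h₁ : levelZeroCoord 0 (gH A2hyp 0) = _ := hcoord 0
    have h₂ : levelZeroCoord 0 (gE A2hyp 1) = _ := hcoord 2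
    have hτ := congrArg (levelZeroCoord 0) h
    have hlie (k : Fin 4) := isChevalleySerre_KM.opposite.lie_e_zero_levelOne k
    simp only [Fin.sum_univ_four, lie_add, lie_smul, levelOne_zero (gF A2hyp), hlie] at hτ
    simpa [h₁, h₂] using hτ
  · convert lie_mem_singularLevel (kmLevel_zero ▸ hf) hc using 1
    simp only [Fin.sum_univ_four, lie_add, lie_smul, isChevalleySerre_KM.lie_f_one_levelOne]
    simp [smul_smul, mul_comm]

theorem singularLevel_one : singularLevel 1 = ⊥ := by
  refine (Submodule.eq_bot_iff _).mpr fun a ha ↦ ?_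
  have ha₁ : a ∈ kmLevel 1 := (mem_singularLevel.mp ha).1
  rw [kmLevel_one] at ha₁
  obtain ⟨c, rfl⟩ := (Submodule.mem_span_range_iff_exists_fun ℚ).mp ha₁
  obtain ⟨h₀, ha⟩ := sum_smul_levelOne_mem_singularLevel ha
  obtain ⟨h₁, ha⟩ := sum_smul_levelOne_mem_singularLevel ha
  obtain ⟨h₂, ha⟩ := sum_smul_levelOne_mem_singularLevel ha
  obtain ⟨h₃, -⟩ := sum_smul_levelOne_mem_singularLevel ha
  simp_all [Fin.sum_univ_four]

/-! ### The enveloping algebra of the positive part -/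

theorem apply_mem_lieSpan {K L : Type*} [CommRing K] [LieRing L] [LieAlgebra K L]
    (D : LieDerivation K L L) {X : Set L} (hX : ∀ x ∈ X, D x ∈ LieSubalgebra.lieSpan K L X)
    {a : L} (ha : a ∈ LieSubalgebra.lieSpan K L X) : D a ∈ LieSubalgebra.lieSpan K L X := by
  induction ha using LieSubalgebra.lieSpan_induction with
  | mem x hx => exact hX x hx
  | zero => simp
  | add x y _ _ hx hy => rw [map_add]; exact add_mem hx hy
  | smul c x _ hx => rw [map_smul]; exact LieSubalgebra.smul_mem _ c hx
  | lie x y hx hy hDx hDy =>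
    rw [D.apply_lie_eq_add]
    exact add_mem (LieSubalgebra.lie_mem _ hx hDy) (LieSubalgebra.lie_mem _ hDx hy)

theorem lieDerivation_ad_apply {K L : Type*} [CommRing K] [LieRing L] [LieAlgebra K L] (x a : L) :
    LieDerivation.ad K L x a = ⁅x, a⁆ := by
  simp

/-- The subalgebra of the Kac–Moody algebra generated by the elements of level one. -/
def positivePart : LieSubalgebra ℚ KM :=
  LieSubalgebra.lieSpan ℚ KM (Set.range (levelOne (gE A2hyp)))

/-- The generators of the positive part. -/
def positiveGen (k : Fin 4) : positivePart :=
  ⟨levelOne (gE A2hyp) k, LieSubalgebra.subset_lieSpan ⟨k, rfl⟩⟩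

theorem kmLevel_one_le_positivePart : kmLevel 1 ≤ positivePart.toSubmodule := by
  rw [kmLevel_one, levelOneSpan_le]
  exact fun k ↦ (positiveGen k).2

theorem ad_mem_positivePart {x : KM} (hx : x ∈ kmLevel 0) :
    ∀ a ∈ positivePart, LieDerivation.ad ℚ KM x a ∈ positivePart := fun _ ha ↦ by
  refine apply_mem_lieSpan (LieDerivation.ad ℚ KM x) ?_ ha
  rintro _ ⟨k, rfl⟩
  rw [lieDerivation_ad_apply]
  exact kmLevel_one_le_positivePart <| isGeneratedGrading_kmLevel.lie_mem_of_eq hx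
    (kmLevel_one ▸ levelOne_mem _ k) (zero_add 1)

/-- The derivation of the positive part given by the bracket with an element of level zero. -/
def positiveDerivation {x : KM} (hx : x ∈ kmLevel 0) : LieDerivation ℚ positivePart positivePart :=
  restrictDerivation (LieDerivation.ad ℚ KM x) positivePart (ad_mem_positivePart hx)

theorem coe_positiveDerivation {x : KM} (hx : x ∈ kmLevel 0) (a : positivePart) :
    (positiveDerivation hx a : KM) = ⁅x, (a : KM)⁆ :=
  lieDerivation_ad_apply x (a : KM)

/-- The homomorphism from `T` to the enveloping algebra of the positive part. -/
def toEnv : T →ₐ[ℚ] UniversalEnvelopingAlgebra ℚ positivePart :=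
  FreeAlgebra.lift ℚ fun k ↦ UniversalEnvelopingAlgebra.ι ℚ (positiveGen k)

theorem toEnv_ι (k : Fin 4) : toEnv (ι ℚ k) = UniversalEnvelopingAlgebra.ι ℚ (positiveGen k) :=
  lift_ι_apply ..

theorem toEnv_freeDerivation {v : Fin 4 → T} {δ : LieDerivation ℚ positivePart positivePart}
    (h : ∀ k, toEnv (v k) = UniversalEnvelopingAlgebra.ι ℚ (δ (positiveGen k))) (t : T) :
    toEnv (freeDerivation v t) = envDerivation δ (toEnv t) := by
  suffices LinearMap.eqLocus (toEnv.toLinearMap ∘ₗ freeDerivation v)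
      (envDerivation δ ∘ₗ toEnv.toLinearMap) = ⊤ from
    LinearMap.congr_fun (LinearMap.eqLocus_eq_top.mp this) t
  refine eq_top_of_freeAlgebra_ι_mul_mem (by simp) fun k t ht ↦ ?_
  have ht : toEnv (freeDerivation v t) = envDerivation δ (toEnv t) := ht
  change toEnv (freeDerivation v (ι ℚ k * t)) = envDerivation δ (toEnv (ι ℚ k * t))
  rw [freeDerivation_mul, freeDerivation_ι, map_add, map_mul, map_mul, map_mul, ht, h,
    envDerivation_mul, toEnv_ι, envDerivation_ι]

theorem kmD_mem_kmLevel (i : Fin 2) : kmD i ∈ kmLevel 0 := by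
  fin_cases i
  exacts [isDualPair_levelZero.right_mem 0, isDualPair_levelZero.right_mem 1]

theorem toEnv_opD_zero (t : T) :
    toEnv (opD 0 t) = envDerivation (positiveDerivation (kmD_mem_kmLevel 0)) (toEnv t) := by
  refine toEnv_freeDerivation (fun k ↦ ?_) t
  rw [toEnv_ι]
  refine congrArg _ (Subtype.ext ?_)
  rw [coe_positiveDerivation]
  exact ((isChevalleySerre_KM.lie_coweight_levelOne 0 k).trans (one_smul ℚ _)).symm

theorem toEnv_opE_one (t : T) :
    toEnv (opE 1 t) = envDerivation (positiveDerivation gE_one_mem_kmLevel) (toEnv t) := by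
  refine toEnv_freeDerivation (fun k ↦ ?_) t
  have h : positiveDerivation gE_one_mem_kmLevel (positiveGen k) =
      ![positiveGen 1, (2 : ℚ) • positiveGen 2, (3 : ℚ) • positiveGen 3, 0] k := by
    refine Subtype.ext ((coe_positiveDerivation _ _).trans ?_)
    refine (isChevalleySerre_KM.lie_e_one_levelOne k).trans ?_
    fin_cases k <;> rfl
  rw [h]
  fin_cases k <;> simp [toEnv_ι, -UniversalEnvelopingAlgebra.ι_apply]

theorem toEnv_serreVector : toEnv serreVector = 0 := by
  have h : ⁅positiveGen 0, ⁅positiveGen 0, ⁅positiveGen 0, positiveGen 1⁆⁆⁆ = 0 := by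
    have h₁ := isChevalleySerre_KM.serre_e 0 1
    have h₂ : ⁅gE A2hyp 1, gE A2hyp 0⁆ = levelOne (gE A2hyp) 1 := by
      simpa using isChevalleySerre_KM.lie_e_one_levelOne 0
    rw [serreElement_neg A2hyp_of_ne _ zero_ne_one, ← lie_skew (gE A2hyp 0) (gE A2hyp 1), h₂] at h₁
    simp only [lie_neg, neg_eq_zero, ← levelOne_zero (gE A2hyp)] at h₁
    exact Subtype.ext h₁
  have h₀ := congrArg (UniversalEnvelopingAlgebra.ι ℚ) h
  simp only [LieHom.map_lie, map_zero, Ring.lie_def] at h₀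
  simpa only [serreVector, Ring.lie_def, map_sub, map_mul, toEnv_ι] using h₀

theorem toEnv_eq_zero_of_mem_serreIdeal {t : T} (ht : t ∈ serreIdeal) : toEnv t = 0 := by
  have hW : serreSpan ≤ LinearMap.ker toEnv.toLinearMap := serreSpan_le.mpr fun k ↦ by
    induction k with
    | zero => exact toEnv_serreVector
    | succ k ih =>
      replace ih : toEnv (serreString k) = 0 := ih
      change toEnv (serreString (k + 1)) = 0
      rw [serreString_succ, toEnv_opE_one, ih, map_zero]
  suffices serreIdeal ≤ LinearMap.ker toEnv.toLinearMap from this ht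
  have hker (s : T) (hs : s ∈ LinearMap.ker toEnv.toLinearMap) : toEnv s = 0 := hs
  refine Submodule.mul_le.mpr fun a ha b _ ↦ ?_
  have ha : a ∈ LinearMap.ker toEnv.toLinearMap :=
    Submodule.mul_le.mpr (fun s _ w hw ↦ by simp [hker w (hW hw)]) ha
  simp [hker a ha]

theorem lift_toEnv_toRep (s t : T) :
    UniversalEnvelopingAlgebra.lift ℚ (isStable_one.rep.comp positivePart.incl) (toEnv s)
      (toRep t) = toRep (s * t) := by
  set φ := UniversalEnvelopingAlgebra.lift ℚ (isStable_one.rep.comp positivePart.incl)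
  suffices LinearMap.eqLocus ((φ.comp toEnv).toLinearMap.flip (toRep t))
      (toRep ∘ₗ LinearMap.mulRight ℚ t) = ⊤ from
    LinearMap.congr_fun (LinearMap.eqLocus_eq_top.mp this) s
  refine eq_top_of_freeAlgebra_ι_mul_mem (by simp) fun k s hs ↦ ?_
  replace hs : φ (toEnv s) (toRep t) = toRep (s * t) := hs
  change φ (toEnv (ι ℚ k * s)) (toRep t) = toRep (ι ℚ k * s * t)
  rw [map_mul, map_mul, Module.End.mul_apply, hs, mul_assoc, ← rep_levelOne_toRep, toEnv_ι,
    UniversalEnvelopingAlgebra.lift_ι_apply]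
  rfl

theorem toEnv_eq_zero {t : T} : toEnv t = 0 ↔ t ∈ serreIdeal := by
  refine ⟨fun h ↦ ?_, toEnv_eq_zero_of_mem_serreIdeal⟩
  rw [← toRep_eq_zero, ← mul_one t, ← lift_toEnv_toRep, h]
  simp

theorem toEnv_surjective : Function.Surjective toEnv := by
  suffices ∀ a : positivePart, UniversalEnvelopingAlgebra.ι ℚ a ∈ toEnv.range by
    rw [← AlgHom.range_eq_top, ← top_le_iff, ← adjoin_range_ι, Algebra.adjoin_le_iff]
    exact Set.range_subset_iff.mpr this
  rintro ⟨a, ha⟩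
  induction ha using LieSubalgebra.lieSpan_induction with
  | mem x hx =>
    obtain ⟨k, rfl⟩ := hx
    exact ⟨ι ℚ k, toEnv_ι k⟩
  | zero =>
    refine ⟨0, (map_zero toEnv).trans ?_⟩
    exact (map_zero (UniversalEnvelopingAlgebra.ι ℚ (L := positivePart))).symm
  | add x y hx hy hx' hy' =>
    have := add_mem hx' hy'
    rwa [← map_add] at this
  | smul c x hx hx' =>
    have := Subalgebra.smul_mem _ hx' c
    rwa [← map_smul] at this
  | lie x y hx hy hx' hy' =>
    have := sub_mem (mul_mem hx' hy') (mul_mem hy' hx')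
    rwa [← Ring.lie_def, ← LieHom.map_lie] at this

/-- The elements of the Kac–Moody algebra which are Lie polynomials in the generators of the
positive part, with a representative in `level n`. -/
def lieLevel (n : ℕ) : Submodule ℚ KM :=
  let ι' : positivePart →ₗ⁅ℚ⁆ UniversalEnvelopingAlgebra ℚ positivePart :=
    UniversalEnvelopingAlgebra.ι ℚ
  (((level n).map toEnv.toLinearMap).comap (ι' : positivePart →ₗ[ℚ] _)).map
    positivePart.toSubmodule.subtype

theorem mem_lieLevel {n : ℕ} {a : KM} : a ∈ lieLevel n ↔
    ∃ b : positivePart, (b : KM) = a ∧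
      ∃ t ∈ level n, toEnv t = UniversalEnvelopingAlgebra.ι ℚ b :=
  ⟨fun ⟨b, hb, h⟩ ↦ ⟨b, h, hb⟩, fun ⟨b, h, hb⟩ ↦ ⟨b, hb, h⟩⟩

theorem lie_mem_lieLevel {m n : ℕ} {a b : KM} (ha : a ∈ lieLevel m) (hb : b ∈ lieLevel n) :
    ⁅a, b⁆ ∈ lieLevel (m + n) := by
  obtain ⟨a, rfl, s, hs, hsa⟩ := mem_lieLevel.mp ha
  obtain ⟨b, rfl, t, ht, htb⟩ := mem_lieLevel.mp hb
  refine mem_lieLevel.mpr ⟨⁅a, b⁆, rfl, ⁅s, t⁆, ?_, ?_⟩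
  · rw [Ring.lie_def]
    exact sub_mem (mul_mem_level hs ht) (add_comm n m ▸ mul_mem_level ht hs)
  · simp only [LieHom.map_lie, Ring.lie_def, map_sub, map_mul, hsa, htb]

theorem kmLevel_le_lieLevel (n : ℕ) : kmLevel (n + 1) ≤ lieLevel (n + 1) := by
  have h₁ : kmLevel 1 ≤ lieLevel 1 := by
    rw [kmLevel_one, levelOneSpan_le]
    refine fun k ↦ mem_lieLevel.mpr ⟨positiveGen k, rfl, ι ℚ k, ?_, toEnv_ι k⟩
    rw [level, pow_one]
    exact ι_mem_generatorSpan k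
  induction n with
  | zero => simpa using h₁
  | succ n ih =>
    have h := isGeneratedGrading_kmLevel.succ_le (n + 1) n.succ_ne_zero
    push_cast at h ih ⊢
    refine h.trans (bracketSpan_le.mpr fun a ha b hb ↦ ?_)
    rw [add_comm (n + 1) 1]
    exact lie_mem_lieLevel (h₁ ha) (ih hb)

/-! ### Nondegeneracy of the form up to level four -/

theorem kmLevel_le_iSup_eigenspace (n : ℕ) : kmLevel (n + 1) ≤
    ⨆ k : Fin (3 * (n + 1) + 1),
      End.eigenspace (LieAlgebra.ad ℚ KM (kmD 1) : End ℚ KM) (k : ℚ) := by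
  have h₁ (k : Fin 4) : ⁅kmD 1, levelOne (gE A2hyp) k⁆ = (k : ℚ) • levelOne (gE A2hyp) k :=
    isChevalleySerre_KM.lie_coweight_levelOne 1 k
  induction n with
  | zero =>
    rw [Nat.cast_zero, zero_add, kmLevel_one, levelOneSpan_le]
    exact fun k ↦ Submodule.mem_iSup_of_mem k (End.mem_eigenspace_iff.mpr (h₁ k))
  | succ n ih =>
    have h := isGeneratedGrading_kmLevel.succ_le (n + 1) n.succ_ne_zero
    push_cast at h ⊢
    refine h.trans (bracketSpan_le.mpr fun a ha b hb ↦ ?_)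
    set U := ⨆ k : Fin (3 * (n + 1 + 1) + 1),
      End.eigenspace (LieAlgebra.ad ℚ KM (kmD 1) : End ℚ KM) (k : ℚ)
    suffices kmLevel 1 ≤ (Submodule.compatibleMaps (kmLevel (n + 1)) U).comap
        (LieAlgebra.ad ℚ KM : KM →ₗ[ℚ] End ℚ KM) from this ha hb
    clear ha hb
    rw [kmLevel_one, levelOneSpan_le]
    intro k
    refine ih.trans (iSup_le fun j b hb ↦ Submodule.mem_iSup_of_mem ⟨j + k, by lia⟩ ?_)
    have hb : ⁅kmD 1, b⁆ = (j : ℚ) • b := End.mem_eigenspace_iff.mp hb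
    rw [End.mem_eigenspace_iff]
    change ⁅kmD 1, ⁅levelOne (gE A2hyp) k, b⁆⁆ = _ • ⁅levelOne (gE A2hyp) k, b⁆
    rw [leibniz_lie, h₁, hb, smul_lie, lie_smul, ← add_smul, add_comm]
    push_cast
    rfl

theorem eq_zero_of_lt_weight {n k : ℕ} {a : KM} (ha : a ∈ kmLevel (n + 1)) (hk : 3 * (n + 1) < k)
    (h : ⁅kmD 1, a⁆ = (k : ℚ) • a) : a = 0 :=
  eq_zero_of_mem_iSup_eigenspace (fun i ↦ by exact_mod_cast (by lia : (i : ℕ) ≠ k))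
    (kmLevel_le_iSup_eigenspace n ha) (End.mem_eigenspace_iff.mpr h)

section Lowering

variable {M : Type*} [AddCommGroup M] [Module ℚ M] {φ : KM →ₗ⁅ℚ⁆ End ℚ M}

theorem apply_eq_zero_of_mem_kmLevel_neg_one {P : Submodule ℚ M}
    (h₀ : ∀ m ∈ P, φ (gF A2hyp 0) m = 0) (h₁ : ∀ m ∈ P, φ (gF A2hyp 1) m ∈ P) {y : KM}
    (hy : y ∈ kmLevel (-1)) {m : M} (hm : m ∈ P) : φ y m = 0 := by
  have hpow (n : ℕ) : ∀ m ∈ P, φ ((LieAlgebra.ad ℚ KM (gF A2hyp 1) ^ n) (gF A2hyp 0)) m = 0 := by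
    induction n with
    | zero => simpa using h₀
    | succ n ih =>
      intro m hm
      rw [pow_succ', Module.End.mul_apply, LieAlgebra.ad_apply, LieHom.map_lie, Ring.lie_def,
        LinearMap.sub_apply, Module.End.mul_apply, Module.End.mul_apply, ih m hm, ih _ (h₁ m hm),
        map_zero, sub_zero]
  suffices kmLevel (-1) ≤ LinearMap.ker ((φ : KM →ₗ[ℚ] End ℚ M).flip m) from this hy
  rw [kmLevel_neg_one, levelOneSpan_le]
  intro k
  change φ (levelOne (gF A2hyp) k) m = 0
  rw [levelOne, map_smul, LinearMap.smul_apply, hpow k m hm, smul_zero]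

theorem apply_eq_zero_of_gF_apply_eq_zero {m : M} (hm : ∀ i, φ (gF A2hyp i) m = 0) {y : KM}
    (hy : y ∈ kmLevel (-1)) : φ y m = 0 :=
  apply_eq_zero_of_mem_kmLevel_neg_one (P := ⨅ i, LinearMap.ker (φ (gF A2hyp i)))
    (by simp +contextual) (by simp +contextual) hy (by simpa using hm)

theorem levelZeroCasimir_gE_one_apply_eq_zero {m : M} (hm : levelZeroCasimir φ m = 0) :
    levelZeroCasimir φ (φ (gE A2hyp 1) m) = 0 := by
  have := LinearMap.congr_fun (lie_levelZeroCasimir_of_mem_zero φ gE_one_mem_kmLevel) m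
  simpa [Ring.lie_def, hm] using this

end Lowering

section Principal

theorem isGeneratedModule_rep_one : IsGeneratedModule kmLevel isStable_one.rep
    fun d ↦ (isStable_one.rep (kmD 0)).eigenspace (d : ℚ) := by
  simpa using isStable_one.isGeneratedModule_rep (c := 0) (Submodule.one_le.mpr (by simp))

theorem eigenspace_one_le {Q : Submodule ℚ isStable_one.Rep} (hQ : ∀ k, toRep (ι ℚ k) ∈ Q) :
    (isStable_one.rep (kmD 0)).eigenspace 1 ≤ Q := by
  have h₀ : (isStable_one.rep (kmD 0)).eigenspace 0 ≤ isStable_one.lowest := by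
    simpa using isStable_one.eigenspace_le_lowest (c := 0) (Submodule.one_le.mpr (by simp))
  have h := isGeneratedModule_rep_one.succ_le 0
  simp only [Nat.cast_zero, zero_add, Int.cast_one, Int.cast_zero] at h
  refine h.trans (Submodule.map₂_le.mpr fun x hx m hm ↦ ?_)
  obtain ⟨s, hs, rfl⟩ := h₀ hm
  obtain ⟨c, hc⟩ := Submodule.mem_one.mp hs
  suffices kmLevel 1 ≤ Q.comap
      ((isStable_one.rep : KM →ₗ[ℚ] End ℚ isStable_one.Rep).flip (toRep (s : T))) from this hx
  rw [kmLevel_one, levelOneSpan_le]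
  intro k
  change isStable_one.rep (levelOne (gE A2hyp) k) (toRep (s : T)) ∈ Q
  rw [rep_levelOne_toRep, ← Submodule.subtype_apply, ← hc, Algebra.algebraMap_eq_smul_one,
    mul_smul_one, map_smul]
  exact Q.smul_mem c (hQ k)

theorem levelZeroCasimir_toRep_ι (k : Fin 4) :
    levelZeroCasimir isStable_one.rep (toRep (ι ℚ k)) = 0 := by
  have h₀ : levelZeroCasimir isStable_one.rep (toRep (ι ℚ 0)) = 0 := by
    rw [levelZeroCasimir_apply (a := 1) (b := 0)]
    all_goals simp [rep_kmD_toRep, rep_gF_toRep, opF_one_ι]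
  have h₁ := levelZeroCasimir_gE_one_apply_eq_zero h₀
  simp only [rep_gE_toRep, opE_one_ι, Matrix.cons_val] at h₁
  have h₂ := levelZeroCasimir_gE_one_apply_eq_zero h₁
  simp only [rep_gE_toRep, opE_one_ι, Matrix.cons_val, map_smul, smul_eq_zero_iff_right,
    Ne, OfNat.ofNat_ne_zero, not_false_eq_true] at h₂
  have h₃ := levelZeroCasimir_gE_one_apply_eq_zero h₂
  simp only [rep_gE_toRep, opE_one_ι, Matrix.cons_val, map_smul, smul_eq_zero_iff_right,
    Ne, OfNat.ofNat_ne_zero, not_false_eq_true] at h₃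
  fin_cases k
  exacts [h₀, h₁, h₂, h₃]

/-- Vectors of positive degree generate a submodule on which `casimir_smul_eq_zero` applies. -/
theorem casimir_smul_eq_zero_of_rep_one {n : ℕ} (hdual : ∀ l ≤ n, HasDualBases l)
    {m : isStable_one.Rep} (hf : ∀ i, isStable_one.rep (gF A2hyp i) m = 0) {b : ℚ}
    (ha : isStable_one.rep (kmD 0) m = (n + 1 : ℚ) • m) (hb : isStable_one.rep (kmD 1) m = b • m) :
    ((n + 1 : ℚ) ^ 2 + b ^ 2 - 3 * (n + 1) * b - (n + 1) - b) • m = 0 := by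
  have htail := isGeneratedModule_rep_one.tail isGeneratedGrading_kmLevel fun y hy m hm ↦ by
    refine apply_eq_zero_of_mem_kmLevel_neg_one
      (P := (generatorSpan ℚ (Fin 4)).map toRep) ?_ ?_ hy
      (eigenspace_one_le (fun k ↦ Submodule.mem_map_of_mem (ι_mem_generatorSpan k))
        (by simpa using hm))
    · suffices generatorSpan ℚ (Fin 4) ≤ LinearMap.ker (opF 0) by
        rintro _ ⟨t, ht, rfl⟩
        rw [rep_gF_toRep, LinearMap.mem_ker.mp (this ht), map_zero]
      exact Submodule.span_le.mpr (Set.range_subset_iff.mpr opF_zero_ι)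
    · rintro _ ⟨t, ht, rfl⟩
      rw [rep_gF_toRep]
      exact ⟨_, isStable_generatorSpan.opF_le 1 ht, rfl⟩
  refine htail.casimir_smul_eq_zero (fun m hm ↦ ?_) hdual ?_
    (fun y ↦ apply_eq_zero_of_gF_apply_eq_zero hf) (hf 1) ha hb
  · suffices (isStable_one.rep (kmD 0)).eigenspace 1 ≤
        LinearMap.ker (levelZeroCasimir isStable_one.rep) from this (by simpa using hm)
    exact eigenspace_one_le levelZeroCasimir_toRep_ι
  · rw [if_neg (by lia), End.mem_eigenspace_iff, ha]
    push_cast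
    rfl

/-- The action of the Kac–Moody algebra on the class of `1`. -/
def principalMap : KM →ₗ[ℚ] isStable_one.Rep :=
  LinearMap.flip (isStable_one.rep : KM →ₗ[ℚ] End ℚ isStable_one.Rep) (toRep 1)

theorem rep_principalMap {x : KM} (hx : isStable_one.rep x (toRep 1) = 0) (a : KM) :
    isStable_one.rep x (principalMap a) = principalMap ⁅x, a⁆ := by
  have := LinearMap.congr_fun (LieHom.map_lie isStable_one.rep x a) (toRep 1)
  rw [Ring.lie_def, LinearMap.sub_apply, Module.End.mul_apply, Module.End.mul_apply, hx, map_zero,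
    sub_zero] at this
  exact this.symm

theorem eq_zero_of_principalMap_eq_zero {n : ℕ} {a : KM} (ha : a ∈ kmLevel (n + 1))
    (h : principalMap a = 0) : a = 0 := by
  obtain ⟨b, rfl, t, -, htb⟩ := mem_lieLevel.mp (kmLevel_le_lieLevel n ha)
  have ht : toRep t = 0 := by
    have := (lift_toEnv_toRep t 1).trans (congrArg toRep (mul_one t))
    rw [htb, UniversalEnvelopingAlgebra.lift_ι_apply] at this
    exact this.symm.trans h
  rw [toRep_eq_zero, ← toEnv_eq_zero, htb] at ht
  have had : LieAlgebra.ad ℚ KM (b : KM) = 0 := by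
    have := congrArg
      (UniversalEnvelopingAlgebra.lift ℚ ((LieAlgebra.ad ℚ KM).comp positivePart.incl)) ht
    rwa [UniversalEnvelopingAlgebra.lift_ι_apply, map_zero] at this
  have hcomm : ⁅kmD 0, (b : KM)⁆ = 0 := by
    rw [← lie_skew, ← LieAlgebra.ad_apply ℚ, had, LinearMap.zero_apply, neg_zero]
  rw [kmLevel, mem_adGrading, hcomm, ← Int.cast_smul_eq_zsmul ℚ, eq_comm, smul_eq_zero] at ha
  exact ha.resolve_left (by exact_mod_cast (by lia : (n : ℤ) + 1 ≠ 0))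

theorem casimir_eq_zero {n : ℕ} (hdual : ∀ l ≤ n, HasDualBases l) {a : KM}
    (ha : a ∈ singularLevel (n + 1)) {b : ℚ} (hb : ⁅kmD 1, a⁆ = b • a) (hf : ⁅gF A2hyp 1, a⁆ = 0) :
    a = 0 ∨ (n + 1 : ℚ) ^ 2 + b ^ 2 - 3 * (n + 1) * b - (n + 1) - b = 0 := by
  obtain ⟨ha₁, ha₂⟩ := mem_singularLevel.mp ha
  have hD (i : Fin 2) := rep_principalMap (x := kmD i) (by simp [rep_kmD_toRep]) a
  have hF (i : Fin 2) := rep_principalMap (x := gF A2hyp i) (by simp [rep_gF_toRep]) a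
  have := casimir_smul_eq_zero_of_rep_one hdual (m := principalMap a) (b := b) (fun i ↦ ?_) ?_ ?_
  · exact (smul_eq_zero.mp this).symm.imp_left (eq_zero_of_principalMap_eq_zero ha₁)
  · rw [hF]
    have hf₀ : ⁅gF A2hyp 0, a⁆ = 0 :=
      ha₂ _ (kmLevel_neg_one ▸ levelOne_zero (gF A2hyp) ▸ levelOne_mem _ 0)
    fin_cases i
    exacts [(congrArg principalMap hf₀).trans (map_zero _),
      (congrArg principalMap hf).trans (map_zero _)]
  · rw [hD, mem_adGrading.mp ha₁, map_zsmul, ← Int.cast_smul_eq_zsmul ℚ]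
    push_cast
    rfl
  · rw [hD, hb, map_smul]

end Principal

theorem eq_zero_of_weight_eq {n : ℕ} {a : KM} (ha : a ∈ kmLevel (n + 1))
    (hb : ⁅kmD 1, a⁆ = ((3 * (n + 1) : ℕ) : ℚ) • a) (hf : ⁅gF A2hyp 1, a⁆ = 0) : a = 0 := by
  have he : ⁅gE A2hyp 1, a⁆ = 0 := by
    refine eq_zero_of_lt_weight (k := 3 * (n + 1) + 1)
      (isGeneratedGrading_kmLevel.lie_mem_of_eq gE_one_mem_kmLevel ha (zero_add _)) (by lia) ?_
    rw [leibniz_lie, hb, kmD, isChevalleySerre_KM.lie_coweight_e 1 1, if_pos rfl, lie_smul,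
      Nat.cast_succ, add_smul, one_smul, add_comm]
  have h₀ : ⁅kmD 0, a⁆ = (n + 1 : ℚ) • a := by
    rw [mem_adGrading.mp ha, ← Int.cast_smul_eq_zsmul ℚ]
    push_cast
    rfl
  have hh : ⁅gH A2hyp 1, a⁆ = (3 * (n + 1) : ℚ) • a := by
    rw [← sum_smul_coweight (gH A2hyp) 1, Fin.sum_univ_two, add_lie, smul_lie, smul_lie]
    change _ • ⁅kmD 0, a⁆ + _ • ⁅kmD 1, a⁆ = _
    rw [h₀, hb, smul_smul, smul_smul, ← add_smul, A2hyp_self, A2hyp_of_ne 1 0 one_ne_zero]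
    push_cast
    ring_nf
  have := leibniz_lie (gE A2hyp 1) (gF A2hyp 1) a
  rw [hf, he, lie_zero, lie_zero, add_zero, isChevalleySerre_KM.lie_e_f, hh, eq_comm,
    smul_eq_zero] at this
  exact this.resolve_left (by positivity)

/-- The diagram automorphism, which exchanges the two nodes. -/
def diagramSwap : KM →ₗ⁅ℚ⁆ KM :=
  kmLift (isChevalleySerre_KM.comp_equiv (Equiv.swap 0 1) fun i j ↦ by
    fin_cases i <;> fin_cases j <;> rfl)

theorem diagramSwap_involutive (x : KM) : diagramSwap (diagramSwap x) = x := by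
  suffices diagramSwap.comp diagramSwap = LieHom.id from LieHom.congr_fun this x
  apply kmHom_ext <;> simp [diagramSwap]

theorem diagramSwap_kmD (i : Fin 2) : diagramSwap (kmD i) = kmD (Equiv.swap 0 1 i) := by
  fin_cases i <;> simp [diagramSwap, kmD, coweight, add_comm]

/-- The swapped weight lies outside the range of weights of its level. -/
theorem eq_zero_of_weight_lt {n k : ℕ} {a : KM} (ha : a ∈ kmLevel (n + 1))
    (hk : 3 * (k + 1) < n + 1) (hb : ⁅kmD 1, a⁆ = ((k + 1 : ℕ) : ℚ) • a) : a = 0 := by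
  have h₀ : ⁅kmD 0, diagramSwap a⁆ = (k + 1 : ℤ) • diagramSwap a := by
    have := congrArg diagramSwap hb
    rw [LieHom.map_lie, diagramSwap_kmD, map_smul] at this
    simpa [← Int.cast_smul_eq_zsmul ℚ] using this
  have h₁ : ⁅kmD 1, diagramSwap a⁆ = ((n + 1 : ℕ) : ℚ) • diagramSwap a := by
    have := congrArg diagramSwap (mem_adGrading.mp ha)
    rw [LieHom.map_lie, diagramSwap_kmD, map_zsmul] at this
    simpa [← Int.cast_smul_eq_zsmul ℚ] using this
  rw [← diagramSwap_involutive a, eq_zero_of_lt_weight (mem_adGrading.mpr h₀) hk h₁, map_zero]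

theorem singularLevel_eq_bot_of_forall {n : ℕ} (hdual : ∀ l ≤ n, HasDualBases l)
    (h : ∀ k : ℕ, (n + 1) ^ 2 + k ^ 2 = 3 * (n + 1) * k + (n + 1) + k → ∀ a ∈ kmLevel (n + 1),
      ⁅kmD 1, a⁆ = (k : ℚ) • a → ⁅gF A2hyp 1, a⁆ = 0 → a = 0) : singularLevel (n + 1) = ⊥ := by
  refine eq_bot_of_lowering (D := (LieAlgebra.ad ℚ KM (kmD 1) : End ℚ KM))
    (F := (LieAlgebra.ad ℚ KM (gF A2hyp 1) : End ℚ KM))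
    (fun a ↦ lie_mem_singularLevel (kmD_mem_kmLevel 1))
    (fun a ↦ lie_mem_singularLevel gF_one_mem_kmLevel) ?_ ?_ fun k a ha hk hf ↦ ?_
  · rw [← LieHom.map_lie, kmD, isChevalleySerre_KM.lie_coweight_f 1 1, if_pos rfl, map_neg]
  · exact fun a ha ↦ (kmLevel_le_iSup_eigenspace n).trans
      (iSup_le fun k ↦ le_iSup_of_le (k : ℕ) le_rfl) (mem_singularLevel.mp ha).1
  · obtain ha₀ | hq := casimir_eq_zero hdual ha hk hf
    · exact ha₀
    · refine h k ?_ a (mem_singularLevel.mp ha).1 hk hf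
      exact_mod_cast (by linear_combination hq :
        ((n : ℚ) + 1) ^ 2 + k ^ 2 = 3 * (n + 1) * k + (n + 1) + k)

theorem singularLevel_eq_bot {n : ℕ} (hn : n < 4) : singularLevel (n + 1) = ⊥ := by
  induction n using Nat.strong_induction_on with
  | h n ih =>
    rcases n with _ | n
    · exact_mod_cast singularLevel_one
    refine singularLevel_eq_bot_of_forall (fun l hl ↦ hasDualBases_of_singularLevel_eq_bot ?_) ?_
    · intro k hk hk₀
      obtain ⟨k, rfl⟩ := Nat.exists_eq_succ_of_ne_zero hk₀
      exact_mod_cast ih k (by lia) (by lia)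
    · intro k hk a ha hb hf
      -- the quadratic has natural roots only at level `4`, namely `1` and `12`
      have hroot : n = 2 ∧ (k = 1 ∨ k = 12) := by
        have hn : n < 3 := by lia
        have hk_le : k ≤ 12 := by nlinarith
        interval_cases n <;> interval_cases k <;> simp_all
      obtain ⟨rfl, rfl | rfl⟩ := hroot
      · exact eq_zero_of_weight_lt (k := 0) ha (by lia) (by simpa using hb)
      · exact eq_zero_of_weight_eq ha (by simpa using hb) hf

theorem hasDualBases {l : ℕ} (hl : l ≤ 4) : HasDualBases l := by
  refine hasDualBases_of_singularLevel_eq_bot fun k hk hk₀ ↦ ?_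
  obtain ⟨k, rfl⟩ := Nat.exists_eq_succ_of_ne_zero hk₀
  exact_mod_cast singularLevel_eq_bot (by lia : k < 4)

/-! ### The minimal resolution up to degree eight -/

/-- The part of `serreIdeal` in degree `n`, described recursively through the decomposition
`serreIdeal = ⊤ * serreSpan ⊔ serreIdeal * level 1`. -/
def idealLevel : ℕ → Submodule ℚ T
  | n + 4 => level n * serreSpan ⊔ idealLevel (n + 3) * level 1
  | _ => ⊥

theorem mul_le_level {P Q : Submodule ℚ T} {m n : ℕ} (hP : P ≤ level m) (hQ : Q ≤ level n) :
    P * Q ≤ level (m + n) :=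
  (mul_le_mul' hP hQ).trans (pow_add (generatorSpan ℚ (Fin 4)) m n).ge

theorem idealLevel_mul_level_one_le (n : ℕ) : idealLevel n * level 1 ≤ idealLevel (n + 1) := by
  match n with
  | 0 | 1 | 2 => simp [idealLevel]
  | n + 3 => exact le_sup_right

theorem idealLevel_le_level (n : ℕ) : idealLevel n ≤ level n := by
  match n with
  | 0 | 1 | 2 | 3 => exact bot_le
  | n + 4 =>
    exact sup_le (mul_le_level le_rfl serreSpan_le_level)
      (mul_le_level (m := n + 3) (idealLevel_le_level _) le_rfl)

theorem top_mul_serreSpan_le_serreIdeal : ⊤ * serreSpan ≤ serreIdeal :=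
  le_mul_of_one_le_right' le_top

theorem serreIdeal_mul_le (P : Submodule ℚ T) : serreIdeal * P ≤ serreIdeal := by
  rw [serreIdeal, mul_assoc]
  exact mul_le_mul' le_rfl le_top

theorem iSup_idealLevel : ⨆ n, idealLevel n = serreIdeal := by
  set U := ⨆ n, idealLevel n
  have hW : ⊤ * serreSpan ≤ U := by
    rw [← iSup_generatorSpan_pow, Submodule.iSup_mul]
    exact iSup_le fun n ↦ le_iSup_of_le (n + 4) le_sup_left
  have hV : U * level 1 ≤ U := by
    rw [Submodule.iSup_mul]
    exact iSup_le fun n ↦ le_iSup_of_le (n + 1) (idealLevel_mul_level_one_le n)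
  have hlevel (n : ℕ) : U * level n ≤ U := by
    induction n with
    | zero => simp
    | succ n ih =>
      calc U * level (n + 1) = U * level n * level 1 := by
            rw [mul_assoc, level, pow_add]
        _ ≤ U := (mul_le_mul' ih le_rfl).trans hV
  refine le_antisymm (iSup_le fun n ↦ ?_) ?_
  · induction n using Nat.strong_induction_on with
    | h n ih =>
      match n with
      | 0 | 1 | 2 | 3 => exact bot_le
      | n + 4 =>
        refine sup_le ((mul_le_mul' le_top le_rfl).trans top_mul_serreSpan_le_serreIdeal) ?_
        exact (mul_le_mul' (ih (n + 3) (by lia)) le_rfl).trans (serreIdeal_mul_le _)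
  · calc serreIdeal ≤ U * ⊤ := mul_le_mul' hW le_rfl
      _ ≤ U := by
        rw [← iSup_generatorSpan_pow, Submodule.mul_iSup]
        exact iSup_le hlevel

/-- The case `P = 1` says that `idealLevel n` is the part of `serreIdeal` in degree `n`. -/
theorem serreIdeal_mul_inf_level {P : Submodule ℚ T} {k : ℕ} (hP : P ≤ level k) (n : ℕ) :
    serreIdeal * P ⊓ level (n + k) = idealLevel n * P := by
  have hle (n : ℕ) : idealLevel n * P ≤ level (n + k) :=
    mul_le_level (idealLevel_le_level n) hP
  refine le_antisymm ?_ (le_inf ?_ (hle n))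
  · rw [← iSup_idealLevel, Submodule.iSup_mul, level_eq_eigenspace]
    exact iSup_inf_eigenspace_le (c := fun n : ℕ ↦ ((n + k : ℕ) : ℚ)) (fun m n h ↦ by simpa using h)
      (fun n ↦ level_eq_eigenspace (n + k) ▸ hle n) n
  · exact mul_le_mul' (iSup_idealLevel ▸ le_iSup idealLevel n) le_rfl

theorem iSup_eigenspace_opD_one : ⨆ k : ℕ, (opD 1).eigenspace (k : ℚ) = ⊤ := by
  refine top_le_iff.mp (iSup_generatorSpan_pow.ge.trans (iSup_le fun n ↦ ?_))
  exact (level_le_iSup_eigenspace n).trans (iSup_le fun k ↦ le_iSup_of_le (k : ℕ) le_rfl)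

theorem IsStable.iSup_eigenspace_rep {P : Submodule ℚ T} (hP : IsStable P) :
    ⨆ k : ℕ, (hP.rep (kmD 1)).eigenspace (k : ℚ) = ⊤ := by
  set U := ⨆ k : ℕ, (hP.rep (kmD 1)).eigenspace (k : ℚ)
  have h : ⊤ * P ≤ (U.comap (Submodule.mkQ _)).map (⊤ * P).subtype := by
    refine (le_iSup_inf_eigenspace (hP.top_mul.opD_le 1)
      (le_top.trans_eq iSup_eigenspace_opD_one.symm)).trans (iSup_le fun k ↦ ?_)
    rintro s ⟨hs, hk⟩
    refine ⟨⟨s, hs⟩, Submodule.mem_iSup_of_mem k (End.mem_eigenspace_iff.mpr ?_), rfl⟩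
    rw [Submodule.mkQ_apply, hP.rep_kmD_mk]
    exact congrArg Submodule.Quotient.mk <| Subtype.ext (End.mem_eigenspace_iff.mp hk)
  refine Submodule.eq_top_iff'.mpr fun m ↦ ?_
  obtain ⟨s, rfl⟩ := Submodule.Quotient.mk_surjective _ m
  exact mk_mem_of_le_map h s.2

theorem serreSpan_le_eigenspace : serreSpan ≤ (opD 0).eigenspace ((4 : ℤ) : ℚ) := by
  have := serreSpan_le_level.trans (level_le_eigenspace 4)
  exact_mod_cast this

/-- The kernel of the map from `⊤ * serreSpan` modulo the Serre relations to
`T / (serreIdeal * level 1)`. -/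
def syzygies : Submodule ℚ isStable_serreSpan.Rep :=
  ((serreIdeal * level 1).submoduleOf (⊤ * serreSpan)).map (Submodule.mkQ _)

theorem mk_mem_syzygies {s : ↥(⊤ * serreSpan)} :
    (Submodule.Quotient.mk s : isStable_serreSpan.Rep) ∈ syzygies ↔
      (s : T) ∈ serreIdeal * level 1 := by
  refine ⟨?_, fun hs ↦ ⟨s, hs, rfl⟩⟩
  rintro ⟨s', hs', hss'⟩
  have h : (s' - s : T) ∈ serreIdeal * serreSpan := 
    (Submodule.Quotient.eq ((serreIdeal * serreSpan).submoduleOf (⊤ * serreSpan))).mp hss'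
  have hle : serreIdeal * serreSpan ≤ serreIdeal * level 1 := by
    have := serreSpan_le_level.trans (pow_add (generatorSpan ℚ (Fin 4)) 3 1).le
    refine (mul_le_mul' le_rfl this).trans ?_
    rw [← mul_assoc]
    exact mul_le_mul' (serreIdeal_mul_le _) le_rfl
  simpa using sub_mem (show (s' : T) ∈ serreIdeal * level 1 from hs') (hle h)

theorem isStable_serreIdeal_mul_level_one : IsStable (serreIdeal * level 1) := by
  rw [level, pow_one]
  exact isStable_generatorSpan.serreIdeal_mul

theorem rep_gF_mem_syzygies (i : Fin 2) {m : isStable_serreSpan.Rep} (hm : m ∈ syzygies) :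
    isStable_serreSpan.rep (gF A2hyp i) m ∈ syzygies := by
  obtain ⟨s, hs, rfl⟩ := hm
  rw [Submodule.mkQ_apply, IsStable.rep_gF_mk, mk_mem_syzygies]
  exact isStable_serreIdeal_mul_level_one.opF_le i hs

theorem rep_kmD_mem_syzygies (i : Fin 2) {m : isStable_serreSpan.Rep} (hm : m ∈ syzygies) :
    isStable_serreSpan.rep (kmD i) m ∈ syzygies := by
  obtain ⟨s, hs, rfl⟩ := hm
  rw [Submodule.mkQ_apply, IsStable.rep_kmD_mk, mk_mem_syzygies]
  exact isStable_serreIdeal_mul_level_one.opD_le i hs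

/-- The part of `syzygies` in degree `n + 4`. -/
def syzygyLevel (n : ℕ) : Submodule ℚ isStable_serreSpan.Rep :=
  syzygies ⊓ (isStable_serreSpan.rep (kmD 0)).eigenspace ((n + 4 : ℤ) : ℚ)

theorem levelZeroCasimir_apply_eq_zero_of_mem_lowest {m : isStable_serreSpan.Rep}
    (hm : m ∈ isStable_serreSpan.lowest) : levelZeroCasimir isStable_serreSpan.rep m = 0 := by
  have h (k : ℕ) : levelZeroCasimir isStable_serreSpan.rep
      (Submodule.Quotient.mk ⟨serreString k, le_top_mul (serreString_mem_serreSpan k)⟩) = 0 := by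
    induction k with
    | zero =>
      rw [levelZeroCasimir_apply (a := 4) (b := 1)]
      · norm_num
      · rw [IsStable.rep_kmD_mk]
        exact congrArg Submodule.Quotient.mk <| Subtype.ext (opD_serreVector 0)
      · rw [IsStable.rep_kmD_mk]
        exact congrArg Submodule.Quotient.mk <| Subtype.ext (opD_serreVector 1)
      · rw [IsStable.rep_gF_mk, Submodule.Quotient.mk_eq_zero]
        change opF 1 serreVector ∈ serreIdeal * serreSpan
        exact opF_serreVector 1 ▸ zero_mem _
    | succ k ih =>
      have := levelZeroCasimir_gE_one_apply_eq_zero ih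
      rw [IsStable.rep_gE_mk] at this
      simpa only [serreString_succ] using this
  suffices serreSpan ≤ ((LinearMap.ker (levelZeroCasimir isStable_serreSpan.rep)).comap
      (Submodule.mkQ _)).map (⊤ * serreSpan).subtype by
    obtain ⟨s, hs, rfl⟩ := hm
    exact mk_mem_of_le_map this hs
  exact serreSpan_le.mpr fun k ↦ ⟨_, h k, rfl⟩

theorem syzygyLevel_zero : syzygyLevel 0 = ⊥ := by
  refine (Submodule.eq_bot_iff _).mpr fun m ⟨hm, hm'⟩ ↦ ?_
  rw [Nat.cast_zero, zero_add] at hm'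
  obtain ⟨s, hs, rfl⟩ :=
    isStable_serreSpan.eigenspace_le_lowest serreSpan_le_eigenspace hm'
  have : (s : T) ∈ serreIdeal * level 1 ⊓ level (3 + 1) :=
    ⟨mk_mem_syzygies.mp hm, serreSpan_le_level hs⟩
  rw [serreIdeal_mul_inf_level le_rfl, show idealLevel 3 = ⊥ from rfl, Submodule.bot_mul,
    Submodule.mem_bot] at this
  rw [show s = 0 from Subtype.ext this, map_zero]

theorem rep_apply_mem_syzygyLevel {i : Fin 2} {j : ℤ} {n n' : ℕ} (hi : gF A2hyp i ∈ kmLevel j)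
    (hj : j + n = n') {m : isStable_serreSpan.Rep} (hm : m ∈ syzygyLevel n) :
    isStable_serreSpan.rep (gF A2hyp i) m ∈ syzygyLevel n' :=
  ⟨rep_gF_mem_syzygies i hm.1, by
    have := apply_mem_eigenspace (k := n' + 4) (i := j) (j := n + 4) (by lia) hi hm.2
    exact_mod_cast this⟩

theorem sq_add_sq_ne {N : ℕ} (hN : 5 ≤ N) (hN' : N ≤ 8) (k : ℕ) :
    N ^ 2 + k ^ 2 ≠ 3 * N * k + N + k := by
  intro h
  have hk : k ≤ 24 := by nlinarith
  interval_cases N <;> interval_cases k <;> simp at h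

theorem syzygyLevel_eq_bot {n : ℕ} (hn : n ≤ 4) : syzygyLevel n = ⊥ := by
  induction n with
  | zero => exact syzygyLevel_zero
  | succ n ih =>
    have hker (y : KM) (hy : y ∈ kmLevel (-1)) : ∀ m ∈ syzygyLevel (n + 1),
        isStable_serreSpan.rep y m = 0 := fun m hm ↦ by
      refine apply_eq_zero_of_mem_kmLevel_neg_one (fun m hm ↦ ?_)
        (fun m ↦ rep_apply_mem_syzygyLevel gF_one_mem_kmLevel (by lia)) hy hm
      rw [← Submodule.mem_bot ℚ, ← ih (by lia)]
      refine rep_apply_mem_syzygyLevel (j := -1) ?_ (by lia) hm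
      exact kmLevel_neg_one ▸ levelOne_zero (gF A2hyp) ▸ levelOne_mem _ 0
    refine eq_bot_of_lowering (D := isStable_serreSpan.rep (kmD 1))
      (F := isStable_serreSpan.rep (gF A2hyp 1))
      (fun m hm ↦ ⟨rep_kmD_mem_syzygies 1 hm.1, ?_⟩)
      (fun m ↦ rep_apply_mem_syzygyLevel gF_one_mem_kmLevel (by lia)) ?_
      (le_top.trans_eq isStable_serreSpan.iSup_eigenspace_rep.symm) fun k m hm hk hf ↦ ?_
    · exact apply_mem_eigenspace (zero_add _) (kmD_mem_kmLevel 1) hm.2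
    · rw [← LieHom.map_lie, kmD, isChevalleySerre_KM.lie_coweight_f 1 1, if_pos rfl, map_neg]
    · have h := (isStable_serreSpan.isGeneratedModule_rep serreSpan_le_eigenspace)
        |>.casimir_smul_eq_zero (n := n + 1) (m := m) (a := n + 5) (b := k) (fun m hm ↦ ?_)
        (fun l hl ↦ hasDualBases (hl.trans hn)) ?_ (fun y hy ↦ hker y hy m hm) hf ?_ hk
      · refine (smul_eq_zero.mp h).resolve_left fun hq ↦ ?_
        refine sq_add_sq_ne (N := n + 5) (by lia) (by lia) k ?_
        exact_mod_cast (by linear_combination hq :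
          ((n : ℚ) + 5) ^ 2 + k ^ 2 = 3 * (n + 5) * k + (n + 5) + k)
      · refine levelZeroCasimir_apply_eq_zero_of_mem_lowest ?_
        exact isStable_serreSpan.eigenspace_le_lowest serreSpan_le_eigenspace (by simpa using hm)
      · exact hm.2
      · rw [End.mem_eigenspace_iff.mp hm.2]
        push_cast
        ring_nf

theorem idealLevel_mul_level_le (m n : ℕ) : idealLevel m * level n ≤ idealLevel (m + n) := by
  induction n with
  | zero => simp
  | succ n ih =>
    rw [level, pow_succ, ← mul_assoc, ← pow_one (generatorSpan ℚ (Fin 4))]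
    exact (mul_le_mul' (by simpa using ih) le_rfl).trans (idealLevel_mul_level_one_le (m + n))

/-- With `U = T / serreIdeal`, this says that `U ⊗ serreSpan → U ⊗ level 1` is injective up to
degree `8`. -/
theorem level_mul_serreSpan_inf {n : ℕ} (hn : n ≤ 4) :
    level n * serreSpan ⊓ idealLevel (n + 3) * level 1 = idealLevel n * serreSpan := by
  refine le_antisymm ?_ (le_inf (mul_le_mul' (idealLevel_le_level n) le_rfl) ?_)
  · rintro t ⟨ht, ht'⟩
    have hlevel : t ∈ level (n + 4) := mul_le_level le_rfl serreSpan_le_level ht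
    rw [← serreIdeal_mul_inf_level serreSpan_le_level]
    refine ⟨?_, hlevel⟩
    have hle : level n * serreSpan ≤ ⊤ * serreSpan := mul_le_mul' le_top le_rfl
    have hle' : idealLevel (n + 3) * level 1 ≤ serreIdeal * level 1 :=
      mul_le_mul' (iSup_idealLevel ▸ le_iSup idealLevel (n + 3)) le_rfl
    let s : ↥(⊤ * serreSpan) := ⟨t, hle ht⟩
    have hs : (Submodule.Quotient.mk s : isStable_serreSpan.Rep) ∈ syzygyLevel n := by
      refine ⟨mk_mem_syzygies.mpr (hle' ht'), End.mem_eigenspace_iff.mpr ?_⟩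
      rw [IsStable.rep_kmD_mk]
      refine congrArg Submodule.Quotient.mk <| Subtype.ext ?_
      simpa using End.mem_eigenspace_iff.mp (level_le_eigenspace _ hlevel)
    rw [syzygyLevel_eq_bot hn, Submodule.mem_bot, Submodule.Quotient.mk_eq_zero] at hs
    exact hs
  · calc idealLevel n * serreSpan ≤ idealLevel n * (level 3 * level 1) :=
          mul_le_mul' le_rfl (serreSpan_le_level.trans (pow_add (generatorSpan ℚ (Fin 4)) 3 1).le)
      _ ≤ idealLevel (n + 3) * level 1 := by
        rw [← mul_assoc]
        exact mul_le_mul' (idealLevel_mul_level_le n 3) le_rfl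

theorem finrank_idealLevel_add_four {n : ℕ} (hn : n ≤ 4) :
    finrank ℚ (idealLevel (n + 4)) + 11 * finrank ℚ (idealLevel n) =
      11 * 4 ^ n + 4 * finrank ℚ (idealLevel (n + 3)) := by
  have := Submodule.finiteDimensional_of_le (mul_le_level (m := n) le_rfl serreSpan_le_level)
  have := Submodule.finiteDimensional_of_le
    (mul_le_level (m := n + 3) (n := 1) (idealLevel_le_level _) le_rfl)
  have h := Submodule.finrank_sup_add_finrank_inf_eq (level n * serreSpan)
    (idealLevel (n + 3) * level 1)
  rw [level_mul_serreSpan_inf hn, finrank_mul _ serreSpan_le_level,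
    finrank_mul _ serreSpan_le_level, finrank_mul _ le_rfl, finrank_serreSpan,
    finrank_generatorSpan_pow, finrank_generatorSpan_pow, Fintype.card_fin] at h
  rw [idealLevel]
  lia

/-! ### The dimensions of the levels -/

/-- The derivation of the Kac–Moody algebra which measures the level. -/
abbrev levelDerivation : LieDerivation ℚ KM KM := LieDerivation.ad ℚ KM (kmD 0)

theorem eigenspace_levelDerivation (n : ℕ) :
    End.eigenspace levelDerivation.toLinearMap (n : ℚ) = kmLevel n := by
  ext x
  rw [End.mem_eigenspace_iff, kmLevel, mem_adGrading, natCast_zsmul, Nat.cast_smul_eq_nsmul]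
  exact (lieDerivation_ad_apply (K := ℚ) (kmD 0) x).congr_left

instance finiteDimensional_eigenspace_levelDerivation (n : ℕ) :
    FiniteDimensional ℚ (End.eigenspace levelDerivation.toLinearMap (n : ℚ)) :=
  eigenspace_levelDerivation n ▸ finiteDimensional_kmLevel n

theorem toSubmodule_positivePart :
    positivePart.toSubmodule = eigenspacesAbove levelDerivation.toLinearMap 0 := by
  refine le_antisymm ?_ (iSup₂_le fun n hn ↦ ?_)
  · obtain ⟨K, hK⟩ := exists_lieSubalgebra_of_le_eigenspacesAbove (D := levelDerivation) (N := 0)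
      (eigenspacesAbove_eq_sup levelDerivation.toLinearMap 0 ▸ le_sup_left) le_rfl
    suffices positivePart ≤ K from hK ▸ this
    refine LieSubalgebra.lieSpan_le.mpr (Set.range_subset_iff.mpr fun k ↦ ?_)
    suffices levelOne (gE A2hyp) k ∈ K.toSubmodule from this
    rw [hK]
    refine eigenspace_le_eigenspacesAbove _ one_pos ?_
    rw [eigenspace_levelDerivation]
    exact kmLevel_one ▸ levelOne_mem (gE A2hyp) k
  · obtain ⟨n, rfl⟩ := Nat.exists_eq_succ_of_ne_zero hn.ne'
    rw [eigenspace_levelDerivation]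
    intro a ha
    obtain ⟨b, rfl, -⟩ := mem_lieLevel.mp (kmLevel_le_lieLevel n (by exact_mod_cast ha))
    exact b.2

/-- The degree operator of the enveloping algebra of the positive part. -/
abbrev envDegree : End ℚ (UniversalEnvelopingAlgebra ℚ positivePart) :=
  envDerivation (positiveDerivation (kmD_mem_kmLevel 0))

theorem map_toEnv_level (n : ℕ) :
    (level n).map toEnv.toLinearMap = envDegree.eigenspace (n : ℚ) := by
  have hle (n : ℕ) : (level n).map toEnv.toLinearMap ≤ envDegree.eigenspace (n : ℚ) := by
    rintro _ ⟨t, ht, rfl⟩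
    refine End.mem_eigenspace_iff.mpr ((toEnv_opD_zero t).symm.trans ?_)
    rw [End.mem_eigenspace_iff.mp (level_le_eigenspace n ht)]
    exact map_smul toEnv _ _
  have htop : ⨆ n, (level n).map toEnv.toLinearMap = ⊤ := by
    rw [← Submodule.map_iSup, iSup_generatorSpan_pow, Submodule.map_top]
    exact LinearMap.range_eq_top.mpr toEnv_surjective
  refine (hle n).antisymm ?_
  have := iSup_inf_eigenspace_le Nat.cast_injective hle n
  rwa [htop, top_inf_eq] at this

theorem ker_toEnv : LinearMap.ker toEnv.toLinearMap = serreIdeal :=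
  Submodule.ext fun _ ↦ toEnv_eq_zero

theorem finrank_eigenspace_envDegree (n : ℕ) :
    finrank ℚ (envDegree.eigenspace (n : ℚ)) + finrank ℚ (idealLevel n) = 4 ^ n := by
  have hinf : level n ⊓ serreIdeal = idealLevel n := by
    simpa [inf_comm] using serreIdeal_mul_inf_level (P := 1) (k := 0) (pow_zero _).ge n
  have h := (toEnv.toLinearMap.domRestrict (level n)).finrank_range_add_finrank_ker
  rw [LinearMap.range_domRestrict, map_toEnv_level, LinearMap.ker_domRestrict, ker_toEnv,
    finrank_generatorSpan_pow, Fintype.card_fin] at h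
  rw [← h, ← hinf, ← Submodule.map_comap_subtype, Submodule.finrank_map_subtype_eq]

theorem hasFiniteEnvPieces_positivePart : HasFiniteEnvPieces levelDerivation positivePart
    (ad_mem_positivePart (kmD_mem_kmLevel 0)) := fun n ↦ by
  change FiniteDimensional ℚ (envDegree.eigenspace (n : ℚ))
  rw [← map_toEnv_level]
  infer_instance

open PowerSeries

/-- The Hilbert series of the enveloping algebra of the positive part. -/
abbrev positiveHilbertSeries : ℤ⟦X⟧ := subalgebraHilbertSeries levelDerivation positivePart
  (ad_mem_positivePart (kmD_mem_kmLevel 0))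

theorem coeff_positiveHilbertSeries (n : ℕ) :
    coeff n positiveHilbertSeries = 4 ^ n - finrank ℚ (idealLevel n) := by
  have h : coeff n positiveHilbertSeries = finrank ℚ (envDegree.eigenspace (n : ℚ)) := by
    rw [positiveHilbertSeries, subalgebraHilbertSeries, envHilbertSeries, coeff_mk]
    rfl
  refine eq_sub_of_add_eq ?_
  rw [h]
  exact_mod_cast finrank_eigenspace_envDegree n

theorem coeff_positiveHilbertSeries_add_four {n : ℕ} (hn : n ≤ 4) :
    coeff (n + 4) positiveHilbertSeries - 4 * coeff (n + 3) positiveHilbertSeries +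
      11 * coeff n positiveHilbertSeries = 0 := by
  have := finrank_idealLevel_add_four hn
  simp only [coeff_positiveHilbertSeries]
  lia

theorem coeff_positiveHilbertSeries_of_lt_four {n : ℕ} (hn : n < 4) :
    coeff n positiveHilbertSeries = 4 ^ n := by
  have : idealLevel n = ⊥ := by interval_cases n <;> rfl
  rw [coeff_positiveHilbertSeries, this, finrank_bot, Nat.cast_zero, sub_zero]

theorem X_pow_dvd_positiveHilbertSeries_mul_sub_one :
    X ^ 9 ∣ positiveHilbertSeries * (1 - 4 • X + 11 • X ^ 4) - 1 := by
  set H := positiveHilbertSeries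
  have hmul : H * (1 - 4 • X + 11 • X ^ 4) - 1 = H - 4 • (H * X) + 11 • (H * X ^ 4) - 1 := by ring
  refine X_pow_dvd_iff.mpr fun n hn ↦ ?_
  simp only [hmul, map_sub, map_add, map_nsmul, coeff_mul_X_pow', coeff_one]
  match n with
  | 0 => simp [coeff_positiveHilbertSeries_of_lt_four, H]
  | 1 | 2 | 3 => simp [coeff_succ_mul_X, coeff_positiveHilbertSeries_of_lt_four, H]
  | n + 4 =>
    simpa [coeff_succ_mul_X] using coeff_positiveHilbertSeries_add_four (by lia : n ≤ 4)

theorem X_pow_dvd_positiveHilbertSeries_mul_prod_sub_one (N : ℕ) :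
    X ^ (N + 1) ∣ positiveHilbertSeries * ∏ l ∈ Finset.range N, (1 - X ^ (l + 1)) ^
      finrank ℚ (End.eigenspace levelDerivation.toLinearMap ((l + 1 : ℕ) : ℚ)) - 1 := by
  refine X_pow_dvd_iff.mpr fun n hn ↦ ?_
  rw [map_sub, coeff_one, sub_eq_zero]
  exact coeff_subalgebraHilbertSeries_mul_prod toSubmodule_positivePart
    hasFiniteEnvPieces_positivePart (Nat.lt_succ_iff.mp hn)

theorem X_pow_dvd_prod_sub :
    X ^ 9 ∣ ∏ l ∈ Finset.range 8, (1 - X ^ (l + 1) : ℤ⟦X⟧) ^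
      finrank ℚ (End.eigenspace levelDerivation.toLinearMap ((l + 1 : ℕ) : ℚ)) -
        (1 - 4 • X + 11 • X ^ 4) := by
  set P := ∏ l ∈ Finset.range 8, (1 - X ^ (l + 1) : ℤ⟦X⟧) ^
      finrank ℚ (End.eigenspace levelDerivation.toLinearMap ((l + 1 : ℕ) : ℚ))
  have hsub : P - (1 - 4 • X + 11 • X ^ 4) =
      (1 - 4 • X + 11 • X ^ 4) * (positiveHilbertSeries * P - 1) -
        P * (positiveHilbertSeries * (1 - 4 • X + 11 • X ^ 4) - 1) := by ring
  rw [hsub]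
  exact dvd_sub ((X_pow_dvd_positiveHilbertSeries_mul_prod_sub_one 8).mul_left _)
    (X_pow_dvd_positiveHilbertSeries_mul_sub_one.mul_left _)

theorem eq_levelDerivation {D : LieDerivation ℚ KM KM}
    (hDe : ∀ i, D (gE A2hyp i) = if i = 0 then gE A2hyp i else 0)
    (hDf : ∀ i, D (gF A2hyp i) = if i = 0 then -gF A2hyp i else 0)
    (hDh : ∀ i, D (gH A2hyp i) = 0) : D = levelDerivation := by
  refine LieDerivation.ext_of_lieSpan_eq_top _ (lieSpan_range_KMgen A2hyp) ?_
  rintro _ ⟨i | i | i, rfl⟩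
  · exact (hDh i).trans ((lieDerivation_ad_apply _ _).trans
      (isChevalleySerre_KM.lie_coweight_h 0 i)).symm
  · refine (hDe i).trans ((lieDerivation_ad_apply _ _).trans ?_).symm
    exact (isChevalleySerre_KM.lie_coweight_e 0 i).trans (by simp only [eq_comm])
  · refine (hDf i).trans ((lieDerivation_ad_apply _ _).trans ?_).symm
    exact (isChevalleySerre_KM.lie_coweight_f 0 i).trans (by simp only [eq_comm])

end HyperbolicKM

/-- **Dimensions of the graded levels of the simplest rank-2 hyperbolic Kac–Moody algebra
with respect to its standard `sl₂` subalgebra.** Here `D` is the level derivation with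
respect to node 1 (index `0`), and the eigenspaces of `D` with eigenvalues `1,…,8` have
dimensions `4, 6, 20, 49, 160, 494, 1636, 5410`. -/
theorem rank2_level_dims
    (D : LieDerivation ℚ (Matrix.ToLieAlgebra ℚ A2hyp) (Matrix.ToLieAlgebra ℚ A2hyp))
    (hDe : ∀ i, D (gE A2hyp i) = if i = 0 then gE A2hyp i else 0)
    (hDf : ∀ i, D (gF A2hyp i) = if i = 0 then -gF A2hyp i else 0)
    (hDh : ∀ i, D (gH A2hyp i) = 0) :
    Module.finrank ℚ (Module.End.eigenspace D.toLinearMap (1 : ℚ)) = 4 ∧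
    Module.finrank ℚ (Module.End.eigenspace D.toLinearMap (2 : ℚ)) = 6 ∧
    Module.finrank ℚ (Module.End.eigenspace D.toLinearMap (3 : ℚ)) = 20 ∧
    Module.finrank ℚ (Module.End.eigenspace D.toLinearMap (4 : ℚ)) = 49 ∧
    Module.finrank ℚ (Module.End.eigenspace D.toLinearMap (5 : ℚ)) = 160 ∧
    Module.finrank ℚ (Module.End.eigenspace D.toLinearMap (6 : ℚ)) = 494 ∧
    Module.finrank ℚ (Module.End.eigenspace D.toLinearMap (7 : ℚ)) = 1636 ∧
    Module.finrank ℚ (Module.End.eigenspace D.toLinearMap (8 : ℚ)) = 5410 := by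
  rw [HyperbolicKM.eq_levelDerivation hDe hDf hDh]
  exact_mod_cast HyperbolicKM.eq_of_prod_one_sub_X_pow (d := fun l ↦ Module.finrank ℚ
      (Module.End.eigenspace HyperbolicKM.levelDerivation.toLinearMap (l : ℚ)))
    HyperbolicKM.X_pow_dvd_prod_sub
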